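/- arXiv:1609.00290 — 4 statements merged into one kernel-verified Lean document; each statement's English description precedes it below -/
import Mathlib

section
/- Fix integers k1 ≥ 2, k2 ≥ 2 and set k := min{k1,k2}. Fix reals ε > 0 and C1 > max{k1,k2} + ε. Let C_{k1,k2}(N,M) denote the number of (k1,k2)-dicores on vertex set {1,…,N} with M edges that are k-strongly connected, and let D_{k1,k2}(N,M) denote the total number of (k1,k2)-dicores on {1,…,N} with M edges. Then there is a constant C > 0 such that for all positive integers N, M with (max{k1,k2}+ε)·N ≤ M ≤ C1·N one has |C_{k1,k2}(N,M)/D_{k1,k2}(N,M) − 1| ≤ C · N^{-(k-1)}. -/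
/-- A `(k1,k2)`-dicore on vertex set `Fin N` with `M` edges: a simple digraph
(edges are ordered pairs of distinct vertices; a `Finset` has no repeated edges)
with exactly `M` edges, minimum in-degree `≥ k1` and minimum out-degree `≥ k2`. -/
def IsDicore (k1 k2 N M : ℕ) (E : Finset (Fin N × Fin N)) : Prop :=
  E.card = M ∧ (∀ e ∈ E, e.1 ≠ e.2) ∧
    ∀ v : Fin N,
      k1 ≤ (E.filter (fun e => e.2 = v)).card ∧
      k2 ≤ (E.filter (fun e => e.1 = v)).card

/-- A digraph on `N` vertices is `k`-strongly connected if `N > k` and, for every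
set `T` of fewer than `k` vertices, every ordered pair of remaining vertices is
joined by a directed path avoiding `T`. -/
def KStronglyConnected {N : ℕ} (k : ℕ) (E : Finset (Fin N × Fin N)) : Prop :=
  k < N ∧ ∀ T : Finset (Fin N), T.card < k →
    ∀ u v : Fin N, u ∉ T → v ∉ T →
      Relation.ReflTransGen (fun a b => a ∉ T ∧ b ∉ T ∧ (a, b) ∈ E) u v

namespace Dicore

open Finset

variable {N : ℕ}

/-- The out-degree of `v` in the digraph with edge set `E`. -/
def outdeg (E : Finset (Fin N × Fin N)) (v : Fin N) : ℕ := (E.filter (fun e => e.1 = v)).card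

/-- The in-degree of `v` in the digraph with edge set `E`. -/
def indeg (E : Finset (Fin N × Fin N)) (v : Fin N) : ℕ := (E.filter (fun e => e.2 = v)).card

lemma isDicore_iff {k1 k2 M : ℕ} {E : Finset (Fin N × Fin N)} :
    IsDicore k1 k2 N M E ↔ E.card = M ∧ (∀ e ∈ E, e.1 ≠ e.2) ∧
      ∀ v, k1 ≤ indeg E v ∧ k2 ≤ outdeg E v := Iff.rfl

/-- Double counting of moves `x ↦ f x g`, with `g` ranging over `out x`, that can be undone
once `g` is known. -/
lemma card_mul_le_card_mul_of_moves {α β γ : Type*} (X : Finset α) (Y : Finset β)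
    (out : α → Finset γ) (f : α → γ → β) (back : β → Finset γ) (inv : β → γ → α) (a b : ℝ)
    (ha : ∀ x ∈ X, a ≤ ((out x).card : ℝ)) (hb : ∀ y ∈ Y, ((back y).card : ℝ) ≤ b)
    (hf : ∀ x ∈ X, ∀ g ∈ out x, f x g ∈ Y ∧ g ∈ back (f x g) ∧ inv (f x g) g = x) :
    a * X.card ≤ b * Y.card := by
  have h1 : (X.sigma out).card ≤ (Y.sigma back).card := by
    refine card_le_card_of_injOn
      (fun p : (_ : α) × γ => (⟨f p.1 p.2, p.2⟩ : (_ : β) × γ)) ?_ ?_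
    · rintro ⟨x, g⟩ hp
      simp only [coe_sigma, Set.mem_sigma_iff, mem_coe] at hp ⊢
      exact ⟨(hf x hp.1 g hp.2).1, (hf x hp.1 g hp.2).2.1⟩
    · rintro ⟨x, g⟩ hp ⟨x', g'⟩ hp' h
      simp only [coe_sigma, Set.mem_sigma_iff, mem_coe] at hp hp'
      obtain ⟨h1, h2⟩ : f x g = f x' g' ∧ g = g' := by simpa using h
      subst h2
      have := (hf x hp.1 g hp.2).2.2
      rw [h1, (hf x' hp'.1 g hp'.2).2.2] at this
      simp [this]
  rw [card_sigma, card_sigma] at h1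
  have h2 : a * X.card ≤ ((∑ x ∈ X, (out x).card : ℕ) : ℝ) := by
    push_cast
    rw [mul_comm, ← nsmul_eq_mul]
    exact card_nsmul_le_sum _ _ _ ha
  have h3 : ((∑ y ∈ Y, (back y).card : ℕ) : ℝ) ≤ b * Y.card := by
    push_cast
    rw [mul_comm, ← nsmul_eq_mul]
    exact sum_le_card_nsmul _ _ _ hb
  exact h2.trans (le_trans (by exact_mod_cast h1) h3)

/-! ### Degrees under local changes -/

lemma outdeg_insert {E : Finset (Fin N × Fin N)} {e : Fin N × Fin N} (he : e ∉ E) (v : Fin N) :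
    outdeg (insert e E) v = outdeg E v + if e.1 = v then 1 else 0 := by
  unfold outdeg
  rw [filter_insert]
  split_ifs <;> simp [he]

lemma indeg_insert {E : Finset (Fin N × Fin N)} {e : Fin N × Fin N} (he : e ∉ E) (v : Fin N) :
    indeg (insert e E) v = indeg E v + if e.2 = v then 1 else 0 := by
  unfold indeg
  rw [filter_insert]
  split_ifs <;> simp [he]

lemma outdeg_erase {E : Finset (Fin N × Fin N)} {e : Fin N × Fin N} (he : e ∈ E) (v : Fin N) :
    outdeg (E.erase e) v + (if e.1 = v then 1 else 0) = outdeg E v := by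
  rw [← outdeg_insert (notMem_erase e E), insert_erase he]

lemma indeg_erase {E : Finset (Fin N × Fin N)} {e : Fin N × Fin N} (he : e ∈ E) (v : Fin N) :
    indeg (E.erase e) v + (if e.2 = v then 1 else 0) = indeg E v := by
  rw [← indeg_insert (notMem_erase e E), insert_erase he]

lemma outdeg_mono {E E' : Finset (Fin N × Fin N)} (h : E ⊆ E') (v : Fin N) :
    outdeg E v ≤ outdeg E' v := card_le_card (filter_subset_filter _ h)

lemma indeg_mono {E E' : Finset (Fin N × Fin N)} (h : E ⊆ E') (v : Fin N) :
    indeg E v ≤ indeg E' v := card_le_card (filter_subset_filter _ h)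

lemma card_filter_mk_mem_left (E : Finset (Fin N × Fin N)) (a : Fin N) :
    (univ.filter (fun d => (a, d) ∈ E)).card = outdeg E a := by
  unfold outdeg
  refine card_bij (fun d _ => (a, d)) ?_ ?_ ?_
  · intro d hd; simpa using hd
  · intro d _ d' _ h; simpa using h
  · rintro ⟨x, y⟩ h
    simp only [mem_filter] at h
    obtain ⟨h1, rfl⟩ := h
    exact ⟨y, by simpa using h1, rfl⟩

lemma card_filter_mk_mem_right (E : Finset (Fin N × Fin N)) (b : Fin N) :
    (univ.filter (fun c => (c, b) ∈ E)).card = indeg E b := by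
  unfold indeg
  refine card_bij (fun c _ => (c, b)) ?_ ?_ ?_
  · intro d hd; simpa using hd
  · intro d _ d' _ h; simpa using h
  · rintro ⟨x, y⟩ h
    simp only [mem_filter] at h
    obtain ⟨h1, rfl⟩ := h
    exact ⟨x, by simpa using h1, rfl⟩

/-- Possible new heads for an edge out of `a`. -/
lemma card_newHeads (E : Finset (Fin N × Fin N)) (a : Fin N) :
    N ≤ (univ.filter (fun d => d ≠ a ∧ (a, d) ∉ E)).card + 1 + outdeg E a := by
  have h : (univ : Finset (Fin N)) ⊆ univ.filter (fun d => d ≠ a ∧ (a, d) ∉ E) ∪ {a} ∪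
      univ.filter (fun d => (a, d) ∈ E) := by
    intro d _
    simp only [mem_union, mem_filter, mem_univ, true_and, mem_singleton]
    tauto
  have h2 := card_le_card h
  rw [card_univ, Fintype.card_fin] at h2
  have h3 := card_union_le (univ.filter (fun d => d ≠ a ∧ (a, d) ∉ E) ∪ {a})
    (univ.filter (fun d => (a, d) ∈ E))
  have h4 := card_union_le (univ.filter (fun d => d ≠ a ∧ (a, d) ∉ E)) {a}
  rw [card_singleton] at h4
  rw [card_filter_mk_mem_left] at h3
  omega

/-- Possible new tails for an edge into `b`. -/
lemma card_newTails (E : Finset (Fin N × Fin N)) (b : Fin N) :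
    N ≤ (univ.filter (fun c => c ≠ b ∧ (c, b) ∉ E)).card + 1 + indeg E b := by
  have h : (univ : Finset (Fin N)) ⊆ univ.filter (fun c => c ≠ b ∧ (c, b) ∉ E) ∪ {b} ∪
      univ.filter (fun c => (c, b) ∈ E) := by
    intro d _
    simp only [mem_union, mem_filter, mem_univ, true_and, mem_singleton]
    tauto
  have h2 := card_le_card h
  rw [card_univ, Fintype.card_fin] at h2
  have h3 := card_union_le (univ.filter (fun c => c ≠ b ∧ (c, b) ∉ E) ∪ {b})
    (univ.filter (fun c => (c, b) ∈ E))
  have h4 := card_union_le (univ.filter (fun c => c ≠ b ∧ (c, b) ∉ E)) {b}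
  rw [card_singleton] at h4
  rw [card_filter_mk_mem_right] at h3
  omega

/-- The pairs of distinct vertices that are not edges of `E`. -/
def nonEdges (E : Finset (Fin N × Fin N)) : Finset (Fin N × Fin N) :=
  univ.filter (fun e => e.1 ≠ e.2 ∧ e ∉ E)

lemma mem_nonEdges {E : Finset (Fin N × Fin N)} {e : Fin N × Fin N} :
    e ∈ nonEdges E ↔ e.1 ≠ e.2 ∧ e ∉ E := by simp [nonEdges]

lemma card_nonEdges {E : Finset (Fin N × Fin N)} (hE : ∀ e ∈ E, e.1 ≠ e.2) :
    (nonEdges E).card + E.card + N = N * N := by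
  have h : (univ : Finset (Fin N × Fin N)) = (nonEdges E ∪ E) ∪ univ.filter (fun e => e.1 = e.2) := by
    ext e
    simp only [mem_union, mem_filter, mem_univ, true_and, mem_nonEdges]
    tauto
  have hd : (univ.filter (fun e : Fin N × Fin N => e.1 = e.2)).card = N := by
    have : univ.filter (fun e : Fin N × Fin N => e.1 = e.2) = univ.image (fun v : Fin N => (v, v)) := by
      ext ⟨x, y⟩
      simp [eq_comm]
    rw [this, card_image_of_injective _ (fun a b h => by simpa using h), card_univ, Fintype.card_fin]
  have h2 := congrArg card h
  rw [card_union_of_disjoint, card_union_of_disjoint, hd, card_univ] at h2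
  · simpa using h2.symm
  · rw [disjoint_left]; intro e he he'; exact (mem_nonEdges.1 he).2 he'
  · rw [disjoint_left]
    intro e he he'
    simp only [mem_union, mem_filter, mem_univ, true_and, mem_nonEdges] at he he'
    rcases he with he | he
    · exact he.1 he'
    · exact hE e he he'

/-! ### Dicores and edges that may be removed -/

open scoped Classical in
/-- The finset of all `(k1,k2)`-dicores on `Fin N` with `M` edges. -/
noncomputable def dicores (k1 k2 N M : ℕ) : Finset (Finset (Fin N × Fin N)) :=
  univ.filter (IsDicore k1 k2 N M)

/-- The dicores that contain all edges of `F`. -/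
noncomputable def dicoresOver (k1 k2 M : ℕ) (F : Finset (Fin N × Fin N)) :
    Finset (Finset (Fin N × Fin N)) :=
  (dicores k1 k2 N M).filter (fun E => F ⊆ E)

lemma mem_dicores {k1 k2 M : ℕ} {E : Finset (Fin N × Fin N)} :
    E ∈ dicores k1 k2 N M ↔ IsDicore k1 k2 N M E := by simp [dicores]

lemma mem_dicoresOver {k1 k2 M : ℕ} {F E : Finset (Fin N × Fin N)} :
    E ∈ dicoresOver k1 k2 M F ↔ IsDicore k1 k2 N M E ∧ F ⊆ E := by
  simp [dicoresOver, mem_dicores]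

/-- The edges whose removal keeps the degree conditions. -/
def surplus (k1 k2 : ℕ) (E : Finset (Fin N × Fin N)) : Finset (Fin N × Fin N) :=
  E.filter (fun e => k1 < indeg E e.2 ∧ k2 < outdeg E e.1)

/-- The edges whose tail has surplus out-degree and whose head has minimum in-degree. -/
def tailSurplus (k1 k2 : ℕ) (E : Finset (Fin N × Fin N)) : Finset (Fin N × Fin N) :=
  E.filter (fun e => indeg E e.2 = k1 ∧ k2 < outdeg E e.1)

/-- The edges whose head has surplus in-degree and whose tail has minimum out-degree. -/
def headSurplus (k1 k2 : ℕ) (E : Finset (Fin N × Fin N)) : Finset (Fin N × Fin N) :=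
  E.filter (fun e => k1 < indeg E e.2 ∧ outdeg E e.1 = k2)

lemma mem_surplus {k1 k2 : ℕ} {E : Finset (Fin N × Fin N)} {e : Fin N × Fin N} :
    e ∈ surplus k1 k2 E ↔ e ∈ E ∧ k1 < indeg E e.2 ∧ k2 < outdeg E e.1 := by simp [surplus]

lemma surplus_mono (k1 k2 : ℕ) {E E' : Finset (Fin N × Fin N)} (h : E ⊆ E') :
    surplus k1 k2 E ⊆ surplus k1 k2 E' := by
  intro e he
  rw [mem_surplus] at he ⊢
  exact ⟨h he.1, he.2.1.trans_le (indeg_mono h _), he.2.2.trans_le (outdeg_mono h _)⟩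

lemma card_surplus_le_erase (k1 k2 : ℕ) (E : Finset (Fin N × Fin N)) (e : Fin N × Fin N) :
    (surplus k1 k2 E).card ≤ (surplus k1 k2 (E.erase e)).card + (k1 + k2 + 3) := by
  by_cases he : e ∈ E
  swap
  · rw [erase_eq_of_notMem he]; omega
  set P : Finset (Fin N × Fin N) := if outdeg E e.1 = k2 + 1 then E.filter (fun x => x.1 = e.1) else ∅
  set Q : Finset (Fin N × Fin N) := if indeg E e.2 = k1 + 1 then E.filter (fun x => x.2 = e.2) else ∅
  have hP : P.card ≤ k2 + 1 := by
    simp only [P]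
    split_ifs with h
    · exact h.le
    · simp
  have hQ : Q.card ≤ k1 + 1 := by
    simp only [Q]
    split_ifs with h
    · exact h.le
    · simp
  have hsub : surplus k1 k2 E ⊆ surplus k1 k2 (E.erase e) ∪ {e} ∪ P ∪ Q := by
    intro x hx
    rw [mem_surplus] at hx
    by_cases hxe : x = e
    · simp [hxe]
    by_cases h1 : x ∈ P
    · simp [h1]
    by_cases h2 : x ∈ Q
    · simp [h2]
    have ho := outdeg_erase he x.1
    have hi := indeg_erase he x.2
    have h3 : x ∈ surplus k1 k2 (E.erase e) := by
      rw [mem_surplus]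
      refine ⟨mem_erase.2 ⟨hxe, hx.1⟩, ?_, ?_⟩
      · by_cases hh : e.2 = x.2
        · have : indeg E e.2 ≠ k1 + 1 := by
            intro h
            apply h2
            simp only [Q, if_pos h, mem_filter]
            exact ⟨hx.1, hh.symm⟩
          rw [hh] at this
          rw [if_pos hh] at hi
          omega
        · rw [if_neg hh] at hi
          omega
      · by_cases hh : e.1 = x.1
        · have : outdeg E e.1 ≠ k2 + 1 := by
            intro h
            apply h1
            simp only [P, if_pos h, mem_filter]
            exact ⟨hx.1, hh.symm⟩
          rw [hh] at this
          rw [if_pos hh] at ho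
          omega
        · rw [if_neg hh] at ho
          omega
    simp [h3]
  have h1 := card_le_card hsub
  have h2 := card_union_le (surplus k1 k2 (E.erase e) ∪ {e} ∪ P) Q
  have h3 := card_union_le (surplus k1 k2 (E.erase e) ∪ {e}) P
  have h4 := card_union_le (surplus k1 k2 (E.erase e)) {e}
  rw [card_singleton] at h4
  omega

lemma card_surplus_insert_le (k1 k2 : ℕ) (E : Finset (Fin N × Fin N)) (e : Fin N × Fin N) :
    (surplus k1 k2 (insert e E)).card ≤ (surplus k1 k2 E).card + (k1 + k2 + 3) := by
  refine (card_surplus_le_erase k1 k2 (insert e E) e).trans ?_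
  gcongr
  refine surplus_mono _ _ ?_
  rw [erase_insert_eq_erase]
  exact erase_subset _ _

lemma card_surplus_le_sdiff (k1 k2 : ℕ) (E X : Finset (Fin N × Fin N)) :
    (surplus k1 k2 E).card ≤ (surplus k1 k2 (E \ X)).card + X.card * (k1 + k2 + 3) := by
  induction X using Finset.induction_on with
  | empty => simp
  | insert e X he ih =>
    have h := card_surplus_le_erase k1 k2 (E \ X) e
    have h2 : E \ insert e X = (E \ X).erase e := by
      ext x; simp only [mem_sdiff, mem_insert, mem_erase]; tauto
    rw [h2, card_insert_of_notMem he]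
    linarith

lemma card_filter_outdeg_le (k2 : ℕ) (E : Finset (Fin N × Fin N)) :
    (E.filter (fun e => outdeg E e.1 ≤ k2)).card ≤ k2 * N := by
  have := card_le_mul_card_image (f := Prod.fst) (E.filter (fun e => outdeg E e.1 ≤ k2)) k2 (by
    intro b hb
    obtain ⟨e, he, rfl⟩ := mem_image.1 hb
    refine le_trans (card_le_card ?_) (mem_filter.1 he).2
    intro x hx
    simp only [mem_filter] at hx ⊢
    exact ⟨hx.1.1, hx.2⟩)
  refine this.trans (Nat.mul_le_mul_left _ ?_)
  simpa using card_le_univ ((E.filter (fun e => outdeg E e.1 ≤ k2)).image Prod.fst)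

lemma card_filter_indeg_le (k1 : ℕ) (E : Finset (Fin N × Fin N)) :
    (E.filter (fun e => indeg E e.2 ≤ k1)).card ≤ k1 * N := by
  have := card_le_mul_card_image (f := Prod.snd) (E.filter (fun e => indeg E e.2 ≤ k1)) k1 (by
    intro b hb
    obtain ⟨e, he, rfl⟩ := mem_image.1 hb
    refine le_trans (card_le_card ?_) (mem_filter.1 he).2
    intro x hx
    simp only [mem_filter] at hx ⊢
    exact ⟨hx.1.1, hx.2⟩)
  refine this.trans (Nat.mul_le_mul_left _ ?_)
  simpa using card_le_univ ((E.filter (fun e => indeg E e.2 ≤ k1)).image Prod.snd)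

lemma card_le_tailSurplus {k1 k2 M : ℕ} {E : Finset (Fin N × Fin N)} (hE : IsDicore k1 k2 N M E) :
    M ≤ (tailSurplus k1 k2 E).card + (surplus k1 k2 E).card + k2 * N := by
  rw [isDicore_iff] at hE
  have hsub : E ⊆ tailSurplus k1 k2 E ∪ surplus k1 k2 E ∪ E.filter (fun e => outdeg E e.1 ≤ k2) := by
    intro e he
    have := (hE.2.2 e.2).1
    simp only [mem_union, tailSurplus, surplus, mem_filter, he, true_and]
    omega
  have h1 := card_le_card hsub
  have h2 := card_union_le (tailSurplus k1 k2 E ∪ surplus k1 k2 E)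
    (E.filter (fun e => outdeg E e.1 ≤ k2))
  have h3 := card_union_le (tailSurplus k1 k2 E) (surplus k1 k2 E)
  have h4 := card_filter_outdeg_le k2 E
  omega

lemma card_le_headSurplus {k1 k2 M : ℕ} {E : Finset (Fin N × Fin N)} (hE : IsDicore k1 k2 N M E) :
    M ≤ (headSurplus k1 k2 E).card + (surplus k1 k2 E).card + k1 * N := by
  rw [isDicore_iff] at hE
  have hsub : E ⊆ headSurplus k1 k2 E ∪ surplus k1 k2 E ∪ E.filter (fun e => indeg E e.2 ≤ k1) := by
    intro e he
    have := (hE.2.2 e.1).2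
    simp only [mem_union, headSurplus, surplus, mem_filter, he, true_and]
    omega
  have h1 := card_le_card hsub
  have h2 := card_union_le (headSurplus k1 k2 E ∪ surplus k1 k2 E)
    (E.filter (fun e => indeg E e.2 ≤ k1))
  have h3 := card_union_le (headSurplus k1 k2 E) (surplus k1 k2 E)
  have h4 := card_filter_indeg_le k1 E
  omega

/-! ### Merging a tail-surplus edge with a head-surplus edge -/

/-- Pairs of a tail-surplus edge `(a, b)` and a head-surplus edge `(c, d)` outside `F` that may be
replaced by the single edge `(c, b)`. -/
def mergePairs (k1 k2 : ℕ) (F E : Finset (Fin N × Fin N)) :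
    Finset ((Fin N × Fin N) × (Fin N × Fin N)) :=
  ((tailSurplus k1 k2 E \ F) ×ˢ (headSurplus k1 k2 E \ F)).filter
    (fun p => p.2.1 ≠ p.1.2 ∧ (p.2.1, p.1.2) ∉ E)

/-- Replace the edges `(a, b)` and `(c, d)` by the single edge `(c, b)`. -/
def merge (E : Finset (Fin N × Fin N)) (p : (Fin N × Fin N) × (Fin N × Fin N)) :
    Finset (Fin N × Fin N) :=
  insert (p.2.1, p.1.2) ((E.erase p.1).erase p.2)

lemma card_filter_headSurplus_le {k1 k2 : ℕ} (E : Finset (Fin N × Fin N)) (b : Fin N)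
    (hb : indeg E b = k1) :
    ((headSurplus k1 k2 E).filter (fun x => x.1 = b ∨ (x.1, b) ∈ E)).card ≤ k2 * (k1 + 1) := by
  refine (card_le_mul_card_image_of_maps_to (f := Prod.fst)
    (t := insert b (univ.filter (fun c => (c, b) ∈ E))) ?_ k2 ?_).trans ?_
  · intro x hx
    simpa using (mem_filter.1 hx).2
  · intro c _
    by_cases h : outdeg E c = k2
    · rw [← h]
      refine card_le_card ?_
      intro x hx
      simp only [headSurplus, mem_filter] at hx ⊢
      exact ⟨hx.1.1.1, hx.2⟩
    · rw [filter_false_of_mem, card_empty]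
      · exact Nat.zero_le _
      · rintro x hx rfl
        simp only [headSurplus, mem_filter] at hx
        exact h hx.1.2.2
  · refine Nat.mul_le_mul_left _ ((card_insert_le _ _).trans ?_)
    rw [card_filter_mk_mem_right, hb]

lemma card_mul_card_le_mergePairs (k1 k2 : ℕ) (F E : Finset (Fin N × Fin N)) :
    (tailSurplus k1 k2 E \ F).card * (headSurplus k1 k2 E \ F).card ≤
      (mergePairs k1 k2 F E).card + k2 * (k1 + 1) * (tailSurplus k1 k2 E \ F).card := by
  rw [← card_product, ← card_filter_add_card_filter_not (fun p => p.2.1 ≠ p.1.2 ∧ (p.2.1, p.1.2) ∉ E)]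
  refine Nat.add_le_add_left ?_ _
  refine card_le_mul_card_image_of_maps_to (f := Prod.fst) ?_ _ ?_
  · intro p hp
    exact (mem_product.1 (mem_filter.1 hp).1).1
  · intro e he
    have hb : indeg E e.2 = k1 := by
      have := (mem_sdiff.1 he).1
      simp only [tailSurplus, mem_filter] at this
      exact this.2.1
    refine le_trans ?_ (card_filter_headSurplus_le (k2 := k2) E e.2 hb)
    refine card_le_card_of_injOn Prod.snd ?_ ?_
    · rintro ⟨x, y⟩ hp
      simp only [coe_filter, mem_filter, mem_product, mem_sdiff, Set.mem_ofPred_eq] at hp ⊢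
      obtain ⟨⟨⟨-, h1, -⟩, h2⟩, rfl⟩ := hp
      refine ⟨h1, ?_⟩
      tauto
    · rintro ⟨x, y⟩ hp ⟨x', y'⟩ hp' h
      simp only [coe_filter, Set.mem_ofPred_eq] at hp hp'
      obtain ⟨-, rfl⟩ := hp
      obtain ⟨-, rfl⟩ := hp'
      simpa using h

lemma le_card_mergePairs {k1 k2 M : ℕ} {F E : Finset (Fin N × Fin N)} {ε : ℝ} (hε : 0 < ε)
    (hE : IsDicore k1 k2 N M E) (h1 : (k1 + ε) * N ≤ M) (h2 : (k2 + ε) * N ≤ M)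
    (hF : ((surplus k1 k2 E).card : ℝ) + F.card ≤ ε / 2 * N)
    (hN : (k2 * (k1 + 1) : ℝ) ≤ ε / 4 * N) :
    ε ^ 2 / 8 * N ^ 2 ≤ ((mergePairs k1 k2 F E).card : ℝ) := by
  have ht : (M : ℝ) ≤ (tailSurplus k1 k2 E).card + (surplus k1 k2 E).card + k2 * N := by
    exact_mod_cast card_le_tailSurplus hE
  have hh : (M : ℝ) ≤ (headSurplus k1 k2 E).card + (surplus k1 k2 E).card + k1 * N := by
    exact_mod_cast card_le_headSurplus hE
  have ht' : ((tailSurplus k1 k2 E).card : ℝ) ≤ (tailSurplus k1 k2 E \ F).card + F.card := by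
    exact_mod_cast card_le_card_sdiff_add_card
  have hh' : ((headSurplus k1 k2 E).card : ℝ) ≤ (headSurplus k1 k2 E \ F).card + F.card := by
    exact_mod_cast card_le_card_sdiff_add_card
  have hp : ((tailSurplus k1 k2 E \ F).card : ℝ) * (headSurplus k1 k2 E \ F).card ≤
      (mergePairs k1 k2 F E).card + k2 * (k1 + 1) * (tailSurplus k1 k2 E \ F).card := by
    exact_mod_cast card_mul_card_le_mergePairs k1 k2 F E
  set t : ℝ := ((tailSurplus k1 k2 E \ F).card : ℝ)
  set h : ℝ := ((headSurplus k1 k2 E \ F).card : ℝ)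
  have hN0 : (0 : ℝ) ≤ N := Nat.cast_nonneg N
  have t1 : ε / 2 * N ≤ t := by linarith
  have h1' : ε / 4 * N ≤ h - k2 * (k1 + 1) := by linarith
  have : (ε / 2 * N) * (ε / 4 * N) ≤ t * (h - k2 * (k1 + 1)) :=
    mul_le_mul t1 h1' (by positivity) (le_trans (by positivity) t1)
  nlinarith

section merge

variable {k1 k2 M : ℕ} {F E : Finset (Fin N × Fin N)} {p : (Fin N × Fin N) × (Fin N × Fin N)}

lemma isDicore_merge (hE : IsDicore k1 k2 N (M + 1) E) (hp : p ∈ mergePairs k1 k2 F E) :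
    IsDicore k1 k2 N M (merge E p) := by
  rw [isDicore_iff] at hE ⊢
  obtain ⟨⟨a, b⟩, c, d⟩ := p
  simp only [mergePairs, tailSurplus, headSurplus, mem_filter, mem_product, mem_sdiff] at hp
  obtain ⟨⟨⟨⟨hab, hb, ha⟩, habF⟩, ⟨hcd, hd, hc⟩, hcdF⟩, hcb, hcbE⟩ := hp
  have hne : (c, d) ≠ (a, b) := by rintro h; simp only [Prod.mk.injEq] at h; rw [h.2] at hd; omega
  have hcd' : (c, d) ∈ E.erase (a, b) := mem_erase.2 ⟨hne, hcd⟩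
  have hcb' : (c, b) ∉ (E.erase (a, b)).erase (c, d) := fun h =>
    hcbE (mem_of_mem_erase (mem_of_mem_erase h))
  simp only [merge]
  refine ⟨?_, ?_, ?_⟩
  · rw [card_insert_of_notMem hcb', card_erase_of_mem hcd', card_erase_of_mem hab, hE.1]
    have : 1 < E.card := one_lt_card.2 ⟨_, hab, _, hcd, hne.symm⟩
    omega
  · intro e he
    rcases mem_insert.1 he with rfl | he
    · exact hcb
    · exact hE.2.1 e (mem_of_mem_erase (mem_of_mem_erase he))
  · intro v
    have i1 := indeg_insert hcb' v
    have i2 := indeg_erase hcd' v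
    have i3 := indeg_erase hab v
    have o1 := outdeg_insert hcb' v
    have o2 := outdeg_erase hcd' v
    have o3 := outdeg_erase hab v
    have := hE.2.2 v
    simp only at i1 i2 i3 o1 o2 o3 hb ha hc hd
    constructor
    · by_cases hbv : b = v
      · subst hbv
        have : d ≠ b := by rintro rfl; omega
        simp only [if_true, if_neg this] at i1 i2 i3
        omega
      · by_cases hdv : d = v
        · subst hdv
          simp only [if_true, if_neg hbv] at i1 i2 i3
          omega
        · simp only [if_neg hdv, if_neg hbv] at i1 i2 i3
          omega
    · by_cases hcv : c = v
      · subst hcv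
        have : a ≠ c := by rintro rfl; omega
        simp only [if_true, if_neg this] at o1 o2 o3
        omega
      · by_cases hav : a = v
        · subst hav
          simp only [if_true, if_neg hcv] at o1 o2 o3
          omega
        · simp only [if_neg hcv, if_neg hav] at o1 o2 o3
          omega

lemma mem_merge : (p.2.1, p.1.2) ∈ merge E p := mem_insert_self _ _

lemma subset_merge (hF : F ⊆ E) (hp : p ∈ mergePairs k1 k2 F E) : F ⊆ merge E p := by
  intro e he
  simp only [mergePairs, mem_filter, mem_product, mem_sdiff] at hp
  refine mem_insert_of_mem (mem_erase.2 ⟨?_, mem_erase.2 ⟨?_, hF he⟩⟩)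
  · rintro rfl; exact hp.1.2.2 he
  · rintro rfl; exact hp.1.1.2 he

lemma unmerge (hp : p ∈ mergePairs k1 k2 F E) :
    insert p.1 (insert p.2 ((merge E p).erase (p.2.1, p.1.2))) = E := by
  simp only [mergePairs, tailSurplus, headSurplus, mem_filter, mem_product, mem_sdiff] at hp
  obtain ⟨⟨⟨⟨hab, hb, ha⟩, habF⟩, ⟨hcd, hd, hc⟩, hcdF⟩, hcb, hcbE⟩ := hp
  have hne : p.2 ≠ p.1 := by rintro h; rw [h] at hd; omega
  rw [merge, erase_insert, insert_erase (mem_erase.2 ⟨hne, hcd⟩), insert_erase hab]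
  exact fun h => hcbE (mem_of_mem_erase (mem_of_mem_erase h))

lemma card_surplus_merge_le :
    (surplus k1 k2 (merge E p)).card ≤ (surplus k1 k2 E).card + (k1 + k2 + 3) := by
  refine (card_surplus_insert_le _ _ _ _).trans ?_
  gcongr
  exact surplus_mono _ _ ((erase_subset _ _).trans (erase_subset _ _))

end merge

lemma card_filter_merge_edge_le {M : ℕ} {E : Finset (Fin N × Fin N)} (hE : E.card = M) :
    (univ.filter (fun p : (Fin N × Fin N) × (Fin N × Fin N) => (p.2.1, p.1.2) ∈ E)).card
      ≤ M * N ^ 2 := by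
  have : (univ.filter (fun p : (Fin N × Fin N) × (Fin N × Fin N) => (p.2.1, p.1.2) ∈ E)).card ≤
      (E ×ˢ (univ : Finset (Fin N × Fin N))).card := by
    refine card_le_card_of_injOn (fun p => ((p.2.1, p.1.2), (p.1.1, p.2.2))) ?_ ?_
    · intro p hp
      simpa using hp
    · rintro ⟨⟨a, b⟩, c, d⟩ _ ⟨⟨a', b'⟩, c', d'⟩ _ h
      simp only [Prod.mk.injEq] at h ⊢
      tauto
  rw [card_product, hE, card_univ, Fintype.card_prod, Fintype.card_fin] at this
  rwa [sq]

/-! ### Comparing the numbers of dicores with `M` and `M + 1` edges -/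

lemma isDicore_insert {k1 k2 M : ℕ} {E : Finset (Fin N × Fin N)} {e : Fin N × Fin N}
    (hE : IsDicore k1 k2 N M E) (he : e ∈ nonEdges E) : IsDicore k1 k2 N (M + 1) (insert e E) := by
  rw [isDicore_iff] at hE ⊢
  rw [mem_nonEdges] at he
  refine ⟨by rw [card_insert_of_notMem he.2, hE.1], ?_, ?_⟩
  · intro x hx
    rcases mem_insert.1 hx with rfl | hx
    · exact he.1
    · exact hE.2.1 x hx
  · intro v
    exact ⟨(hE.2.2 v).1.trans (indeg_mono (subset_insert _ _) v),
      (hE.2.2 v).2.trans (outdeg_mono (subset_insert _ _) v)⟩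

lemma isDicore_erase {k1 k2 M : ℕ} {E : Finset (Fin N × Fin N)} {e : Fin N × Fin N}
    (hE : IsDicore k1 k2 N (M + 1) E) (he : e ∈ surplus k1 k2 E) :
    IsDicore k1 k2 N M (E.erase e) := by
  rw [isDicore_iff] at hE ⊢
  rw [mem_surplus] at he
  refine ⟨by rw [card_erase_of_mem he.1, hE.1]; rfl, fun x hx => hE.2.1 x (mem_of_mem_erase hx), ?_⟩
  intro v
  have i1 := indeg_erase he.1 v
  have o1 := outdeg_erase he.1 v
  have := hE.2.2 v
  constructor
  · split_ifs at i1 with h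
    · rw [← h] at i1 ⊢; omega
    · omega
  · split_ifs at o1 with h
    · rw [← h] at o1 ⊢; omega
    · omega

lemma mem_surplus_insert {k1 k2 M : ℕ} {E : Finset (Fin N × Fin N)} {e : Fin N × Fin N}
    (hE : IsDicore k1 k2 N M E) (he : e ∈ nonEdges E) : e ∈ surplus k1 k2 (insert e E) := by
  rw [isDicore_iff] at hE
  rw [mem_nonEdges] at he
  rw [mem_surplus, indeg_insert he.2, outdeg_insert he.2]
  have h1 := hE.2.2 e.1
  have h2 := hE.2.2 e.2
  refine ⟨mem_insert_self _ _, ?_, ?_⟩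
  · simp; omega
  · simp; omega

lemma le_card_nonEdges {k1 k2 M : ℕ} {E : Finset (Fin N × Fin N)} (hE : IsDicore k1 k2 N M E)
    (hN : (M : ℝ) + N ≤ N ^ 2 / 2) : (N ^ 2 / 2 : ℝ) ≤ ((nonEdges E).card : ℝ) := by
  have h : (((nonEdges E).card + E.card + N : ℕ) : ℝ) = ((N * N : ℕ) : ℝ) := by
    rw [card_nonEdges hE.2.1]
  rw [hE.1] at h
  push_cast at h
  nlinarith

lemma card_dicoresOver_le_succ {k1 k2 M : ℕ} (F : Finset (Fin N × Fin N))
    (hN : (M : ℝ) + N ≤ N ^ 2 / 2) :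
    (N ^ 2 / 2 : ℝ) * (dicoresOver k1 k2 M F).card ≤
      ((M : ℝ) + 1) * (dicoresOver k1 k2 (M + 1) F).card := by
  refine card_mul_le_card_mul_of_moves _ _ nonEdges (fun E e => insert e E) id
    (fun E e => E.erase e) _ _ ?_ ?_ ?_
  · intro E hE
    exact le_card_nonEdges (mem_dicoresOver.1 hE).1 hN
  · intro E hE
    rw [mem_dicoresOver] at hE
    simp [hE.1.1]
  · intro E hE e he
    rw [mem_dicoresOver] at hE
    refine ⟨mem_dicoresOver.2 ⟨isDicore_insert hE.1 he, hE.2.trans (subset_insert _ _)⟩,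
      mem_insert_self _ _, erase_insert (mem_nonEdges.1 he).2⟩

lemma card_dicoresOver_succ_le {k1 k2 M : ℕ} {F : Finset (Fin N × Fin N)} {ε C1 : ℝ} (hε : 0 < ε)
    (h1 : (k1 + ε) * N ≤ M) (h2 : (k2 + ε) * N ≤ M) (hM : (M : ℝ) ≤ C1 * N)
    (hF : (F.card : ℝ) ≤ ε / 8 * N) (hN : (k2 * (k1 + 1) : ℝ) ≤ ε / 4 * N) (hN0 : 0 < N) :
    ((dicoresOver k1 k2 (M + 1) F).card : ℝ) ≤
      (8 / ε + 8 * C1 / ε ^ 2) * N * (dicoresOver k1 k2 M F).card := by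
  have hNpos : (0 : ℝ) < N := by exact_mod_cast hN0
  set Y := dicoresOver k1 k2 M F
  set X := dicoresOver k1 k2 (M + 1) F
  set P : Finset (Fin N × Fin N) → Prop := fun E =>
    ε / 8 * N ≤ ((surplus k1 k2 E \ F).card : ℝ)
  classical
  have hX1 : ε / 8 * N * (X.filter P).card ≤ (N : ℝ) ^ 2 * Y.card := by
    refine card_mul_le_card_mul_of_moves _ _ (fun E => surplus k1 k2 E \ F)
      (fun E e => E.erase e) (fun _ => univ) (fun E e => insert e E) _ _ ?_ ?_ ?_
    · intro E hE
      exact (mem_filter.1 hE).2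
    · intro E _
      simp [sq]
    · intro E hE e he
      have hE := mem_dicoresOver.1 (mem_filter.1 hE).1
      rw [mem_sdiff] at he
      refine ⟨mem_dicoresOver.2 ⟨isDicore_erase hE.1 he.1, ?_⟩, mem_univ _,
        insert_erase (mem_surplus.1 he.1).1⟩
      intro x hx
      exact mem_erase.2 ⟨by rintro rfl; exact he.2 hx, hE.2 hx⟩
  have hX2 : ε ^ 2 / 8 * N ^ 2 * (X.filter (fun E => ¬ P E)).card ≤ (M * N ^ 2 : ℝ) * Y.card := by
    refine card_mul_le_card_mul_of_moves _ _ (mergePairs k1 k2 F) merge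
      (fun E => univ.filter (fun p => (p.2.1, p.1.2) ∈ E))
      (fun E p => insert p.1 (insert p.2 (E.erase (p.2.1, p.1.2)))) _ _ ?_ ?_ ?_
    · intro E hE
      rw [mem_filter] at hE
      have hE1 := mem_dicoresOver.1 hE.1
      refine le_card_mergePairs hε hE1.1 ?_ ?_ ?_ hN
      · push_cast; linarith
      · push_cast; linarith
      · have h3 := hE.2
        simp only [P, not_le] at h3
        have h4 : ((surplus k1 k2 E).card : ℝ) ≤ (surplus k1 k2 E \ F).card + F.card := by
          exact_mod_cast card_le_card_sdiff_add_card
        nlinarith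
    · intro E hE
      have hE := mem_dicoresOver.1 hE
      exact_mod_cast card_filter_merge_edge_le hE.1.1
    · intro E hE p hp
      have hE := mem_dicoresOver.1 (mem_filter.1 hE).1
      refine ⟨mem_dicoresOver.2 ⟨isDicore_merge hE.1 hp, subset_merge hE.2 hp⟩, ?_, unmerge hp⟩
      simpa using mem_merge
  have hsum : (X.card : ℝ) = (X.filter P).card + (X.filter (fun E => ¬ P E)).card := by
    exact_mod_cast (card_filter_add_card_filter_not (s := X) P).symm
  have e1 : ((X.filter P).card : ℝ) ≤ 8 / ε * N * Y.card := by
    have : ε / 8 * N * (X.filter P).card ≤ ε / 8 * N * (8 / ε * N * Y.card) := by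
      refine hX1.trans (le_of_eq ?_)
      field_simp
    exact le_of_mul_le_mul_left this (by positivity)
  have e2 : ((X.filter (fun E => ¬ P E)).card : ℝ) ≤ 8 * C1 / ε ^ 2 * N * Y.card := by
    have : ε ^ 2 / 8 * N ^ 2 * (X.filter (fun E => ¬ P E)).card ≤
        ε ^ 2 / 8 * N ^ 2 * (8 * C1 / ε ^ 2 * N * Y.card) := by
      refine hX2.trans ?_
      have : (M * N ^ 2 : ℝ) * Y.card ≤ (C1 * N * N ^ 2) * Y.card := by gcongr
      refine this.trans (le_of_eq ?_)
      field_simp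
    exact le_of_mul_le_mul_left this (by positivity)
  rw [hsum]
  linarith

/-! ### The probability that given edges are present -/

section redirect

variable {k1 k2 M : ℕ} {F : Finset (Fin N × Fin N)} {a b : Fin N}

lemma card_filter_surplus_le (he : (a, b) ∈ F) :
    ((dicoresOver k1 k2 (M + 1) F).filter (fun E => k1 < indeg E b ∧ k2 < outdeg E a)).card ≤
      (dicoresOver k1 k2 M (F.erase (a, b))).card := by
  refine card_le_card_of_injOn (fun E => E.erase (a, b)) ?_ ?_
  · intro E hE
    simp only [coe_filter, Set.mem_ofPred_eq, mem_dicoresOver] at hE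
    exact mem_dicoresOver.2 ⟨isDicore_erase hE.1.1 (mem_surplus.2 ⟨hE.1.2 he, hE.2⟩),
      erase_subset_erase _ hE.1.2⟩
  · intro E hE E' hE' h
    simp only [coe_filter, Set.mem_ofPred_eq, mem_dicoresOver] at hE hE'
    have := congrArg (insert (a, b)) h
    simpa [insert_erase (hE.1.2 he), insert_erase (hE'.1.2 he)] using this

lemma card_filter_outdeg_eq_le (he : (a, b) ∈ F) :
    ((N : ℝ) - 1 - k2) *
      ((dicoresOver k1 k2 M F).filter (fun E => k1 < indeg E b ∧ outdeg E a = k2)).card ≤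
      k2 * (dicoresOver k1 k2 M (F.erase (a, b))).card := by
  refine le_trans (card_mul_le_card_mul_of_moves _
    ((dicoresOver k1 k2 M (F.erase (a, b))).filter (fun E => outdeg E a = k2))
    (fun E => univ.filter (fun d => d ≠ a ∧ (a, d) ∉ E))
    (fun E d => insert (a, d) (E.erase (a, b)))
    (fun E => univ.filter (fun d => (a, d) ∈ E))
    (fun E d => insert (a, b) (E.erase (a, d))) _ k2 ?_ ?_ ?_) ?_
  · intro E hE
    have h := card_newHeads E a
    rw [(mem_filter.1 hE).2.2] at h
    have : (N : ℝ) ≤ (univ.filter (fun d => d ≠ a ∧ (a, d) ∉ E)).card + 1 + k2 := by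
      exact_mod_cast h
    linarith
  · intro E hE
    rw [card_filter_mk_mem_left, (mem_filter.1 hE).2]
  · intro E hE d hd
    simp only [mem_filter, mem_dicoresOver, mem_univ, true_and] at hE hd ⊢
    obtain ⟨⟨hE, hFE⟩, hin, hout⟩ := hE
    have hab := hFE he
    have hne : (a, d) ≠ (a, b) := by rintro h; rw [h] at hd; exact hd.2 hab
    have hd' : (a, d) ∉ E.erase (a, b) := fun h => hd.2 (mem_of_mem_erase h)
    rw [isDicore_iff] at hE ⊢
    refine ⟨⟨⟨⟨?_, ?_, ?_⟩, ?_⟩, ?_⟩, mem_insert_self _ _, ?_⟩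
    · rw [card_insert_of_notMem hd', card_erase_add_one hab, hE.1]
    · intro x hx
      rcases mem_insert.1 hx with rfl | hx
      · exact hd.1.symm
      · exact hE.2.1 x (mem_of_mem_erase hx)
    · intro v
      have i1 := indeg_insert hd' v
      have i2 := indeg_erase hab v
      have o1 := outdeg_insert hd' v
      have o2 := outdeg_erase hab v
      have := hE.2.2 v
      simp only at i1 i2 o1 o2
      constructor
      · by_cases hbv : b = v
        · subst hbv; simp only [if_true] at i2; omega
        · simp only [if_neg hbv] at i2; omega
      · omega
    · exact (erase_subset_erase _ hFE).trans (subset_insert _ _)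
    · have o1 := outdeg_insert hd' a
      have o2 := outdeg_erase hab a
      simp only at o1 o2
      omega
    · rw [erase_insert hd', insert_erase hab]
  · gcongr
    exact filter_subset _ _

lemma card_filter_indeg_eq_le (he : (a, b) ∈ F) :
    ((N : ℝ) - 1 - k1) *
      ((dicoresOver k1 k2 M F).filter (fun E => indeg E b = k1 ∧ k2 < outdeg E a)).card ≤
      k1 * (dicoresOver k1 k2 M (F.erase (a, b))).card := by
  refine le_trans (card_mul_le_card_mul_of_moves _
    ((dicoresOver k1 k2 M (F.erase (a, b))).filter (fun E => indeg E b = k1))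
    (fun E => univ.filter (fun c => c ≠ b ∧ (c, b) ∉ E))
    (fun E c => insert (c, b) (E.erase (a, b)))
    (fun E => univ.filter (fun c => (c, b) ∈ E))
    (fun E c => insert (a, b) (E.erase (c, b))) _ k1 ?_ ?_ ?_) ?_
  · intro E hE
    have h := card_newTails E b
    rw [(mem_filter.1 hE).2.1] at h
    have : (N : ℝ) ≤ (univ.filter (fun c => c ≠ b ∧ (c, b) ∉ E)).card + 1 + k1 := by
      exact_mod_cast h
    linarith
  · intro E hE
    rw [card_filter_mk_mem_right, (mem_filter.1 hE).2]
  · intro E hE c hc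
    simp only [mem_filter, mem_dicoresOver, mem_univ, true_and] at hE hc ⊢
    obtain ⟨⟨hE, hFE⟩, hin, hout⟩ := hE
    have hab := hFE he
    have hc' : (c, b) ∉ E.erase (a, b) := fun h => hc.2 (mem_of_mem_erase h)
    rw [isDicore_iff] at hE ⊢
    refine ⟨⟨⟨⟨?_, ?_, ?_⟩, ?_⟩, ?_⟩, mem_insert_self _ _, ?_⟩
    · rw [card_insert_of_notMem hc', card_erase_add_one hab, hE.1]
    · intro x hx
      rcases mem_insert.1 hx with rfl | hx
      · exact hc.1
      · exact hE.2.1 x (mem_of_mem_erase hx)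
    · intro v
      have i1 := indeg_insert hc' v
      have i2 := indeg_erase hab v
      have o1 := outdeg_insert hc' v
      have o2 := outdeg_erase hab v
      have := hE.2.2 v
      simp only at i1 i2 o1 o2
      constructor
      · omega
      · by_cases hav : a = v
        · subst hav; simp only [if_true] at o2; omega
        · simp only [if_neg hav] at o2; omega
    · exact (erase_subset_erase _ hFE).trans (subset_insert _ _)
    · have i1 := indeg_insert hc' b
      have i2 := indeg_erase hab b
      simp only at i1 i2
      omega
    · rw [erase_insert hc', insert_erase hab]
  · gcongr
    exact filter_subset _ _

lemma card_filter_tight_le (he : (a, b) ∈ F) (hN : (k2 : ℝ) + 1 ≤ N) :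
    (((N : ℝ) - 1 - k1) * (N - 1 - k2)) *
      ((dicoresOver k1 k2 M F).filter (fun E => indeg E b = k1 ∧ outdeg E a = k2)).card ≤
      (k1 * k2) * (dicoresOver k1 k2 (M + 1) (F.erase (a, b))).card := by
  refine le_trans (card_mul_le_card_mul_of_moves _
    ((dicoresOver k1 k2 (M + 1) (F.erase (a, b))).filter
      (fun E => indeg E b = k1 ∧ outdeg E a = k2))
    (fun E => univ.filter (fun c => c ≠ b ∧ (c, b) ∉ E) ×ˢ
      univ.filter (fun d => d ≠ a ∧ (a, d) ∉ E))
    (fun E g => insert (a, g.2) (insert (g.1, b) (E.erase (a, b))))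
    (fun E => univ.filter (fun c => (c, b) ∈ E) ×ˢ univ.filter (fun d => (a, d) ∈ E))
    (fun E g => insert (a, b) ((E.erase (a, g.2)).erase (g.1, b))) _ (k1 * k2) ?_ ?_ ?_) ?_
  · intro E hE
    have h := card_newTails E b
    rw [(mem_filter.1 hE).2.1] at h
    have h' := card_newHeads E a
    rw [(mem_filter.1 hE).2.2] at h'
    have : (N : ℝ) ≤ (univ.filter (fun c => c ≠ b ∧ (c, b) ∉ E)).card + 1 + k1 := by
      exact_mod_cast h
    have : (N : ℝ) ≤ (univ.filter (fun d => d ≠ a ∧ (a, d) ∉ E)).card + 1 + k2 := by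
      exact_mod_cast h'
    rw [card_product]
    push_cast
    refine mul_le_mul (by linarith) (by linarith) (by linarith) (Nat.cast_nonneg _)
  · intro E hE
    rw [card_product, card_filter_mk_mem_right, card_filter_mk_mem_left, (mem_filter.1 hE).2.1,
      (mem_filter.1 hE).2.2]
    push_cast
    exact le_rfl
  · rintro E hE ⟨c, d⟩ hg
    simp only [mem_filter, mem_dicoresOver, mem_univ, true_and, mem_product] at hE hg ⊢
    obtain ⟨⟨hE, hFE⟩, hin, hout⟩ := hE
    obtain ⟨hc, hd⟩ := hg
    have hab := hFE he
    have hca : c ≠ a := by rintro rfl; exact hc.2 hab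
    have hdb : d ≠ b := by rintro rfl; exact hd.2 hab
    have hc' : (c, b) ∉ E.erase (a, b) := fun h => hc.2 (mem_of_mem_erase h)
    have hd' : (a, d) ∉ insert (c, b) (E.erase (a, b)) := by
      intro h
      rcases mem_insert.1 h with h | h
      · simp only [Prod.mk.injEq] at h
        exact hca h.1.symm
      · exact hd.2 (mem_of_mem_erase h)
    rw [isDicore_iff] at hE ⊢
    have i1 := indeg_insert hd'
    have i2 := indeg_insert hc'
    have i3 := indeg_erase hab
    have o1 := outdeg_insert hd'
    have o2 := outdeg_insert hc'
    have o3 := outdeg_erase hab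
    simp only at i1 i2 i3 o1 o2 o3
    refine ⟨⟨⟨⟨?_, ?_, ?_⟩, ?_⟩, ?_, ?_⟩,
      ⟨mem_insert_of_mem (mem_insert_self _ _), mem_insert_self _ _⟩, ?_⟩
    · rw [card_insert_of_notMem hd', card_insert_of_notMem hc', card_erase_add_one hab, hE.1]
    · intro x hx
      rcases mem_insert.1 hx with rfl | hx
      · exact hd.1.symm
      rcases mem_insert.1 hx with rfl | hx
      · exact hc.1
      · exact hE.2.1 x (mem_of_mem_erase hx)
    · intro v
      have := hE.2.2 v
      have i1 := i1 v
      have i2 := i2 v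
      have i3 := i3 v
      have o1 := o1 v
      have o2 := o2 v
      have o3 := o3 v
      omega
    · exact (erase_subset_erase _ hFE).trans ((subset_insert _ _).trans (subset_insert _ _))
    · have i1 := i1 b
      have i2 := i2 b
      have i3 := i3 b
      rw [if_neg hdb] at i1
      omega
    · have o1 := o1 a
      have o2 := o2 a
      have o3 := o3 a
      rw [if_neg hca] at o2
      simp only [if_true] at o1 o3
      omega
    · rw [erase_insert hd', erase_insert hc', insert_erase hab]
  · gcongr
    exact filter_subset _ _

end redirect

lemma card_dicoresOver_le_erase {k1 k2 : ℕ} {ε C1 : ℝ} (hε : 0 < ε) (hC1 : 0 < C1) :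
    ∃ C : ℝ, 1 ≤ C ∧ ∃ N0 : ℕ, ∀ N M : ℕ, N0 ≤ N → (k1 + ε) * N ≤ M → (k2 + ε) * N ≤ M →
      (M : ℝ) ≤ C1 * N → ∀ (F : Finset (Fin N × Fin N)), (F.card : ℝ) ≤ ε / 8 * N →
      ∀ e ∈ F, ((dicoresOver k1 k2 M F).card : ℝ) ≤
        C / N * (dicoresOver k1 k2 M (F.erase e)).card := by
  set Cd : ℝ := 8 / ε + 8 * C1 / ε ^ 2 with hCd
  have hCd0 : 0 < Cd := by positivity
  refine ⟨2 * C1 + 2 * k2 + 2 * k1 + 4 * (k1 * k2) * Cd + 1, by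
    have : 0 ≤ 2 * C1 + 2 * k2 + 2 * k1 + 4 * (k1 * k2) * Cd := by positivity
    linarith, ?_⟩
  obtain ⟨N0, hN0⟩ := exists_nat_ge
    (max (max (2 * (C1 + 1)) (2 * (k1 + k2 + 1))) (k2 * (k1 + 1) / (ε / 4)))
  refine ⟨N0 + 1, fun N M hN h1 h2 hM F hF e he => ?_⟩
  have hNN : (N0 : ℝ) + 1 ≤ N := by exact_mod_cast hN
  have hbig := hN0.trans (by linarith : (N0 : ℝ) ≤ N)
  rw [max_le_iff, max_le_iff] at hbig
  obtain ⟨⟨hb1, hb2⟩, hb3⟩ := hbig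
  rw [div_le_iff₀ (by positivity)] at hb3
  have hNpos : (0 : ℝ) < N := by
    have : (0 : ℝ) ≤ N0 := Nat.cast_nonneg _
    linarith
  have hk1 : (0 : ℝ) ≤ k1 := Nat.cast_nonneg _
  have hk2 : (0 : ℝ) ≤ k2 := Nat.cast_nonneg _
  obtain ⟨a, b⟩ := e
  set Y : ℝ := ((dicoresOver k1 k2 M (F.erase (a, b))).card : ℝ)
  have hY : 0 ≤ Y := Nat.cast_nonneg _
  have hMpos : (0 : ℝ) < M := lt_of_lt_of_le (by positivity) h1
  obtain ⟨m, rfl⟩ : ∃ m, M = m + 1 := ⟨M - 1, by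
    have : 0 < M := by exact_mod_cast hMpos
    omega⟩
  set X := dicoresOver k1 k2 (m + 1) F
  have hsplit : (X.card : ℝ) ≤
      (X.filter (fun E => k1 < indeg E b ∧ k2 < outdeg E a)).card +
      (X.filter (fun E => k1 < indeg E b ∧ outdeg E a = k2)).card +
      (X.filter (fun E => indeg E b = k1 ∧ k2 < outdeg E a)).card +
      (X.filter (fun E => indeg E b = k1 ∧ outdeg E a = k2)).card := by
    have hsub : X ⊆ X.filter (fun E => k1 < indeg E b ∧ k2 < outdeg E a) ∪
      X.filter (fun E => k1 < indeg E b ∧ outdeg E a = k2) ∪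
      X.filter (fun E => indeg E b = k1 ∧ k2 < outdeg E a) ∪
      X.filter (fun E => indeg E b = k1 ∧ outdeg E a = k2) := by
      intro E hE
      have hD := isDicore_iff.1 (mem_dicoresOver.1 hE).1
      have h3 := hD.2.2 a
      have h4 := hD.2.2 b
      simp only [mem_union, mem_filter, hE, true_and]
      omega
    have := (card_le_card hsub).trans ((card_union_le _ _).trans (Nat.add_le_add_right
      ((card_union_le _ _).trans (Nat.add_le_add_right (card_union_le _ _) _)) _))
    exact_mod_cast this
  have hup : ((dicoresOver k1 k2 m (F.erase (a, b))).card : ℝ) ≤ 2 * C1 / N * Y := by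
    have hm : (m : ℝ) + N ≤ N ^ 2 / 2 := by
      push_cast at hM
      nlinarith
    have h := card_dicoresOver_le_succ (k1 := k1) (k2 := k2) (F.erase (a, b)) hm
    have h' : (N ^ 2 / 2 : ℝ) * (dicoresOver k1 k2 m (F.erase (a, b))).card ≤
        N ^ 2 / 2 * (2 * C1 / N * Y) := by
      refine h.trans ?_
      have : ((m : ℝ) + 1) * Y ≤ (C1 * N) * Y := by
        push_cast at hM
        gcongr
      refine this.trans (le_of_eq ?_)
      field_simp
    exact le_of_mul_le_mul_left h' (by positivity)
  have t1 : ((X.filter (fun E => k1 < indeg E b ∧ k2 < outdeg E a)).card : ℝ) ≤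
      2 * C1 / N * Y := by
    refine le_trans ?_ hup
    exact_mod_cast card_filter_surplus_le he
  have t2 : ((X.filter (fun E => k1 < indeg E b ∧ outdeg E a = k2)).card : ℝ) ≤
      2 * k2 / N * Y := by
    have h := card_filter_outdeg_eq_le (k1 := k1) (k2 := k2) (M := m + 1) he
    have h' : (N / 2 : ℝ) * (X.filter (fun E => k1 < indeg E b ∧ outdeg E a = k2)).card ≤
        N / 2 * (2 * k2 / N * Y) := by
      refine le_trans (le_trans ?_ h) (le_of_eq ?_)
      · gcongr
        linarith
      · field_simp
        rfl
    exact le_of_mul_le_mul_left h' (by positivity)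
  have t3 : ((X.filter (fun E => indeg E b = k1 ∧ k2 < outdeg E a)).card : ℝ) ≤
      2 * k1 / N * Y := by
    have h := card_filter_indeg_eq_le (k1 := k1) (k2 := k2) (M := m + 1) he
    have h' : (N / 2 : ℝ) * (X.filter (fun E => indeg E b = k1 ∧ k2 < outdeg E a)).card ≤
        N / 2 * (2 * k1 / N * Y) := by
      refine le_trans (le_trans ?_ h) (le_of_eq ?_)
      · gcongr
        linarith
      · field_simp
        rfl
    exact le_of_mul_le_mul_left h' (by positivity)
  have t4 : ((X.filter (fun E => indeg E b = k1 ∧ outdeg E a = k2)).card : ℝ) ≤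
      4 * (k1 * k2) * Cd / N * Y := by
    have h := card_filter_tight_le (k1 := k1) (k2 := k2) (M := m + 1) he (by linarith)
    have hFe : ((F.erase (a, b)).card : ℝ) ≤ ε / 8 * N :=
      le_trans (by exact_mod_cast card_erase_le) hF
    have hd := card_dicoresOver_succ_le (k1 := k1) (k2 := k2) hε h1 h2 hM hFe (by linarith)
      (by exact_mod_cast hNpos)
    have h' : (N / 2 * (N / 2) : ℝ) *
        (X.filter (fun E => indeg E b = k1 ∧ outdeg E a = k2)).card ≤
        N / 2 * (N / 2) * (4 * (k1 * k2) * Cd / N * Y) := by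
      refine le_trans (le_trans ?_ h) ?_
      · gcongr
        · linarith
        · linarith
        · linarith
      · refine (mul_le_mul_of_nonneg_left hd (by positivity)).trans (le_of_eq ?_)
        rw [← hCd]
        field_simp
        simp only [Y]
        ring
    exact le_of_mul_le_mul_left h' (by positivity)
  refine hsplit.trans ((add_le_add (add_le_add (add_le_add t1 t2) t3) t4).trans ?_)
  have : (2 * C1 + 2 * k2 + 2 * k1 + 4 * (k1 * k2) * Cd + 1) / N * Y =
    2 * C1 / N * Y + 2 * k2 / N * Y + 2 * k1 / N * Y + 4 * (k1 * k2) * Cd / N * Y + 1 / N * Y := by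
    ring
  rw [this]
  have : 0 ≤ 1 / (N : ℝ) * Y := by positivity
  linarith

/-- A fixed set `F` of few edges is contained in a random dicore with probability at most
`(C / N) ^ |F|`. -/
lemma card_dicoresOver_le {k1 k2 : ℕ} {ε C1 : ℝ} (hε : 0 < ε) (hC1 : 0 < C1) :
    ∃ C : ℝ, 1 ≤ C ∧ ∃ N0 : ℕ, ∀ N M : ℕ, N0 ≤ N → (k1 + ε) * N ≤ M → (k2 + ε) * N ≤ M →
      (M : ℝ) ≤ C1 * N → ∀ (F : Finset (Fin N × Fin N)), (F.card : ℝ) ≤ ε / 8 * N →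
      ((dicoresOver k1 k2 M F).card : ℝ) ≤ (C / N) ^ F.card * (dicores k1 k2 N M).card := by
  obtain ⟨C, hC, N0, h⟩ := card_dicoresOver_le_erase (k1 := k1) (k2 := k2) hε hC1
  refine ⟨C, hC, N0, fun N M hN h1 h2 hM F => ?_⟩
  induction F using Finset.induction_on with
  | empty =>
    intro _
    simp only [card_empty, pow_zero, one_mul, dicoresOver]
    exact_mod_cast card_filter_le _ _
  | insert e F he ih =>
    intro hF
    have hF' : (F.card : ℝ) ≤ ε / 8 * N :=
      le_trans (by exact_mod_cast card_le_card (subset_insert e F)) hF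
    refine (h N M hN h1 h2 hM _ hF e (mem_insert_self _ _)).trans ?_
    rw [erase_insert he, card_insert_of_notMem he, pow_succ, mul_comm (_ ^ _), mul_assoc]
    exact mul_le_mul_of_nonneg_left (ih hF') (by positivity)

/-! ### Most dicores have many removable edges -/

open scoped Classical in
/-- The dicores with at most `i` removable edges. -/
noncomputable def fewSurplus (k1 k2 N M i : ℕ) : Finset (Finset (Fin N × Fin N)) :=
  (dicores k1 k2 N M).filter (fun E => (surplus k1 k2 E).card ≤ i)

lemma mem_fewSurplus {k1 k2 M i : ℕ} {E : Finset (Fin N × Fin N)} :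
    E ∈ fewSurplus k1 k2 N M i ↔ IsDicore k1 k2 N M E ∧ (surplus k1 k2 E).card ≤ i := by
  simp [fewSurplus, mem_dicores]

lemma card_fewSurplus_succ_le {k1 k2 M i : ℕ} {ε : ℝ} (hε : 0 < ε)
    (h1 : (k1 + ε) * N ≤ (M + 1 : ℕ)) (h2 : (k2 + ε) * N ≤ (M + 1 : ℕ))
    (hi : (i : ℝ) ≤ ε / 2 * N) (hN : (k2 * (k1 + 1) : ℝ) ≤ ε / 4 * N) :
    ε ^ 2 / 8 * N ^ 2 * (fewSurplus k1 k2 N (M + 1) i).card ≤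
      (M * N ^ 2 : ℝ) * (fewSurplus k1 k2 N M (i + (k1 + k2 + 3))).card := by
  refine card_mul_le_card_mul_of_moves _ _ (mergePairs k1 k2 ∅) merge
    (fun E => univ.filter (fun p => (p.2.1, p.1.2) ∈ E))
    (fun E p => insert p.1 (insert p.2 (E.erase (p.2.1, p.1.2)))) _ _ ?_ ?_ ?_
  · intro E hE
    rw [mem_fewSurplus] at hE
    refine le_card_mergePairs hε hE.1 h1 h2 ?_ hN
    have : ((surplus k1 k2 E).card : ℝ) ≤ i := by exact_mod_cast hE.2
    simp only [card_empty, Nat.cast_zero, add_zero]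
    linarith
  · intro E hE
    rw [mem_fewSurplus] at hE
    exact_mod_cast card_filter_merge_edge_le hE.1.1
  · intro E hE p hp
    rw [mem_fewSurplus] at hE
    refine ⟨mem_fewSurplus.2 ⟨isDicore_merge hE.1 hp, ?_⟩, ?_, unmerge hp⟩
    · exact card_surplus_merge_le.trans (by omega)
    · simpa using mem_merge

lemma card_fewSurplus_le_succ {k1 k2 M i : ℕ} (hN : (M : ℝ) + N ≤ N ^ 2 / 2) :
    (N ^ 2 / 2 : ℝ) * (fewSurplus k1 k2 N M i).card ≤
      (i + (k1 + k2 + 3) : ℕ) * (fewSurplus k1 k2 N (M + 1) (i + (k1 + k2 + 3))).card := by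
  refine card_mul_le_card_mul_of_moves _ _ nonEdges (fun E e => insert e E) (surplus k1 k2)
    (fun E e => E.erase e) _ _ ?_ ?_ ?_
  · intro E hE
    exact le_card_nonEdges (mem_fewSurplus.1 hE).1 hN
  · intro E hE
    exact_mod_cast (mem_fewSurplus.1 hE).2
  · intro E hE e he
    rw [mem_fewSurplus] at hE
    refine ⟨mem_fewSurplus.2 ⟨isDicore_insert hE.1 he, ?_⟩, mem_surplus_insert hE.1 he,
      erase_insert (mem_nonEdges.1 he).2⟩
    exact (card_surplus_insert_le _ _ _ _).trans (by omega)

lemma card_fewSurplus_le_half {k1 k2 : ℕ} {ε C1 : ℝ} (hε : 0 < ε) (hC1 : 0 < C1) :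
    ∃ η : ℝ, 0 < η ∧ ∃ N0 : ℕ, ∀ N M : ℕ, N0 ≤ N → (k1 + ε) * N ≤ M → (k2 + ε) * N ≤ M →
      (M : ℝ) ≤ C1 * N → ∀ i : ℕ, (i + 2 * (k1 + k2 + 3) : ℝ) ≤ η * N →
      ((fewSurplus k1 k2 N M i).card : ℝ) ≤
        1 / 2 * (fewSurplus k1 k2 N M (i + 2 * (k1 + k2 + 3))).card := by
  refine ⟨min (ε / 2) (ε ^ 2 / (32 * C1)), by positivity, ?_⟩
  obtain ⟨N0, hN0⟩ := exists_nat_ge (max (2 * (C1 + 1)) (k2 * (k1 + 1) / (ε / 4)))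
  refine ⟨N0 + 1, fun N M hN h1 h2 hM i hi => ?_⟩
  have hNN : (N0 : ℝ) + 1 ≤ N := by exact_mod_cast hN
  have hbig := hN0.trans (by linarith : (N0 : ℝ) ≤ N)
  rw [max_le_iff] at hbig
  obtain ⟨hb1, hb3⟩ := hbig
  rw [div_le_iff₀ (by positivity)] at hb3
  have hNpos : (0 : ℝ) < N := by
    have : (0 : ℝ) ≤ N0 := Nat.cast_nonneg _
    linarith
  have hMpos : (0 : ℝ) < M := lt_of_lt_of_le (by positivity) h1
  obtain ⟨m, rfl⟩ : ∃ m, M = m + 1 := ⟨M - 1, by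
    have : 0 < M := by exact_mod_cast hMpos
    omega⟩
  have hm : (m : ℝ) ≤ C1 * N := by push_cast at hM; linarith
  set κ := k1 + k2 + 3 with hκ
  have hκ' : (k1 + k2 + 3 : ℝ) = (κ : ℝ) := by rw [hκ]; push_cast; ring
  rw [hκ'] at hi
  have hi1 : (i + 2 * κ : ℝ) ≤ ε / 2 * N := hi.trans (by gcongr; exact min_le_left _ _)
  have hi2 : (i + 2 * κ : ℝ) ≤ ε ^ 2 / (32 * C1) * N := hi.trans (by gcongr; exact min_le_right _ _)
  have hκ0 : (0 : ℝ) ≤ κ := Nat.cast_nonneg _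
  have e1 := card_fewSurplus_succ_le (k1 := k1) (k2 := k2) (i := i) hε h1 h2 (by linarith)
    (by linarith)
  have e2 := card_fewSurplus_le_succ (k1 := k1) (k2 := k2) (M := m) (i := i + κ) (N := N)
    (by nlinarith)
  rw [← hκ] at e1 e2
  have e3 : i + κ + κ = i + 2 * κ := by ring
  rw [e3] at e2
  set x : ℝ := ((fewSurplus k1 k2 N (m + 1) i).card : ℝ)
  set y : ℝ := ((fewSurplus k1 k2 N m (i + κ)).card : ℝ)
  set z : ℝ := ((fewSurplus k1 k2 N (m + 1) (i + 2 * κ)).card : ℝ)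
  have hz : 0 ≤ z := Nat.cast_nonneg _
  have hy : 0 ≤ y := Nat.cast_nonneg _
  push_cast at e2
  have f1 : y * (N ^ 2 / 2) ≤ ε ^ 2 / (32 * C1) * N * z := by
    have : ((i : ℝ) + 2 * κ) * z ≤ ε ^ 2 / (32 * C1) * N * z := by gcongr
    linarith
  have f2 : ε ^ 2 / 8 * N ^ 2 * x ≤ C1 * N * N ^ 2 * y := by
    refine e1.trans ?_
    gcongr
  have f3 : ε ^ 2 / 8 * N ^ 2 * x ≤ ε ^ 2 / 8 * N ^ 2 * (1 / 2 * z) := by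
    refine f2.trans ?_
    have : C1 * N * N ^ 2 * y = 2 * C1 * N * (y * (N ^ 2 / 2)) := by ring
    rw [this]
    refine (mul_le_mul_of_nonneg_left f1 (by positivity)).trans (le_of_eq ?_)
    field_simp
    ring
  exact le_of_mul_le_mul_left f3 (by positivity)

/-- Dicores with fewer than `η N` removable edges are rare. -/
lemma card_fewSurplus_le {k1 k2 : ℕ} {ε C1 : ℝ} (hε : 0 < ε) (hC1 : 0 < C1) :
    ∃ η : ℝ, 0 < η ∧ ∃ N0 : ℕ, ∀ N M : ℕ, N0 ≤ N → (k1 + ε) * N ≤ M → (k2 + ε) * N ≤ M →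
      (M : ℝ) ≤ C1 * N →
      (((dicores k1 k2 N M).filter (fun E => ((surplus k1 k2 E).card : ℝ) < η * N)).card : ℝ) ≤
        (1 / 2) ^ Nat.sqrt N * (dicores k1 k2 N M).card := by
  obtain ⟨η, hη, N0, h⟩ := card_fewSurplus_le_half (k1 := k1) (k2 := k2) hε hC1
  set κ := k1 + k2 + 3 with hκ
  have hκ' : (k1 + k2 + 3 : ℝ) = (κ : ℝ) := by rw [hκ]; push_cast; ring
  obtain ⟨N1, hN1⟩ := exists_nat_ge ((2 * κ / (η / 2)) ^ 2)
  refine ⟨η / 2, by positivity, max N0 N1, fun N M hN h1 h2 hM => ?_⟩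
  have hiter : ∀ t i : ℕ, (i + t * (2 * κ) : ℝ) ≤ η * N →
      ((fewSurplus k1 k2 N M i).card : ℝ) ≤ (1 / 2) ^ t * (dicores k1 k2 N M).card := by
    intro t
    induction t with
    | zero =>
      intro i _
      simp only [pow_zero, one_mul]
      exact_mod_cast card_filter_le _ _
    | succ t ih =>
      intro i hi
      push_cast at hi
      have hκ0 : (0 : ℝ) ≤ t * (2 * κ) := by positivity
      refine (h N M (le_of_max_le_left hN) h1 h2 hM i (by rw [hκ']; linarith)).trans ?_
      rw [pow_succ, mul_comm (_ ^ t), mul_assoc]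
      refine mul_le_mul_of_nonneg_left (ih _ ?_) (by norm_num)
      push_cast
      rw [← hκ'] at *
      linarith
  have hN1' : (2 * κ / (η / 2)) ^ 2 ≤ (N : ℝ) :=
    hN1.trans (by exact_mod_cast le_of_max_le_right hN)
  have hs1 : (Nat.sqrt N : ℝ) ^ 2 ≤ N := by exact_mod_cast Nat.sqrt_le' N
  have hs : (Nat.sqrt N : ℝ) * (2 * κ) ≤ η / 2 * N := by
    have hs2 : (Nat.sqrt N : ℝ) ≤ Real.sqrt N := Real.nat_sqrt_le_real_sqrt
    have hs3 : 2 * κ / (η / 2) ≤ Real.sqrt N := Real.le_sqrt_of_sq_le hN1'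
    rw [div_le_iff₀ (by positivity)] at hs3
    have : (Nat.sqrt N : ℝ) * (2 * κ) ≤ Real.sqrt N * (Real.sqrt N * (η / 2)) := by gcongr
    refine this.trans (le_of_eq ?_)
    rw [← mul_assoc, Real.mul_self_sqrt (Nat.cast_nonneg _)]
    ring
  refine le_trans ?_ (hiter (Nat.sqrt N) ⌊η / 2 * N⌋₊ ?_)
  · have hsub : (dicores k1 k2 N M).filter (fun E => ((surplus k1 k2 E).card : ℝ) < η / 2 * N) ⊆
        fewSurplus k1 k2 N M ⌊η / 2 * N⌋₊ := by
      intro E hE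
      rw [mem_filter, mem_dicores] at hE
      rw [mem_fewSurplus]
      exact ⟨hE.1, Nat.le_floor hE.2.le⟩
    exact_mod_cast card_le_card hsub
  · have := Nat.floor_le (by positivity : 0 ≤ η / 2 * (N : ℝ))
    linarith

/-! ### Small sets expand -/

/-- The edges that leave `W` and do not end in `T`. -/
def boundary (E : Finset (Fin N × Fin N)) (T W : Finset (Fin N)) : Finset (Fin N × Fin N) :=
  E.filter (fun e => e.1 ∈ W ∧ e.2 ∉ W ∧ e.2 ∉ T)

/-- Every nonempty set of at most `δ N` vertices has many out-edges, even after deleting fewer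
than `k` vertices. -/
def Expands (k : ℕ) (δ : ℝ) (E : Finset (Fin N × Fin N)) : Prop :=
  ∀ T W : Finset (Fin N), T.card < k → W.Nonempty → (W.card : ℝ) ≤ δ * N →
    (W.card - 2) / 2 < (boundary E T W).card

lemma Expands.mono {k : ℕ} {δ δ' : ℝ} {E : Finset (Fin N × Fin N)} (h : Expands k δ E)
    (hδ : δ' ≤ δ) : Expands k δ' E := fun T W hT hW hc =>
  h T W hT hW (hc.trans (by gcongr))

lemma sum_outdeg (E : Finset (Fin N × Fin N)) (W : Finset (Fin N)) :
    (E.filter (fun e => e.1 ∈ W)).card = ∑ v ∈ W, outdeg E v := by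
  rw [card_eq_sum_card_fiberwise (f := Prod.fst) (t := W)]
  · refine sum_congr rfl fun v hv => ?_
    unfold outdeg
    rw [filter_filter]
    congr 1
    ext e
    simp only [mem_filter]
    constructor
    · rintro ⟨h1, h2, h3⟩; exact ⟨h1, h3⟩
    · rintro ⟨h1, rfl⟩; exact ⟨h1, hv, rfl⟩
  · intro e he
    exact (mem_filter.1 he).2

lemma exists_dense_subset {k k1 k2 M : ℕ} {E : Finset (Fin N × Fin N)} {δ : ℝ} (hk : k ≤ k2)
    (hE : IsDicore k1 k2 N M E) (hexp : ¬ Expands k δ E) :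
    ∃ q : ℕ, ((q : ℝ) + 2 ≤ δ * N) ∧ ∃ T : Finset (Fin N), T.card < k ∧
      ∃ W : Finset (Fin N), W.card = q + 2 ∧
        ∃ F ⊆ W ×ˢ (W ∪ T), F.card = k * (q + 2) - q / 2 ∧ F ⊆ E := by
  simp only [Expands, not_forall, not_lt] at hexp
  obtain ⟨T, W, hT, hW, hWδ, hb⟩ := hexp
  rw [isDicore_iff] at hE
  have h1 : k * W.card ≤ (E.filter (fun e => e.1 ∈ W)).card := by
    rw [sum_outdeg, mul_comm, ← smul_eq_mul]
    exact card_nsmul_le_sum _ _ _ fun v _ => hk.trans (hE.2.2 v).2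
  set I := (E.filter (fun e => e.1 ∈ W)).filter (fun e => e.2 ∈ W ∪ T) with hI
  have h2 : (E.filter (fun e => e.1 ∈ W)).card ≤ I.card + (boundary E T W).card := by
    refine le_trans (card_le_card ?_) (card_union_le _ _)
    intro e he
    simp only [hI, boundary, mem_union, mem_filter] at he ⊢
    tauto
  have hIsub : I ⊆ W ×ˢ (W ∪ T) := by
    intro e he
    simp only [hI, mem_filter, mem_product] at he ⊢
    exact ⟨he.1.2, he.2⟩
  have hIE : I ⊆ E := (filter_subset _ _).trans (filter_subset _ _)
  have hpos := hW.card_pos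
  rcases Nat.lt_or_ge W.card 2 with h | h
  · exfalso
    have hone : W.card = 1 := by omega
    obtain ⟨v, rfl⟩ := card_eq_one.1 hone
    have h3 : I.card ≤ T.card := by
      refine card_le_card_of_injOn Prod.snd ?_ ?_
      · intro e he
        simp only [hI, coe_filter, mem_filter, mem_union, mem_singleton, Set.mem_ofPred_eq] at he
        have := hE.2.1 e he.1.1
        rcases he.2 with h4 | h4
        · exact absurd (he.1.2.trans h4.symm) this
        · exact h4
      · intro e he e' he' h4
        simp only [hI, coe_filter, mem_filter, mem_singleton, Set.mem_ofPred_eq] at he he'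
        exact Prod.ext (he.1.2.trans he'.1.2.symm) h4
    rw [hone] at hb h1
    omega
  · obtain ⟨q, hq⟩ : ∃ q, W.card = q + 2 := ⟨W.card - 2, by omega⟩
    rw [hq] at hb h1 hWδ
    push_cast at hWδ
    have h3 : k * (q + 2) - q / 2 ≤ I.card := by omega
    obtain ⟨F, hF, hFc⟩ := exists_subset_card_eq h3
    exact ⟨q, hWδ, T, hT, W, hq, F, hF.trans hIsub, hFc, hF.trans hIE⟩

lemma card_filter_card_lt_le {k : ℕ} (hN : 0 < N) :
    (univ.filter (fun T : Finset (Fin N) => T.card < k)).card ≤ k * N ^ (k - 1) := by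
  have hsub : univ.filter (fun T : Finset (Fin N) => T.card < k) ⊆
      (range k).biUnion (fun i => powersetCard i univ) := by
    intro T hT
    simp only [mem_filter, mem_univ, true_and] at hT
    simp only [mem_biUnion, mem_range, mem_powersetCard, subset_univ, true_and]
    exact ⟨_, hT, rfl⟩
  refine (card_le_card hsub).trans (card_biUnion_le.trans ?_)
  have : ∀ i ∈ range k, (powersetCard i (univ : Finset (Fin N))).card ≤ N ^ (k - 1) := by
    intro i hi
    rw [card_powersetCard, card_univ, Fintype.card_fin]
    refine (Nat.choose_le_pow N i).trans (Nat.pow_le_pow_right hN ?_)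
    have := mem_range.1 hi
    omega
  simpa using sum_le_card_nsmul _ _ _ this

lemma card_biUnion_le_mul {α β : Type*} [DecidableEq β] {s : Finset α} {t : α → Finset β} {b : ℝ}
    (h : ∀ x ∈ s, ((t x).card : ℝ) ≤ b) : ((s.biUnion t).card : ℝ) ≤ s.card * b := by
  calc ((s.biUnion t).card : ℝ) ≤ ∑ x ∈ s, ((t x).card : ℝ) := by
        exact_mod_cast card_biUnion_le
    _ ≤ s.card * b := by
        rw [← nsmul_eq_mul]
        exact sum_le_card_nsmul _ _ _ h

lemma pow_div_factorial_le_div_pow (x : ℝ) {n : ℕ} (hx : 0 ≤ x) (hn : 0 < n) :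
    x ^ n / n.factorial ≤ (x / n) ^ n * Real.exp 1 ^ n := by
  have hn' : (0 : ℝ) < n := by exact_mod_cast hn
  have h := Real.pow_div_factorial_le_exp (n : ℝ) hn'.le n
  have h2 : x ^ n / n.factorial = (x / n) ^ n * ((n : ℝ) ^ n / n.factorial) := by
    rw [div_pow]
    field_simp
  rw [h2, ← Real.exp_nat_mul, mul_one]
  gcongr

lemma choose_mul_choose_le {k s f : ℕ} {C : ℝ} (hs : 0 < s) (hk : 1 ≤ k) (hsf : s ≤ f)
    (hfk : f ≤ k * s) (hN : 0 < N) (hC : 1 ≤ C) :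
    (N.choose s : ℝ) * ((k * s * s).choose f : ℝ) * (C / N) ^ f ≤
      (Real.exp 1 * (Real.exp 1 * k * C) ^ k) ^ s * (s / N : ℝ) ^ (f - s) := by
  have hs' : (0 : ℝ) < s := by exact_mod_cast hs
  have hf : 0 < f := by omega
  have hf' : (0 : ℝ) < f := by exact_mod_cast hf
  have hN' : (0 : ℝ) < N := by exact_mod_cast hN
  have hk' : (1 : ℝ) ≤ k := by exact_mod_cast hk
  have hsf' : (s : ℝ) ≤ f := by exact_mod_cast hsf
  have he : (1 : ℝ) ≤ Real.exp 1 := Real.one_le_exp zero_le_one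
  have h1 : (N.choose s : ℝ) ≤ (N / s : ℝ) ^ s * Real.exp 1 ^ s :=
    (Nat.choose_le_pow_div s N).trans (pow_div_factorial_le_div_pow _ hN'.le hs)
  have h2 : ((k * s * s).choose f : ℝ) ≤ (k * s : ℝ) ^ f * Real.exp 1 ^ f := by
    refine (Nat.choose_le_pow_div f _).trans ?_
    refine (pow_div_factorial_le_div_pow _ (Nat.cast_nonneg _) hf).trans ?_
    gcongr
    rw [div_le_iff₀ hf']
    push_cast
    gcongr
  have hbase : (1 : ℝ) ≤ Real.exp 1 * k * C := by
    have : (1 : ℝ) ≤ Real.exp 1 * k := one_le_mul_of_one_le_of_one_le he hk'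
    exact one_le_mul_of_one_le_of_one_le this hC
  calc (N.choose s : ℝ) * ((k * s * s).choose f : ℝ) * (C / N) ^ f
      ≤ ((N / s : ℝ) ^ s * Real.exp 1 ^ s) * ((k * s : ℝ) ^ f * Real.exp 1 ^ f) * (C / N) ^ f := by
        gcongr
    _ = Real.exp 1 ^ s * (Real.exp 1 * k * C) ^ f * ((N / s : ℝ) ^ s * (s / N : ℝ) ^ f) := by
        rw [mul_pow, mul_pow, mul_pow, div_pow (C : ℝ), div_pow (s : ℝ) (N : ℝ) f]
        ring
    _ = Real.exp 1 ^ s * (Real.exp 1 * k * C) ^ f * (s / N : ℝ) ^ (f - s) := by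
        congr 1
        have : (s / N : ℝ) ^ f = (s / N : ℝ) ^ s * (s / N : ℝ) ^ (f - s) := by
          rw [← pow_add]; congr 1; omega
        rw [this, ← mul_assoc, ← mul_pow]
        have : (N / s : ℝ) * (s / N) = 1 := by field_simp
        rw [this, one_pow, one_mul]
    _ ≤ Real.exp 1 ^ s * (Real.exp 1 * k * C) ^ (k * s) * (s / N : ℝ) ^ (f - s) := by
        gcongr
    _ = _ := by rw [pow_mul, ← mul_pow]

lemma dense_term_le {k q : ℕ} {B γ : ℝ} (hk : 2 ≤ k) (hN : 0 < N) (hγ : 0 < γ)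
    (hγ1 : γ ≤ 1) (hBγ : B * γ = 1 / 2) (hq : (q : ℝ) + 2 ≤ γ ^ 2 * N) :
    (k * N ^ (k - 1) : ℝ) *
        (B ^ (q + 2) * (((q + 2 : ℕ) : ℝ) / N) ^ (k * (q + 2) - q / 2 - (q + 2))) ≤
      k * B ^ 2 / N ^ (k - 1) * (((q + 2 : ℕ) : ℝ) ^ (2 * (k - 1)) * (1 / 2) ^ q) := by
  have hN' : (0 : ℝ) < N := by exact_mod_cast hN
  obtain ⟨j, rfl⟩ : ∃ j, k = j + 2 := ⟨k - 2, by omega⟩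
  have hB : 0 < B := by
    by_contra h
    push Not at h
    nlinarith [mul_nonneg (neg_nonneg.2 h) hγ.le]
  obtain ⟨g, hg, hgq⟩ : ∃ g, (j + 2) * (q + 2) - q / 2 - (q + 2) = 2 * (j + 1) + g ∧ q ≤ 2 * g := by
    have h1 : (j + 2) * (q + 2) = j * q + 2 * j + 2 * q + 4 := by ring
    exact ⟨j * q + q - q / 2, by omega, by omega⟩
  have hx : ((q + 2 : ℕ) : ℝ) / N ≤ γ ^ 2 := by
    rw [div_le_iff₀ hN']
    push_cast
    exact hq
  have hxg : (((q + 2 : ℕ) : ℝ) / N) ^ g ≤ γ ^ q := by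
    calc (((q + 2 : ℕ) : ℝ) / N) ^ g ≤ (γ ^ 2) ^ g := by gcongr
      _ = γ ^ (2 * g) := by rw [pow_mul]
      _ ≤ γ ^ q := pow_le_pow_of_le_one hγ.le hγ1 hgq
  have e1 : j + 2 - 1 = j + 1 := by omega
  rw [hg, e1, pow_add (((q + 2 : ℕ) : ℝ) / N)]
  calc (((j + 2 : ℕ) : ℝ) * N ^ (j + 1)) * (B ^ (q + 2) *
        ((((q + 2 : ℕ) : ℝ) / N) ^ (2 * (j + 1)) * (((q + 2 : ℕ) : ℝ) / N) ^ g))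
      ≤ (((j + 2 : ℕ) : ℝ) * N ^ (j + 1)) * (B ^ (q + 2) *
        ((((q + 2 : ℕ) : ℝ) / N) ^ (2 * (j + 1)) * γ ^ q)) := by gcongr
    _ = _ := by
      rw [← hBγ, mul_pow B γ q, div_pow, pow_add B q 2]
      have : (N : ℝ) ^ (2 * (j + 1)) = N ^ (j + 1) * N ^ (j + 1) := by rw [← pow_add]; congr 1; ring
      rw [this]
      field_simp

/-- Dicores in which some small set does not expand are rare. -/
lemma card_not_expands_le {k k1 k2 : ℕ} {ε C1 : ℝ} (hε : 0 < ε) (hC1 : 0 < C1) (hk : 2 ≤ k)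
    (hkk : k ≤ k2) :
    ∃ δ : ℝ, 0 < δ ∧ ∃ K : ℝ, 0 < K ∧ ∃ N0 : ℕ, ∀ N M : ℕ, N0 ≤ N → (k1 + ε) * N ≤ M →
      (k2 + ε) * N ≤ M → (M : ℝ) ≤ C1 * N → ∀ B : Finset (Finset (Fin N × Fin N)),
      (∀ E ∈ B, IsDicore k1 k2 N M E ∧ ¬ Expands k δ E) →
      (B.card : ℝ) ≤ K / N ^ (k - 1) * (dicores k1 k2 N M).card := by
  obtain ⟨C, hC, N0, hP⟩ := card_dicoresOver_le (k1 := k1) (k2 := k2) hε hC1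
  have hk' : (2 : ℝ) ≤ k := by exact_mod_cast hk
  set B : ℝ := Real.exp 1 * (Real.exp 1 * k * C) ^ k with hBdef
  have he : (1 : ℝ) ≤ Real.exp 1 := Real.one_le_exp zero_le_one
  have hbase : (1 : ℝ) ≤ Real.exp 1 * k * C := by
    have : (1 : ℝ) ≤ Real.exp 1 * k := one_le_mul_of_one_le_of_one_le he (by linarith)
    exact one_le_mul_of_one_le_of_one_le this hC
  have hB1 : 1 ≤ B := one_le_mul_of_one_le_of_one_le he (one_le_pow₀ hbase)
  have hBpos : 0 < B := by linarith
  set γ : ℝ := 1 / (2 * B) with hγdef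
  have hγ : 0 < γ := by positivity
  have hγ1 : γ ≤ 1 := by
    rw [hγdef, div_le_one (by positivity)]; linarith
  have hBγ : B * γ = 1 / 2 := by rw [hγdef]; field_simp
  set a : ℕ → ℝ := fun q => ((q + 2 : ℕ) : ℝ) ^ (2 * (k - 1)) * (1 / 2) ^ q with ha
  have hsum : Summable a := by
    have h1 : Summable (fun n : ℕ => (n : ℝ) ^ (2 * (k - 1)) * (1 / 2 : ℝ) ^ n) :=
      summable_pow_mul_geometric_of_norm_lt_one _ (by norm_num)
    have h2 := ((summable_nat_add_iff 2).2 h1).mul_left 4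
    refine h2.congr fun q => ?_
    simp only [ha]
    rw [pow_add (1 / 2 : ℝ) q 2]
    ring
  have ha0 : ∀ q, 0 ≤ a q := fun q => by positivity
  refine ⟨min (γ ^ 2) (ε / (8 * k)), by positivity, k * B ^ 2 * (∑' q, a q) + 1, by
    have : 0 ≤ ∑' q, a q := tsum_nonneg ha0
    positivity, N0 + 1, fun N M hN h1 h2 hM Bad hBad => ?_⟩
  set δ : ℝ := min (γ ^ 2) (ε / (8 * k)) with hδ
  have hN0 : 0 < N := by omega
  have hN' : (0 : ℝ) < N := by exact_mod_cast hN0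
  set D : ℝ := ((dicores k1 k2 N M).card : ℝ) with hD
  have hD0 : 0 ≤ D := Nat.cast_nonneg _
  classical
  set Q := (range (N + 1)).filter (fun q : ℕ => (q : ℝ) + 2 ≤ δ * N) with hQ
  have hδ1 : δ ≤ 1 := (min_le_left _ _).trans (pow_le_one₀ hγ.le hγ1)
  set TT := univ.filter (fun T : Finset (Fin N) => T.card < k) with hTT
  have hsub : Bad ⊆ Q.biUnion fun q => TT.biUnion fun T =>
      (powersetCard (q + 2) (univ : Finset (Fin N))).biUnion fun W =>
        (powersetCard (k * (q + 2) - q / 2) (W ×ˢ (W ∪ T))).biUnion fun F =>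
          dicoresOver k1 k2 M F := by
    intro E hE
    obtain ⟨q, hq, T, hT, W, hW, F, hFW, hFc, hFE⟩ :=
      exists_dense_subset hkk (hBad E hE).1 (hBad E hE).2
    simp only [mem_biUnion]
    refine ⟨q, ?_, T, by simpa [hTT] using hT, W, by simpa [mem_powersetCard] using hW, F,
      mem_powersetCard.2 ⟨hFW, hFc⟩, mem_dicoresOver.2 ⟨(hBad E hE).1, hFE⟩⟩
    rw [hQ, mem_filter, mem_range]
    refine ⟨?_, hq⟩
    have : (q : ℝ) < (N : ℝ) + 1 := by nlinarith
    exact_mod_cast this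
  have hterm : ∀ q ∈ Q, ((TT.biUnion fun T =>
      (powersetCard (q + 2) (univ : Finset (Fin N))).biUnion fun W =>
        (powersetCard (k * (q + 2) - q / 2) (W ×ˢ (W ∪ T))).biUnion fun F =>
          dicoresOver k1 k2 M F).card : ℝ) ≤ k * B ^ 2 / N ^ (k - 1) * a q * D := by
    intro q hq
    rw [hQ, mem_filter] at hq
    have hq2 := hq.2
    set f := k * (q + 2) - q / 2 with hf
    have hkq : k * (q + 2) = (k - 2) * (q + 2) + 2 * (q + 2) := by
      rw [← add_mul]; congr 1; omega
    have hsf : q + 2 ≤ f := by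
      have := Nat.zero_le ((k - 2) * (q + 2))
      omega
    have hfk : f ≤ k * (q + 2) := Nat.sub_le _ _
    have hfε : (f : ℝ) ≤ ε / 8 * N := by
      have e1 : (f : ℝ) ≤ k * (q + 2) := by exact_mod_cast hfk
      have e2 : (q : ℝ) + 2 ≤ ε / (8 * k) * N := hq2.trans (by gcongr; exact min_le_right _ _)
      have e3 : (k : ℝ) * (q + 2) ≤ k * (ε / (8 * k) * N) := by gcongr
      have e4 : (k : ℝ) * (ε / (8 * k) * N) = ε / 8 * N := by field_simp
      linarith
    have hF : ∀ T ∈ TT, ∀ W ∈ powersetCard (q + 2) (univ : Finset (Fin N)),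
        (((powersetCard f (W ×ˢ (W ∪ T))).biUnion fun F =>
          dicoresOver k1 k2 M F).card : ℝ) ≤
          ((k * (q + 2) * (q + 2)).choose f : ℝ) * ((C / N) ^ f * D) := by
      intro T hT W hW
      have hWc : W.card = q + 2 := (mem_powersetCard.1 hW).2
      have hTc : T.card < k := by simpa [hTT] using hT
      have h3 : (((powersetCard f (W ×ˢ (W ∪ T))).biUnion fun F =>
          dicoresOver k1 k2 M F).card : ℝ) ≤
          (powersetCard f (W ×ˢ (W ∪ T))).card * ((C / N) ^ f * D) := by
        refine card_biUnion_le_mul fun F hF => ?_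
        have hFc := (mem_powersetCard.1 hF).2
        have := hP N M (by omega) h1 h2 hM F (by rw [hFc]; exact hfε)
        rwa [hFc] at this
      refine h3.trans ?_
      gcongr
      rw [card_powersetCard, card_product, hWc]
      refine Nat.choose_le_choose _ ?_
      have h4 := card_union_le W T
      rw [hWc] at h4
      have h5 : (W ∪ T).card ≤ k * (q + 2) := by
        have : k - 2 ≤ (k - 2) * (q + 2) := Nat.le_mul_of_pos_right _ (by omega)
        omega
      calc (q + 2) * (W ∪ T).card ≤ (q + 2) * (k * (q + 2)) := Nat.mul_le_mul_left _ h5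
        _ = _ := by ring
    have hW : ∀ T ∈ TT, ((((powersetCard (q + 2) (univ : Finset (Fin N))).biUnion fun W =>
        (powersetCard f (W ×ˢ (W ∪ T))).biUnion fun F => dicoresOver k1 k2 M F).card : ℕ) : ℝ) ≤
        (N.choose (q + 2) : ℝ) *
          (((k * (q + 2) * (q + 2)).choose f : ℝ) * ((C / N) ^ f * D)) := by
      intro T hT
      refine (card_biUnion_le_mul (hF T hT)).trans (le_of_eq ?_)
      rw [card_powersetCard, card_univ, Fintype.card_fin]
    have hTsum : (((TT.biUnion fun T =>
        (powersetCard (q + 2) (univ : Finset (Fin N))).biUnion fun W =>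
        (powersetCard f (W ×ˢ (W ∪ T))).biUnion fun F => dicoresOver k1 k2 M F).card : ℕ) : ℝ) ≤
        (k * N ^ (k - 1) : ℝ) * ((N.choose (q + 2) : ℝ) *
          (((k * (q + 2) * (q + 2)).choose f : ℝ) * ((C / N) ^ f * D))) := by
      refine (card_biUnion_le_mul hW).trans ?_
      gcongr
      exact_mod_cast card_filter_card_lt_le hN0
    refine hTsum.trans ?_
    have h6 := choose_mul_choose_le (N := N) (k := k) (s := q + 2) (f := f) (C := C) (by omega)
      (by omega) hsf hfk hN0 hC
    have h7 := dense_term_le (N := N) (k := k) (q := q) (B := B) (γ := γ) hk hN0 hγ hγ1 hBγ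
      (hq2.trans (by gcongr; exact min_le_left _ _))
    calc (k * N ^ (k - 1) : ℝ) * ((N.choose (q + 2) : ℝ) *
          (((k * (q + 2) * (q + 2)).choose f : ℝ) * ((C / N) ^ f * D)))
        = (k * N ^ (k - 1) : ℝ) * ((N.choose (q + 2) : ℝ) *
          ((k * (q + 2) * (q + 2)).choose f : ℝ) * (C / N) ^ f) * D := by ring
      _ ≤ (k * N ^ (k - 1) : ℝ) * (B ^ (q + 2) * (((q + 2 : ℕ) : ℝ) / N) ^ (f - (q + 2))) * D := by
        gcongr
      _ ≤ k * B ^ 2 / N ^ (k - 1) * a q * D := by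
        gcongr
  calc (Bad.card : ℝ) ≤ ∑ q ∈ Q, ((TT.biUnion fun T =>
      (powersetCard (q + 2) (univ : Finset (Fin N))).biUnion fun W =>
        (powersetCard (k * (q + 2) - q / 2) (W ×ˢ (W ∪ T))).biUnion fun F =>
          dicoresOver k1 k2 M F).card : ℝ) := by
        exact_mod_cast (card_le_card hsub).trans card_biUnion_le
    _ ≤ ∑ q ∈ Q, k * B ^ 2 / N ^ (k - 1) * a q * D := sum_le_sum hterm
    _ = k * B ^ 2 / N ^ (k - 1) * (∑ q ∈ Q, a q) * D := by
      rw [mul_sum, sum_mul]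
    _ ≤ k * B ^ 2 / N ^ (k - 1) * (∑' q, a q) * D := by
      gcongr
      exact hsum.sum_le_tsum _ (fun q _ => ha0 q)
    _ = (k * B ^ 2 * (∑' q, a q)) / N ^ (k - 1) * D := by ring
    _ ≤ _ := by
      gcongr
      linarith

/-! ### Reachability and reversal -/

open scoped Classical in
/-- The vertices that can be reached from `u` along edges of `E` avoiding `T`. -/
noncomputable def reachSet (E : Finset (Fin N × Fin N)) (T : Finset (Fin N)) (u : Fin N) :
    Finset (Fin N) :=
  univ.filter (fun w => Relation.ReflTransGen (fun a b => a ∉ T ∧ b ∉ T ∧ (a, b) ∈ E) u w)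

lemma mem_reachSet {E : Finset (Fin N × Fin N)} {T : Finset (Fin N)} {u w : Fin N} :
    w ∈ reachSet E T u ↔
      Relation.ReflTransGen (fun a b => a ∉ T ∧ b ∉ T ∧ (a, b) ∈ E) u w := by
  simp [reachSet]

lemma self_mem_reachSet (E : Finset (Fin N × Fin N)) (T : Finset (Fin N)) (u : Fin N) :
    u ∈ reachSet E T u := mem_reachSet.2 Relation.ReflTransGen.refl

lemma notMem_of_mem_reachSet {E : Finset (Fin N × Fin N)} {T : Finset (Fin N)} {u w : Fin N}
    (hu : u ∉ T) (hw : w ∈ reachSet E T u) : w ∉ T := by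
  rw [mem_reachSet] at hw
  rcases Relation.ReflTransGen.cases_tail hw with rfl | ⟨c, _, hc⟩
  · exact hu
  · exact hc.2.1

lemma mem_reachSet_of_edge {E : Finset (Fin N × Fin N)} {T : Finset (Fin N)} {u a b : Fin N}
    (hu : u ∉ T) (ha : a ∈ reachSet E T u) (hb : b ∉ T) (hab : (a, b) ∈ E) :
    b ∈ reachSet E T u :=
  mem_reachSet.2 ((mem_reachSet.1 ha).tail ⟨notMem_of_mem_reachSet hu ha, hb, hab⟩)

lemma boundary_reachSet {E : Finset (Fin N × Fin N)} {T : Finset (Fin N)} {u : Fin N}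
    (hu : u ∉ T) : boundary E T (reachSet E T u) = ∅ := by
  refine filter_eq_empty_iff.2 fun e he h => h.2.1 ?_
  exact mem_reachSet_of_edge hu h.1 h.2.2 he

lemma reachSet_subset {E E' : Finset (Fin N × Fin N)} {T : Finset (Fin N)} {u w : Fin N}
    (hE : E' ⊆ E) (hw : w ∈ reachSet E T u) : reachSet E' T w ⊆ reachSet E T u := by
  intro x hx
  rw [mem_reachSet] at hw hx ⊢
  exact hw.trans (Relation.ReflTransGen.mono (fun a b h => ⟨h.1, h.2.1, hE h.2.2⟩) _ _ hx)

/-- The digraph with all edges reversed. -/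
def reverse (E : Finset (Fin N × Fin N)) : Finset (Fin N × Fin N) := E.image Prod.swap

lemma mem_reverse {E : Finset (Fin N × Fin N)} {a b : Fin N} :
    (a, b) ∈ reverse E ↔ (b, a) ∈ E := by
  simp [reverse]

lemma reverse_reverse (E : Finset (Fin N × Fin N)) : reverse (reverse E) = E := by
  ext ⟨a, b⟩
  rw [mem_reverse, mem_reverse]

lemma card_reverse (E : Finset (Fin N × Fin N)) : (reverse E).card = E.card :=
  card_image_of_injective _ Prod.swap_injective

lemma indeg_reverse (E : Finset (Fin N × Fin N)) (v : Fin N) :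
    indeg (reverse E) v = outdeg E v := by
  rw [← card_filter_mk_mem_left, ← card_filter_mk_mem_right]
  simp only [mem_reverse]

lemma outdeg_reverse (E : Finset (Fin N × Fin N)) (v : Fin N) :
    outdeg (reverse E) v = indeg E v := by
  rw [← card_filter_mk_mem_left, ← card_filter_mk_mem_right]
  simp only [mem_reverse]

lemma isDicore_reverse {k1 k2 M : ℕ} {E : Finset (Fin N × Fin N)} (hE : IsDicore k1 k2 N M E) :
    IsDicore k2 k1 N M (reverse E) := by
  rw [isDicore_iff] at hE ⊢
  refine ⟨by rw [card_reverse, hE.1], ?_, fun v => ?_⟩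
  · rintro ⟨a, b⟩ h
    exact (hE.2.1 _ (mem_reverse.1 h)).symm
  · rw [indeg_reverse, outdeg_reverse]
    exact (hE.2.2 v).symm

lemma card_dicores_swap (k1 k2 N M : ℕ) :
    (dicores k1 k2 N M).card = (dicores k2 k1 N M).card := by
  refine card_bij' (fun E _ => reverse E) (fun E _ => reverse E) ?_ ?_ ?_ ?_
  · intro E hE; exact mem_dicores.2 (isDicore_reverse (mem_dicores.1 hE))
  · intro E hE; exact mem_dicores.2 (isDicore_reverse (mem_dicores.1 hE))
  · intro E _; exact reverse_reverse E
  · intro E _; exact reverse_reverse E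

lemma mem_reachSet_reverse {E : Finset (Fin N × Fin N)} {T : Finset (Fin N)} {u v : Fin N} :
    v ∈ reachSet (reverse E) T u ↔ u ∈ reachSet E T v := by
  rw [mem_reachSet, mem_reachSet, ← Relation.reflTransGen_swap]
  simp only [mem_reverse]
  constructor <;>
  · intro h
    exact Relation.ReflTransGen.mono (fun a b h => ⟨h.2.1, h.1, h.2.2⟩) _ _ h

lemma reverse_sdiff (E X : Finset (Fin N × Fin N)) :
    reverse (E \ X) = reverse E \ reverse X := by
  ext ⟨a, b⟩
  simp only [mem_sdiff, mem_reverse]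

/-! ### Removing a few edges leaves large reachable sets -/

lemma card_le_of_boundary_sdiff {k j : ℕ} {δ : ℝ} {E X : Finset (Fin N × Fin N)}
    {T W : Finset (Fin N)} (hexp : Expands k δ E) (hT : T.card < k) (hX : X.card ≤ j)
    (hW : (W.card : ℝ) ≤ δ * N) (hb : boundary (E \ X) T W = ∅) : W.card ≤ 2 * j + 1 := by
  rcases W.eq_empty_or_nonempty with rfl | hne
  · simp
  have h1 := hexp T W hT hne hW
  have h2 : boundary E T W ⊆ X := by
    intro e he
    by_contra hx
    have : e ∈ boundary (E \ X) T W := by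
      simp only [boundary, mem_filter, mem_sdiff] at he ⊢
      tauto
    simp [hb] at this
  have := card_le_card h2
  omega

lemma exists_large_reachSet {k j : ℕ} {δ : ℝ} {E X : Finset (Fin N × Fin N)}
    {T : Finset (Fin N)} {u : Fin N} (hexp : Expands k δ E) (hT : T.card < k) (hX : X.card ≤ j)
    (hu : u ∉ T) (hj : (4 * j + 2 : ℝ) ≤ δ * N) :
    ∃ w ∈ reachSet E T u, δ * N < (reachSet (E \ X) T w).card := by
  classical
  by_contra! hcon
  set S := reachSet E T u with hS
  have hSlarge : δ * N < S.card := by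
    by_contra! h
    have := hexp T S hT ⟨u, self_mem_reachSet E T u⟩ h
    rw [boundary_reachSet hu] at this
    simp at this
  obtain ⟨C, hC, hmax⟩ := exists_max_image
    (S.powerset.filter (fun C => (C.card : ℝ) ≤ δ * N ∧ boundary (E \ X) T C = ∅)) Finset.card
    ⟨∅, by
      simp only [mem_filter, mem_powerset, empty_subset, true_and, card_empty, Nat.cast_zero]
      refine ⟨by have : (0 : ℝ) ≤ j := Nat.cast_nonneg _
                 linarith, ?_⟩
      simp [boundary]⟩
  rw [mem_filter, mem_powerset] at hC
  obtain ⟨hCS, hCδ, hCb⟩ := hC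
  have hC1 := card_le_of_boundary_sdiff hexp hT hX hCδ hCb
  obtain ⟨w, hwS, hwC⟩ : ∃ w ∈ S, w ∉ C := by
    refine exists_mem_notMem_of_card_lt_card ?_
    exact_mod_cast hCδ.trans_lt hSlarge
  have hwT := notMem_of_mem_reachSet hu hwS
  have hA1 := card_le_of_boundary_sdiff hexp hT hX (hcon w hwS) (boundary_reachSet hwT)
  set A := reachSet (E \ X) T w with hA
  have hcard : (C ∪ A).card ≤ 4 * j + 2 := (card_union_le _ _).trans (by omega)
  have hmem : C ∪ A ∈ S.powerset.filter
      (fun C => (C.card : ℝ) ≤ δ * N ∧ boundary (E \ X) T C = ∅) := by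
    rw [mem_filter, mem_powerset]
    refine ⟨union_subset hCS (reachSet_subset sdiff_subset hwS), ?_, ?_⟩
    · refine le_trans ?_ hj
      exact_mod_cast hcard
    · have hAb : boundary (E \ X) T A = ∅ := boundary_reachSet hwT
      refine filter_eq_empty_iff.2 fun e he h => ?_
      have h1 := filter_eq_empty_iff.1 hCb he
      have h2 := filter_eq_empty_iff.1 hAb he
      simp only [mem_union] at h
      tauto
  have h3 := hmax _ hmem
  have h4 : C.card < (C ∪ A).card := by
    refine card_lt_card (ssubset_iff_of_subset subset_union_left |>.2 ⟨w, ?_, hwC⟩)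
    exact mem_union_right _ (self_mem_reachSet _ _ _)
  omega

/-- If `E` is not `k`-strongly connected but expands in both directions, then after deleting a
small set `X` of edges there are two large sets, determined by the remaining edges, such that no
edge of `X` goes from the first one to the second one. -/
lemma exists_large_pair {k j : ℕ} {δ : ℝ} {E X : Finset (Fin N × Fin N)}
    (hexp : Expands k δ E) (hexp' : Expands k δ (reverse E)) (hkN : k < N)
    (hE : ¬ KStronglyConnected k E) (hXE : X ⊆ E) (hX : X.card ≤ j)
    (hj : (4 * j + 2 : ℝ) ≤ δ * N) :
    ∃ T : Finset (Fin N), T.card < k ∧ ∃ u v : Fin N,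
      δ * N < (reachSet (E \ X) T u).card ∧ δ * N < (reachSet (reverse (E \ X)) T v).card ∧
      ∀ x ∈ X, ¬ (x.1 ∈ reachSet (E \ X) T u ∧ x.2 ∈ reachSet (reverse (E \ X)) T v) := by
  simp only [KStronglyConnected, hkN, true_and, not_forall] at hE
  obtain ⟨T, hT, u, v, hu, hv, hnot⟩ := hE
  rw [← mem_reachSet] at hnot
  obtain ⟨u', hu', hlu⟩ := exists_large_reachSet hexp hT hX hu hj
  obtain ⟨v', hv', hlv⟩ := exists_large_reachSet (X := reverse X) hexp' hT
    (by rw [card_reverse]; exact hX) hv hj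
  rw [← reverse_sdiff] at hlv
  refine ⟨T, hT, u', v', hlu, hlv, ?_⟩
  rintro ⟨a, b⟩ hx ⟨ha, hb⟩
  have ha' : a ∈ reachSet E T u := reachSet_subset sdiff_subset hu' ha
  have hb' : b ∈ reachSet (reverse E) T v := by
    refine reachSet_subset ?_ hv' hb
    rw [reverse_sdiff]
    exact sdiff_subset
  have hbT := notMem_of_mem_reachSet hv hb'
  have hbu : b ∈ reachSet E T u := mem_reachSet_of_edge hu ha' hbT (hXE hx)
  rw [mem_reachSet_reverse] at hb'
  exact hnot (reachSet_subset Subset.rfl hbu hb')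

/-! ### Removing and adding sets of edges -/

open scoped Classical in
/-- The sets of `j` edges whose removal leaves a dicore with `M` edges. -/
noncomputable def removable (k1 k2 M j : ℕ) (E : Finset (Fin N × Fin N)) :
    Finset (Finset (Fin N × Fin N)) :=
  (powersetCard j E).filter (fun X => IsDicore k1 k2 N M (E \ X))

lemma mem_removable {k1 k2 M j : ℕ} {E X : Finset (Fin N × Fin N)} :
    X ∈ removable k1 k2 M j E ↔ (X ⊆ E ∧ X.card = j) ∧ IsDicore k1 k2 N M (E \ X) := by
  simp [removable, mem_powersetCard]

lemma card_removable_le {k1 k2 M j : ℕ} {E : Finset (Fin N × Fin N)} :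
    ((removable k1 k2 M j E).card : ℝ) ≤ ((surplus k1 k2 E).card : ℝ) ^ j / j.factorial := by
  have h : removable k1 k2 M j E ⊆ powersetCard j (surplus k1 k2 E) := by
    intro X hX
    rw [mem_removable, isDicore_iff] at hX
    refine mem_powersetCard.2 ⟨fun e he => ?_, hX.1.2⟩
    have heE := hX.1.1 he
    have hsub : E \ X ⊆ E.erase e := fun x hx => by
      rw [mem_sdiff] at hx
      exact mem_erase.2 ⟨by rintro rfl; exact hx.2 he, hx.1⟩
    have h1 := indeg_erase heE e.2
    have h2 := outdeg_erase heE e.1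
    have h3 := indeg_mono hsub e.2
    have h4 := outdeg_mono hsub e.1
    have h5 := hX.2.2.2 e.2
    have h6 := hX.2.2.2 e.1
    rw [if_pos rfl] at h1 h2
    exact mem_surplus.2 ⟨heE, by omega, by omega⟩
  refine le_trans ?_ (Nat.choose_le_pow_div j _)
  rw [← card_powersetCard]
  exact_mod_cast card_le_card h

lemma card_removable_succ {k1 k2 M i : ℕ} {E : Finset (Fin N × Fin N)} :
    ((surplus k1 k2 E).card - i * (k1 + k2 + 3) : ℝ) * (removable k1 k2 (M + 1) i E).card ≤
      ((i + 1 : ℕ) : ℝ) * (removable k1 k2 M (i + 1) E).card := by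
  refine card_mul_le_card_mul_of_moves _ _ (fun X => surplus k1 k2 (E \ X)) (fun X e => insert e X)
    id (fun Y e => Y.erase e) _ _ ?_ ?_ ?_
  · intro X hX
    rw [mem_removable] at hX
    have h := card_surplus_le_sdiff k1 k2 E X
    rw [hX.1.2] at h
    have h' : ((surplus k1 k2 E).card : ℝ) ≤
      (surplus k1 k2 (E \ X)).card + i * (k1 + k2 + 3) := by exact_mod_cast h
    linarith
  · intro Y hY
    rw [id, (mem_removable.1 hY).1.2]
  · intro X hX e he
    rw [mem_removable] at hX
    have he' := mem_sdiff.1 (mem_surplus.1 he).1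
    refine ⟨mem_removable.2 ⟨⟨insert_subset he'.1 hX.1.1, ?_⟩, ?_⟩, mem_insert_self _ _,
      erase_insert he'.2⟩
    · rw [card_insert_of_notMem he'.2, hX.1.2]
    · rw [sdiff_insert]
      exact isDicore_erase hX.2 he

lemma pow_le_factorial_mul_card_removable {k1 k2 M j : ℕ} {E : Finset (Fin N × Fin N)}
    (hE : IsDicore k1 k2 N (M + j) E) {r : ℝ} (hr : 0 ≤ r)
    (hrE : r + j * (k1 + k2 + 3) ≤ ((surplus k1 k2 E).card : ℝ)) (i : ℕ) (hi : i ≤ j) :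
    r ^ i ≤ i.factorial * ((removable k1 k2 (M + (j - i)) i E).card : ℝ) := by
  induction i with
  | zero =>
    have : (∅ : Finset (Fin N × Fin N)) ∈ removable k1 k2 (M + (j - 0)) 0 E :=
      mem_removable.2 (by simpa using hE)
    have h2 : 1 ≤ (removable k1 k2 (M + (j - 0)) 0 E).card := card_pos.2 ⟨_, this⟩
    simpa using h2
  | succ i ih =>
    have ih := ih (by omega)
    have h := card_removable_succ (k1 := k1) (k2 := k2) (M := M + (j - (i + 1))) (i := i) (E := E)
    rw [show M + (j - (i + 1)) + 1 = M + (j - i) by omega] at h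
    have hij : (i : ℝ) ≤ j := by exact_mod_cast (by omega : i ≤ j)
    have hri : r ≤ (surplus k1 k2 E).card - i * (k1 + k2 + 3) := by
      have : (i : ℝ) * (k1 + k2 + 3) ≤ j * (k1 + k2 + 3) := by gcongr
      linarith
    calc r ^ (i + 1) = r * r ^ i := pow_succ' _ _
      _ ≤ r * (i.factorial * (removable k1 k2 (M + (j - i)) i E).card) := by gcongr
      _ = i.factorial * (r * (removable k1 k2 (M + (j - i)) i E).card) := by ring
      _ ≤ i.factorial * (((surplus k1 k2 E).card - i * (k1 + k2 + 3)) *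
          (removable k1 k2 (M + (j - i)) i E).card) := by gcongr
      _ ≤ i.factorial * (((i + 1 : ℕ) : ℝ) *
          (removable k1 k2 (M + (j - (i + 1))) (i + 1) E).card) := by gcongr
      _ = _ := by rw [Nat.factorial_succ]; push_cast; ring

lemma isDicore_union {k1 k2 M : ℕ} {E X : Finset (Fin N × Fin N)} (hE : IsDicore k1 k2 N M E)
    (hX : X ⊆ nonEdges E) : IsDicore k1 k2 N (M + X.card) (E ∪ X) := by
  rw [isDicore_iff] at hE ⊢
  refine ⟨?_, ?_, fun v => ?_⟩
  · rw [card_union_of_disjoint, hE.1]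
    exact disjoint_right.2 fun x hx => (mem_nonEdges.1 (hX hx)).2
  · intro e he
    rcases mem_union.1 he with h | h
    · exact hE.2.1 e h
    · exact (mem_nonEdges.1 (hX h)).1
  · exact ⟨(hE.2.2 v).1.trans (indeg_mono subset_union_left v),
      (hE.2.2 v).2.trans (outdeg_mono subset_union_left v)⟩

open scoped Classical in
lemma sum_removable {k1 k2 M j : ℕ} {B : Finset (Finset (Fin N × Fin N))}
    (hB : B ⊆ dicores k1 k2 N (M + j)) (w : Finset (Fin N × Fin N) → ℝ) :
    ∑ E ∈ B, ∑ X ∈ removable k1 k2 M j E, w (E \ X) =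
      ∑ E ∈ dicores k1 k2 N M,
        (((powersetCard j (nonEdges E)).filter (fun X => E ∪ X ∈ B)).card : ℝ) * w E := by
  have h : ∀ E ∈ dicores k1 k2 N M,
      (((powersetCard j (nonEdges E)).filter (fun X => E ∪ X ∈ B)).card : ℝ) * w E =
        ∑ X ∈ (powersetCard j (nonEdges E)).filter (fun X => E ∪ X ∈ B), w E := by
    intro E _
    rw [sum_const, nsmul_eq_mul]
  rw [sum_congr rfl h, sum_sigma', sum_sigma']
  refine sum_bij' (fun p _ => ⟨p.1 \ p.2, p.2⟩) (fun p _ => ⟨p.1 ∪ p.2, p.2⟩) ?_ ?_ ?_ ?_ ?_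
  · rintro ⟨E, X⟩ hp
    simp only [mem_sigma, mem_removable, mem_filter, mem_powersetCard, mem_dicores] at hp ⊢
    refine ⟨hp.2.2, ⟨fun e he => ?_, hp.2.1.2⟩, ?_⟩
    · refine mem_nonEdges.2 ⟨?_, fun h => (mem_sdiff.1 h).2 he⟩
      exact (mem_dicores.1 (hB hp.1)).2.1 e (hp.2.1.1 he)
    · rw [sdiff_union_of_subset hp.2.1.1]
      exact hp.1
  · rintro ⟨E, X⟩ hp
    simp only [mem_sigma, mem_removable, mem_filter, mem_powersetCard, mem_dicores] at hp ⊢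
    have hd : Disjoint E X := disjoint_right.2 fun x hx => (mem_nonEdges.1 (hp.2.1.1 hx)).2
    refine ⟨hp.2.2, ⟨subset_union_right, hp.2.1.2⟩, ?_⟩
    rw [union_sdiff_cancel_right hd]
    exact hp.1
  · rintro ⟨E, X⟩ hp
    simp only [mem_sigma, mem_removable] at hp
    simp only [sdiff_union_of_subset hp.2.1.1]
  · rintro ⟨E, X⟩ hp
    simp only [mem_sigma, mem_filter, mem_powersetCard] at hp
    have hd : Disjoint E X := disjoint_right.2 fun x hx => (mem_nonEdges.1 (hp.2.1.1 hx)).2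
    simp only [union_sdiff_cancel_right hd]
  · intro p _
    rfl

lemma choose_mul_pow_le {a n : ℕ} (h : a ≤ n) (j : ℕ) :
    a.choose j * n ^ j ≤ a ^ j * n.choose j := by
  induction j with
  | zero => simp
  | succ j ih =>
    have h1 : (a - j) * n ≤ a * (n - j) := by
      rcases le_total a j with haj | haj
      · rw [Nat.sub_eq_zero_of_le haj]; simp
      · rw [Nat.sub_mul, Nat.mul_sub]
        have : j * a ≤ j * n := Nat.mul_le_mul_left _ h
        rw [mul_comm a j]
        omega
    refine Nat.le_of_mul_le_mul_right ?_ (Nat.succ_pos j)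
    calc a.choose (j + 1) * n ^ (j + 1) * (j + 1)
        = (a.choose (j + 1) * (j + 1)) * n ^ (j + 1) := by ring
      _ = (a.choose j * n ^ j) * ((a - j) * n) := by rw [Nat.choose_succ_right_eq]; ring
      _ ≤ (a ^ j * n.choose j) * (a * (n - j)) := Nat.mul_le_mul ih h1
      _ = a ^ (j + 1) * (n.choose j * (n - j)) := by ring
      _ = a ^ (j + 1) * n.choose (j + 1) * (j + 1) := by rw [← Nat.choose_succ_right_eq]; ring

lemma choose_le_pow_mul_choose {a n : ℕ} {c : ℝ} (hn : 0 < n) (han : a ≤ n) (hc : (a : ℝ) ≤ c * n)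
    (j : ℕ) : (a.choose j : ℝ) ≤ c ^ j * n.choose j := by
  have hn' : (0 : ℝ) < n := by exact_mod_cast hn
  have h : (a.choose j : ℝ) * n ^ j ≤ a ^ j * n.choose j := by
    exact_mod_cast choose_mul_pow_le han j
  refine le_of_mul_le_mul_right (h.trans ?_) (pow_pos hn' j)
  calc (a : ℝ) ^ j * n.choose j ≤ (c * n) ^ j * n.choose j := by gcongr
    _ = _ := by ring

/-! ### Dicores with expansion that are not strongly connected -/

open scoped Classical in
/-- Dicores that expand in both directions and have many removable edges, but are not
`k`-strongly connected. -/
noncomputable def badTypical (k1 k2 N M k : ℕ) (δ η : ℝ) : Finset (Finset (Fin N × Fin N)) :=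
  (dicores k1 k2 N M).filter (fun E => Expands k δ E ∧ Expands k δ (reverse E) ∧
    η * N ≤ ((surplus k1 k2 E).card : ℝ) ∧ ¬ KStronglyConnected k E)

open scoped Classical in
lemma card_filter_union_mem_badTypical_le {k1 k2 M j k : ℕ} {δ η : ℝ}
    {E : Finset (Fin N × Fin N)} (hE : IsDicore k1 k2 N M E) (hδ : 0 < δ) (hδ1 : δ ≤ 1) (hkN : k < N)
    (hj : (4 * j + 2 : ℝ) ≤ δ * N) (hM : (M : ℝ) + N ≤ δ ^ 2 / 2 * N ^ 2)
    (hM2 : (M : ℝ) + N < N ^ 2) :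
    (((powersetCard j (nonEdges E)).filter
        (fun X => E ∪ X ∈ badTypical k1 k2 N (M + j) k δ η)).card : ℝ) ≤
      (k * N ^ (k - 1) * N ^ 2 : ℝ) * ((1 - δ ^ 2 / 2) ^ j * ((nonEdges E).card.choose j : ℝ)) := by
  have hN0 : 0 < N := by omega
  set n := (nonEdges E).card with hn
  have hcard := card_nonEdges hE.2.1
  rw [hE.1, ← hn] at hcard
  have hcard' : (n : ℝ) + M + N = N * N := by exact_mod_cast hcard
  have hnpos : 0 < n := by
    have : (0 : ℝ) < n := by nlinarith
    exact_mod_cast this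
  set TT := univ.filter (fun T : Finset (Fin N) => T.card < k) with hTT
  set av : Finset (Fin N) → Fin N × Fin N → Finset (Fin N × Fin N) := fun T p =>
    (nonEdges E).filter
      (fun e => ¬ (e.1 ∈ reachSet E T p.1 ∧ e.2 ∈ reachSet (reverse E) T p.2)) with hav
  set G : Finset (Finset (Fin N) × (Fin N × Fin N)) := (TT ×ˢ univ).filter
    (fun q => δ * N < (reachSet E q.1 q.2.1).card ∧
      δ * N < (reachSet (reverse E) q.1 q.2.2).card) with hG
  have hsub : (powersetCard j (nonEdges E)).filter
      (fun X => E ∪ X ∈ badTypical k1 k2 N (M + j) k δ η) ⊆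
      G.biUnion fun q => powersetCard j (av q.1 q.2) := by
    intro X hX
    rw [mem_filter, mem_powersetCard, badTypical, mem_filter] at hX
    obtain ⟨⟨hXn, hXc⟩, -, hexp, hexp', -, hbad⟩ := hX
    have hd : Disjoint E X := disjoint_right.2 fun x hx => (mem_nonEdges.1 (hXn hx)).2
    obtain ⟨T, hT, u, v, h1, h2, h3⟩ := exists_large_pair hexp hexp' hkN hbad
      subset_union_right hXc.le hj
    rw [union_sdiff_cancel_right hd] at h1 h2 h3
    refine mem_biUnion.2 ⟨(T, (u, v)), ?_, ?_⟩
    · simp only [hG, hTT, mem_filter, mem_product, mem_univ, true_and, and_true]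
      exact ⟨hT, h1, h2⟩
    · refine mem_powersetCard.2 ⟨fun x hx => ?_, hXc⟩
      exact mem_filter.2 ⟨hXn hx, h3 x hx⟩
  have hterm : ∀ q ∈ G, ((powersetCard j (av q.1 q.2)).card : ℝ) ≤
      (1 - δ ^ 2 / 2) ^ j * (n.choose j : ℝ) := by
    rintro ⟨T, u, v⟩ hq
    rw [hG, mem_filter] at hq
    obtain ⟨-, h1, h2⟩ := hq
    simp only at h1 h2 ⊢
    rw [card_powersetCard]
    refine choose_le_pow_mul_choose hnpos (card_le_card (filter_subset _ _)) ?_ j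
    set A := reachSet E T u with hA
    set B := reachSet (reverse E) T v with hB
    have hc1 : (A ×ˢ B).card + (av T (u, v)).card ≤ n + M + N := by
      have hdis : Disjoint (A ×ˢ B) (av T (u, v)) := by
        refine disjoint_right.2 fun e he he' => ?_
        exact (mem_filter.1 he).2 (mem_product.1 he')
      rw [← card_union_of_disjoint hdis, hcard]
      refine (card_le_univ _).trans ?_
      simp
    rw [card_product] at hc1
    have hc2 : (A.card * B.card : ℝ) + (av T (u, v)).card ≤ n + M + N := by exact_mod_cast hc1
    have hc3 : (δ * N) * (δ * N) ≤ A.card * B.card := by gcongr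
    have hnN : (n : ℝ) ≤ N ^ 2 := by
      have : (0 : ℝ) ≤ M := Nat.cast_nonneg _
      have : (0 : ℝ) ≤ N := Nat.cast_nonneg _
      nlinarith
    have hc4 : δ ^ 2 / 2 * n ≤ δ ^ 2 / 2 * N ^ 2 := by gcongr
    nlinarith
  have hle : (((powersetCard j (nonEdges E)).filter
      (fun X => E ∪ X ∈ badTypical k1 k2 N (M + j) k δ η)).card : ℝ) ≤
      G.card * ((1 - δ ^ 2 / 2) ^ j * (n.choose j : ℝ)) :=
    le_trans (by exact_mod_cast card_le_card hsub) (card_biUnion_le_mul hterm)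
  have hGc : (G.card : ℝ) ≤ k * N ^ (k - 1) * N ^ 2 := by
    have h1 : G.card ≤ TT.card * (N * N) := by
      refine (card_filter_le _ _).trans ?_
      rw [card_product]
      simp
    have h2 : TT.card ≤ k * N ^ (k - 1) := card_filter_card_lt_le hN0
    have h3 : G.card ≤ k * N ^ (k - 1) * (N * N) := h1.trans (Nat.mul_le_mul_right _ h2)
    rw [sq]
    exact_mod_cast h3
  have h0 : 0 ≤ 1 - δ ^ 2 / 2 := by nlinarith
  refine hle.trans ?_
  gcongr

lemma div_pow_le_exp {r x c y : ℝ} (j : ℕ) (hr : 0 < r) (hx : 0 ≤ x) (hxr : 4 * x ≤ r)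
    (hc : 4 * x / r ≤ c) (hjc : j * c ≤ y) : (r / (r - 2 * x)) ^ j ≤ Real.exp y := by
  have hpos : 0 < r - 2 * x := by linarith
  have h1 : r / (r - 2 * x) ≤ 1 + 4 * x / r := by
    rw [div_le_iff₀ hpos]
    have : (1 + 4 * x / r) * (r - 2 * x) = r + 2 * x * (r - 4 * x) / r := by
      field_simp
      ring
    rw [this]
    have : 0 ≤ 2 * x * (r - 4 * x) / r :=
      div_nonneg (mul_nonneg (by linarith) (by linarith)) hr.le
    linarith
  have h2 : r / (r - 2 * x) ≤ Real.exp c := by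
    have := Real.add_one_le_exp c
    linarith
  calc (r / (r - 2 * x)) ^ j ≤ Real.exp c ^ j := by gcongr
    _ = Real.exp (j * c) := by rw [← Real.exp_nat_mul]
    _ ≤ Real.exp y := Real.exp_le_exp.2 hjc

lemma card_badTypical_le {k1 k2 M j k : ℕ} {δ η : ℝ} (hδ : 0 < δ) (hδ1 : δ ≤ 1) (hη : 0 < η)
    (hkN : k < N) (hj : (4 * j + 2 : ℝ) ≤ δ * N) (hM : (M : ℝ) + N ≤ δ ^ 2 / 2 * N ^ 2)
    (hM2 : (M : ℝ) + N < N ^ 2) (hjN : j ^ 2 ≤ N)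
    (hjη : 8 * (j * (k1 + k2 + 3)) ≤ η * N) :
    ((badTypical k1 k2 N (M + j) k δ η).card : ℝ) ≤
      (k * N ^ (k - 1) * N ^ 2 : ℝ) * (1 - δ ^ 2 / 2) ^ j * Real.exp (8 * (k1 + k2 + 3) / η) *
        (dicores k1 k2 N (M + j)).card := by
  classical
  have hN0 : 0 < N := by omega
  have hN' : (0 : ℝ) < N := by exact_mod_cast hN0
  have hηN : 0 < η * N := by positivity
  set κ : ℝ := k1 + k2 + 3 with hκ
  have hκ0 : 0 < κ := by positivity
  set x : ℝ := j * κ with hx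
  have hx0 : 0 ≤ x := by positivity
  set s : Finset (Fin N × Fin N) → ℝ := fun E => ((surplus k1 k2 E).card : ℝ) with hs
  set w : Finset (Fin N × Fin N) → ℝ := fun E =>
    if η * N / 2 ≤ s E then j.factorial / (s E - x) ^ j else 0 with hw
  have hw0 : ∀ E, 0 ≤ w E := by
    intro E
    simp only [hw]
    split_ifs with h
    · have : 0 ≤ s E - x := by linarith
      positivity
    · exact le_rfl
  have hfac : (0 : ℝ) < j.factorial := by exact_mod_cast Nat.factorial_pos j
  have hsle : ∀ E X : Finset (Fin N × Fin N), s (E \ X) ≤ s E := by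
    intro E X
    simp only [hs]
    exact_mod_cast card_le_card (surplus_mono k1 k2 sdiff_subset)
  have hsge : ∀ E X : Finset (Fin N × Fin N), X ∈ removable k1 k2 M j E → s E ≤ s (E \ X) + x := by
    intro E X hX
    have h := card_surplus_le_sdiff k1 k2 E X
    rw [(mem_removable.1 hX).1.2] at h
    simp only [hs, hx, hκ]
    exact_mod_cast h
  have hlower : ∀ E ∈ badTypical k1 k2 N (M + j) k δ η,
      1 ≤ ∑ X ∈ removable k1 k2 M j E, w (E \ X) := by
    intro E hE
    rw [badTypical, mem_filter, mem_dicores] at hE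
    obtain ⟨hED, -, -, hEη, -⟩ := hE
    have hEη' : η * N ≤ s E := hEη
    have hpos : 0 < s E - x := by linarith
    have h1 := pow_le_factorial_mul_card_removable hED hpos.le
      (by simp only [hs, hx, hκ]; linarith) j le_rfl
    rw [Nat.sub_self, add_zero] at h1
    have h2 : ∀ X ∈ removable k1 k2 M j E, j.factorial / (s E - x) ^ j ≤ w (E \ X) := by
      intro X hX
      have e1 := hsge E X hX
      have e2 := hsle E X
      have e3 : η * N / 2 ≤ s (E \ X) := by linarith
      have e4 : 0 < s (E \ X) - x := by linarith
      simp only [hw, if_pos e3]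
      gcongr
    have h3 := card_nsmul_le_sum _ _ _ h2
    rw [nsmul_eq_mul] at h3
    refine le_trans ?_ h3
    rw [mul_div_assoc', le_div_iff₀ (by positivity), one_mul, mul_comm]
    exact h1
  have hupper : ∀ E ∈ dicores k1 k2 N (M + j),
      ∑ X ∈ removable k1 k2 M j E, w (E \ X) ≤ Real.exp (8 * κ / η) := by
    intro E _
    by_cases hE : η * N / 2 ≤ s E
    · have hpos : 0 < s E - 2 * x := by linarith
      have h2 : ∀ X ∈ removable k1 k2 M j E, w (E \ X) ≤ j.factorial / (s E - 2 * x) ^ j := by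
        intro X hX
        have e1 := hsge E X hX
        simp only [hw]
        split_ifs
        · have e2 : s E - 2 * x ≤ s (E \ X) - x := by linarith
          exact div_le_div_of_nonneg_left hfac.le (by positivity)
            (pow_le_pow_left₀ hpos.le e2 j)
        · positivity
      have h3 := sum_le_card_nsmul _ _ _ h2
      rw [nsmul_eq_mul] at h3
      have h4 : ((removable k1 k2 M j E).card : ℝ) ≤ s E ^ j / j.factorial := card_removable_le
      calc ∑ X ∈ removable k1 k2 M j E, w (E \ X)
          ≤ (removable k1 k2 M j E).card * (j.factorial / (s E - 2 * x) ^ j) := h3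
        _ ≤ (s E ^ j / j.factorial) * (j.factorial / (s E - 2 * x) ^ j) := by gcongr
        _ = (s E / (s E - 2 * x)) ^ j := by rw [div_pow]; field_simp
        _ ≤ Real.exp (8 * κ / η) := by
          refine div_pow_le_exp (c := 8 * x / (η * N)) j (by linarith) hx0 (by linarith) ?_ ?_
          · rw [div_le_div_iff₀ (by linarith) hηN]
            nlinarith
          · have hj2 : (j : ℝ) ^ 2 ≤ N := by exact_mod_cast hjN
            rw [mul_div_assoc', div_le_div_iff₀ hηN hη, hx]
            calc (j : ℝ) * (8 * (j * κ)) * η = (8 * κ * η) * (j : ℝ) ^ 2 := by ring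
              _ ≤ (8 * κ * η) * N := by gcongr
              _ = 8 * κ * (η * N) := by ring
    · have : ∀ X ∈ removable k1 k2 M j E, w (E \ X) = 0 := by
        intro X _
        have := hsle E X
        simp only [hw]
        rw [if_neg]
        intro h
        exact hE (h.trans this)
      rw [sum_eq_zero this]
      positivity
  set tiny : ℝ := (k * N ^ (k - 1) * N ^ 2 : ℝ) * (1 - δ ^ 2 / 2) ^ j with htiny
  have htiny0 : 0 ≤ tiny := by
    have : 0 ≤ 1 - δ ^ 2 / 2 := by nlinarith
    positivity
  have hall : ∀ E ∈ dicores k1 k2 N M, (powersetCard j (nonEdges E)).filter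
      (fun X => E ∪ X ∈ dicores k1 k2 N (M + j)) = powersetCard j (nonEdges E) := by
    intro E hE
    refine filter_true_of_mem fun X hX => ?_
    rw [mem_powersetCard] at hX
    have := isDicore_union (mem_dicores.1 hE) hX.1
    rw [hX.2] at this
    exact mem_dicores.2 this
  calc ((badTypical k1 k2 N (M + j) k δ η).card : ℝ)
      = ∑ E ∈ badTypical k1 k2 N (M + j) k δ η, (1 : ℝ) := by simp
    _ ≤ ∑ E ∈ badTypical k1 k2 N (M + j) k δ η, ∑ X ∈ removable k1 k2 M j E, w (E \ X) :=
        sum_le_sum hlower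
    _ = ∑ E ∈ dicores k1 k2 N M, (((powersetCard j (nonEdges E)).filter
          (fun X => E ∪ X ∈ badTypical k1 k2 N (M + j) k δ η)).card : ℝ) * w E :=
        sum_removable (filter_subset _ _) w
    _ ≤ ∑ E ∈ dicores k1 k2 N M, tiny * ((((powersetCard j (nonEdges E)).filter
          (fun X => E ∪ X ∈ dicores k1 k2 N (M + j))).card : ℝ) * w E) := by
        refine sum_le_sum fun E hE => ?_
        rw [hall E hE, card_powersetCard, ← mul_assoc]
        refine mul_le_mul_of_nonneg_right ?_ (hw0 E)
        rw [htiny, mul_assoc]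
        exact card_filter_union_mem_badTypical_le (mem_dicores.1 hE) hδ hδ1 hkN hj hM hM2
    _ = tiny * ∑ E ∈ dicores k1 k2 N (M + j), ∑ X ∈ removable k1 k2 M j E, w (E \ X) := by
        rw [sum_removable Subset.rfl w, mul_sum]
    _ ≤ tiny * ((dicores k1 k2 N (M + j)).card * Real.exp (8 * κ / η)) := by
        gcongr
        rw [← nsmul_eq_mul]
        exact sum_le_card_nsmul _ _ _ hupper
    _ = _ := by ring

/-! ### Existence of dicores -/

lemma card_filter_val_mem_Icc {K : ℕ} (hK : K < N) :
    (univ.filter (fun t : Fin N => t.val ∈ Icc 1 K)).card = K := by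
  rw [← card_image_of_injective _ Fin.val_injective]
  have : (univ.filter (fun t : Fin N => t.val ∈ Icc 1 K)).image Fin.val = Icc 1 K := by
    ext i
    simp only [mem_image, mem_filter, mem_univ, true_and]
    constructor
    · rintro ⟨t, ht, rfl⟩; exact ht
    · intro hi
      exact ⟨⟨i, by have := (mem_Icc.1 hi).2; omega⟩, hi, rfl⟩
  rw [this, Nat.card_Icc]
  omega

lemma dicores_nonempty {k1 k2 K M : ℕ} (h1 : k1 ≤ K) (h2 : k2 ≤ K) (hKN : K < N)
    (hM1 : K * N ≤ M) (hM2 : M + N ≤ N * N) : (dicores k1 k2 N M).Nonempty := by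
  have : NeZero N := ⟨by omega⟩
  set E : Finset (Fin N × Fin N) := univ.filter (fun e => (e.2 - e.1).val ∈ Icc 1 K) with hE
  have hout : ∀ v, outdeg E v = K := by
    intro v
    rw [← card_filter_mk_mem_left, ← card_filter_val_mem_Icc hKN]
    refine card_equiv (Equiv.subRight v) fun d => ?_
    simp [hE]
  have hin : ∀ v, indeg E v = K := by
    intro v
    rw [← card_filter_mk_mem_right, ← card_filter_val_mem_Icc hKN]
    refine card_equiv (Equiv.subLeft v) fun d => ?_
    simp [hE]
  have hloop : ∀ e ∈ E, e.1 ≠ e.2 := by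
    intro e he h
    simp [hE, h] at he
  have hcard : E.card = K * N := by
    have h := sum_outdeg E univ
    simp only [mem_univ, filter_true, hout, sum_const, card_univ, Fintype.card_fin,
      smul_eq_mul] at h
    rw [h, mul_comm]
  have hsub : E ⊆ nonEdges ∅ := fun e he => mem_nonEdges.2 ⟨hloop e he, notMem_empty e⟩
  have hne : (nonEdges (∅ : Finset (Fin N × Fin N))).card + 0 + N = N * N :=
    card_nonEdges (E := ∅) (by simp)
  obtain ⟨E', hEE', hE', hc⟩ := exists_subsuperset_card_eq hsub (n := M) (by omega) (by omega)
  refine ⟨E', mem_dicores.2 (isDicore_iff.2 ⟨hc, fun e he => (mem_nonEdges.1 (hE' he)).1,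
    fun v => ⟨?_, ?_⟩⟩)⟩
  · exact h1.trans ((hin v).symm.le.trans (indeg_mono hEE' v))
  · exact h2.trans ((hout v).symm.le.trans (outdeg_mono hEE' v))

/-! ### Asymptotics -/

lemma pow_mul_pow_sqrt_le (p : ℕ) {c : ℝ} (hc0 : 0 ≤ c) (hc1 : c < 1) :
    ∃ A : ℝ, 0 < A ∧ ∀ N : ℕ, (N : ℝ) ^ p * c ^ Nat.sqrt N ≤ A := by
  have hs : Summable (fun n : ℕ => (n : ℝ) ^ (2 * p) * c ^ n) :=
    summable_pow_mul_geometric_of_norm_lt_one _ (by rwa [Real.norm_of_nonneg hc0])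
  refine ⟨4 ^ p * (∑' n : ℕ, (n : ℝ) ^ (2 * p) * c ^ n) + 1, by positivity, fun N => ?_⟩
  set j := Nat.sqrt N with hj
  rcases Nat.eq_zero_or_pos N with rfl | hN
  · have h1 : ((0 : ℕ) : ℝ) ^ p ≤ 1 := by
      rcases p with _ | p <;> simp
    have h2 : c ^ j ≤ 1 := pow_le_one₀ hc0 hc1.le
    have h3 : 0 ≤ 4 ^ p * (∑' n : ℕ, (n : ℝ) ^ (2 * p) * c ^ n) := by positivity
    have h4 : ((0 : ℕ) : ℝ) ^ p * c ^ j ≤ 1 := mul_le_one₀ h1 (by positivity) h2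
    linarith
  have hj1 : 1 ≤ j := Nat.sqrt_pos.2 hN
  have hNj : N ≤ 4 * j ^ 2 := by
    have : N < (j + 1) * (j + 1) := Nat.lt_succ_sqrt N
    nlinarith
  have hNj' : (N : ℝ) ≤ 4 * (j : ℝ) ^ 2 := by exact_mod_cast hNj
  have hterm : (j : ℝ) ^ (2 * p) * c ^ j ≤ ∑' n : ℕ, (n : ℝ) ^ (2 * p) * c ^ n :=
    hs.le_tsum j fun n _ => by positivity
  calc (N : ℝ) ^ p * c ^ j ≤ (4 * (j : ℝ) ^ 2) ^ p * c ^ j := by gcongr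
    _ = 4 ^ p * ((j : ℝ) ^ (2 * p) * c ^ j) := by rw [mul_pow, ← pow_mul]; ring
    _ ≤ 4 ^ p * (∑' n : ℕ, (n : ℝ) ^ (2 * p) * c ^ n) := by gcongr
    _ ≤ _ := by linarith

set_option maxHeartbeats 400000 in
open scoped Classical in
lemma card_not_kStronglyConnected_le {k1 k2 k : ℕ} {ε C1 : ℝ} (hk : 2 ≤ k) (hkk1 : k ≤ k1)
    (hkk2 : k ≤ k2) (hε : 0 < ε) (hC1 : 0 < C1) :
    ∃ K : ℝ, 0 < K ∧ ∃ N0 : ℕ, ∀ N M : ℕ, N0 ≤ N → (k1 + ε) * N ≤ M → (k2 + ε) * N ≤ M →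
      (M : ℝ) ≤ C1 * N →
      (((dicores k1 k2 N M).filter (fun E => ¬ KStronglyConnected k E)).card : ℝ) ≤
        K / N ^ (k - 1) * (dicores k1 k2 N M).card := by
  obtain ⟨δ1, hδ1, K1, hK1, N1, H1⟩ := card_not_expands_le (k1 := k1) (k2 := k2) hε hC1 hk hkk2
  obtain ⟨δ2, hδ2, K2, hK2, N2, H2⟩ := card_not_expands_le (k1 := k2) (k2 := k1) hε hC1 hk hkk1
  obtain ⟨η, hη, N3, H3⟩ := card_fewSurplus_le (k1 := k1) (k2 := k2) hε hC1
  set δ : ℝ := min (min δ1 δ2) 1 with hδdef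
  have hδ : 0 < δ := by positivity
  have hδle1 : δ ≤ 1 := min_le_right _ _
  have hδδ1 : δ ≤ δ1 := (min_le_left _ _).trans (min_le_left _ _)
  have hδδ2 : δ ≤ δ2 := (min_le_left _ _).trans (min_le_right _ _)
  obtain ⟨A, hA, HA⟩ := pow_mul_pow_sqrt_le (k - 1) (c := 1 / 2) (by norm_num) (by norm_num)
  obtain ⟨A', hA', HA'⟩ := pow_mul_pow_sqrt_le (k - 1 + (k - 1 + 2)) (c := 1 - δ ^ 2 / 2)
    (by nlinarith) (by nlinarith)
  set κ : ℝ := k1 + k2 + 3 with hκ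
  have hκ0 : 0 < κ := by positivity
  obtain ⟨J, hJ⟩ := exists_nat_ge (max (6 / δ) (8 * κ / η))
  obtain ⟨N4, hN4⟩ := exists_nat_ge (2 * (C1 + 1) / δ ^ 2)
  refine ⟨K1 + K2 + A + k * Real.exp (8 * κ / η) * A', by positivity,
    N1 + N2 + N3 + (J + 1) ^ 2 + N4 + k + 1, fun N M hN h1 h2 hM => ?_⟩
  have hN0 : 0 < N := by omega
  have hN' : (0 : ℝ) < N := by exact_mod_cast hN0
  set D : ℝ := ((dicores k1 k2 N M).card : ℝ) with hD
  have hD0 : 0 ≤ D := Nat.cast_nonneg _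
  set j := Nat.sqrt N with hjdef
  have hjN : j ^ 2 ≤ N := Nat.sqrt_le' N
  have hjJ : J + 1 ≤ j := Nat.le_sqrt'.2 (by omega)
  have hjN' : (j : ℝ) ^ 2 ≤ N := by exact_mod_cast hjN
  have hj1 : (1 : ℝ) ≤ j := by exact_mod_cast (by omega : 1 ≤ j)
  have hjJ' : (J : ℝ) ≤ j := by exact_mod_cast (by omega : J ≤ j)
  rw [max_le_iff, div_le_iff₀ hδ, div_le_iff₀ hη] at hJ
  have hj6 : (4 * j + 2 : ℝ) ≤ δ * N := by
    have e1 : 6 ≤ j * δ := hJ.1.trans (by gcongr)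
    calc (4 * j + 2 : ℝ) ≤ 6 * j := by linarith
      _ ≤ (j * δ) * j := by gcongr
      _ = δ * (j : ℝ) ^ 2 := by ring
      _ ≤ δ * N := by gcongr
  have hj8 : 8 * (j * κ) ≤ η * N := by
    have e1 : 8 * κ ≤ j * η := hJ.2.trans (by gcongr)
    calc 8 * (j * κ) = (8 * κ) * j := by ring
      _ ≤ (j * η) * j := by gcongr
      _ = η * (j : ℝ) ^ 2 := by ring
      _ ≤ η * N := by gcongr
  have hMN : (M : ℝ) + N ≤ δ ^ 2 / 2 * N ^ 2 := by
    rw [div_le_iff₀ (by positivity)] at hN4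
    have e1 : (N4 : ℝ) ≤ N := by exact_mod_cast (by omega : N4 ≤ N)
    have e2 : 2 * (C1 + 1) ≤ N * δ ^ 2 := hN4.trans (by gcongr)
    nlinarith
  have hjM : j ≤ M := by
    have e1 : (N : ℝ) ≤ M := by
      have : (2 : ℝ) ≤ k1 := by exact_mod_cast hk.trans hkk1
      nlinarith
    have e2 : N ≤ M := by exact_mod_cast e1
    exact (Nat.sqrt_le_self N).trans e2
  obtain ⟨M0, rfl⟩ : ∃ M0, M = M0 + j := ⟨M - j, by omega⟩
  have hM0 : (M0 : ℝ) + N ≤ δ ^ 2 / 2 * N ^ 2 := by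
    push_cast at hMN
    linarith
  have hδsq : δ ^ 2 / 2 ≤ 1 / 2 := by nlinarith
  have hM0' : (M0 : ℝ) + N < N ^ 2 := by
    have : δ ^ 2 / 2 * (N : ℝ) ^ 2 ≤ 1 / 2 * N ^ 2 := by gcongr
    have : (0 : ℝ) < N ^ 2 := by positivity
    linarith
  set P1 := (dicores k1 k2 N (M0 + j)).filter (fun E => ¬ Expands k δ1 E) with hP1
  set P2 := (dicores k1 k2 N (M0 + j)).filter (fun E => ¬ Expands k δ2 (reverse E)) with hP2
  set P3 := (dicores k1 k2 N (M0 + j)).filter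
    (fun E => ((surplus k1 k2 E).card : ℝ) < η * N) with hP3
  set P4 := badTypical k1 k2 N (M0 + j) k δ η with hP4
  have hsub : (dicores k1 k2 N (M0 + j)).filter (fun E => ¬ KStronglyConnected k E) ⊆
      ((P1 ∪ P2) ∪ P3) ∪ P4 := by
    intro E hE
    rw [mem_filter] at hE
    by_cases c1 : Expands k δ1 E
    · by_cases c2 : Expands k δ2 (reverse E)
      · by_cases c3 : ((surplus k1 k2 E).card : ℝ) < η * N
        · exact mem_union_left _ (mem_union_right _ (mem_filter.2 ⟨hE.1, c3⟩))
        · refine mem_union_right _ ?_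
          rw [hP4, badTypical, mem_filter]
          exact ⟨hE.1, c1.mono hδδ1, c2.mono hδδ2, not_lt.1 c3, hE.2⟩
      · exact mem_union_left _ (mem_union_left _ (mem_union_right _ (mem_filter.2 ⟨hE.1, c2⟩)))
    · exact mem_union_left _ (mem_union_left _ (mem_union_left _ (mem_filter.2 ⟨hE.1, c1⟩)))
  have hcard : (((dicores k1 k2 N (M0 + j)).filter
      (fun E => ¬ KStronglyConnected k E)).card : ℝ) ≤ P1.card + P2.card + P3.card + P4.card := by
    have e1 := card_le_card hsub
    have e2 := card_union_le ((P1 ∪ P2) ∪ P3) P4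
    have e3 := card_union_le (P1 ∪ P2) P3
    have e4 := card_union_le P1 P2
    exact_mod_cast (by omega : ((dicores k1 k2 N (M0 + j)).filter
      (fun E => ¬ KStronglyConnected k E)).card ≤ P1.card + P2.card + P3.card + P4.card)
  have b1 : (P1.card : ℝ) ≤ K1 / N ^ (k - 1) * D := by
    refine H1 N (M0 + j) (by omega) h1 h2 hM P1 fun E hE => ?_
    rw [hP1, mem_filter, mem_dicores] at hE
    exact hE
  have b2 : (P2.card : ℝ) ≤ K2 / N ^ (k - 1) * D := by
    have hinj : Function.Injective (reverse (N := N)) :=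
      Function.LeftInverse.injective reverse_reverse
    have := H2 N (M0 + j) (by omega) h2 h1 hM (P2.image reverse) fun E hE => by
      obtain ⟨E', hE', rfl⟩ := mem_image.1 hE
      rw [hP2, mem_filter, mem_dicores] at hE'
      exact ⟨isDicore_reverse hE'.1, hE'.2⟩
    rwa [card_image_of_injective _ hinj, card_dicores_swap] at this
  have b3 : (P3.card : ℝ) ≤ A / N ^ (k - 1) * D := by
    refine (H3 N (M0 + j) (by omega) h1 h2 hM).trans ?_
    gcongr
    rw [le_div_iff₀ (by positivity), mul_comm]
    exact HA N
  have b4 : (P4.card : ℝ) ≤ (k * Real.exp (8 * κ / η) * A') / N ^ (k - 1) * D := by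
    refine (card_badTypical_le hδ hδle1 hη (by omega) hj6 hM0 hM0' hjN hj8).trans ?_
    refine mul_le_mul_of_nonneg_right ?_ hD0
    rw [le_div_iff₀ (by positivity)]
    calc (k * N ^ (k - 1) * N ^ 2 : ℝ) * (1 - δ ^ 2 / 2) ^ j * Real.exp (8 * κ / η) * N ^ (k - 1)
        = k * Real.exp (8 * κ / η) *
          ((N : ℝ) ^ (k - 1 + (k - 1 + 2)) * (1 - δ ^ 2 / 2) ^ j) := by
          rw [pow_add, pow_add]; ring
      _ ≤ k * Real.exp (8 * κ / η) * A' := by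
          gcongr
          exact HA' N
  calc _ ≤ (P1.card : ℝ) + P2.card + P3.card + P4.card := hcard
    _ ≤ K1 / N ^ (k - 1) * D + K2 / N ^ (k - 1) * D + A / N ^ (k - 1) * D +
        (k * Real.exp (8 * κ / η) * A') / N ^ (k - 1) * D := by linarith
    _ = _ := by ring

end Dicore

open Finset Dicore in
theorem ratio_k_strongly_connected_dicores
    (k1 k2 : ℕ) (hk1 : 2 ≤ k1) (hk2 : 2 ≤ k2) (ε C1 : ℝ) (hε : 0 < ε)
    (hC1 : ((max k1 k2 : ℕ) : ℝ) + ε < C1) :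
    ∃ C : ℝ, 0 < C ∧ ∀ N M : ℕ, 0 < N → 0 < M →
      (((max k1 k2 : ℕ) : ℝ) + ε) * N ≤ M → (M : ℝ) ≤ C1 * N →
      |(Nat.card {E : Finset (Fin N × Fin N) //
            IsDicore k1 k2 N M E ∧ KStronglyConnected (min k1 k2) E} : ℝ) /
          (Nat.card {E : Finset (Fin N × Fin N) // IsDicore k1 k2 N M E} : ℝ) - 1| ≤
        C / (N : ℝ) ^ (min k1 k2 - 1) := by
  classical
  have hC1pos : 0 < C1 := lt_of_le_of_lt (by positivity) hC1
  obtain ⟨K, hK, N0, H⟩ := card_not_kStronglyConnected_le (k := min k1 k2) (le_min hk1 hk2)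
    (min_le_left _ _) (min_le_right _ _) hε hC1pos
  obtain ⟨N1, hN1⟩ := exists_nat_ge (C1 + 1)
  set L := N0 + N1 + max k1 k2 + 1 with hL
  set k := min k1 k2 with hk
  refine ⟨max K ((L : ℝ) ^ (k - 1)), by positivity, fun N M hN hM0 hM1 hM2 => ?_⟩
  have hN' : (0 : ℝ) < N := by exact_mod_cast hN
  set G := (dicores k1 k2 N M).filter (fun E => KStronglyConnected k E) with hG
  set B := (dicores k1 k2 N M).filter (fun E => ¬ KStronglyConnected k E) with hB
  have hGB : (G.card : ℝ) + B.card = (dicores k1 k2 N M).card := by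
    exact_mod_cast card_filter_add_card_filter_not (s := dicores k1 k2 N M)
      (fun E => KStronglyConnected k E)
  have c1 : Nat.card {E : Finset (Fin N × Fin N) // IsDicore k1 k2 N M E ∧
      KStronglyConnected k E} = G.card := by
    rw [Nat.card_eq_fintype_card]
    exact Fintype.card_of_subtype G fun E => by rw [hG, mem_filter, mem_dicores]
  have c2 : Nat.card {E : Finset (Fin N × Fin N) // IsDicore k1 k2 N M E} =
      (dicores k1 k2 N M).card := by
    rw [Nat.card_eq_fintype_card]
    exact Fintype.card_of_subtype _ fun E => mem_dicores
  rw [c1, c2]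
  set D : ℝ := ((dicores k1 k2 N M).card : ℝ) with hD
  have hG0 : (0 : ℝ) ≤ G.card := Nat.cast_nonneg _
  have hB0 : (0 : ℝ) ≤ B.card := Nat.cast_nonneg _
  by_cases hNL : L ≤ N
  · have hmax1 : ((k1 : ℝ)) ≤ ((max k1 k2 : ℕ) : ℝ) := by exact_mod_cast le_max_left _ _
    have hmax2 : ((k2 : ℝ)) ≤ ((max k1 k2 : ℕ) : ℝ) := by exact_mod_cast le_max_right _ _
    have hbound := H N M (by omega) (le_trans (by gcongr) hM1) (le_trans (by gcongr) hM1) hM2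
    have hne : (dicores k1 k2 N M).Nonempty := by
      refine dicores_nonempty (le_max_left _ _) (le_max_right _ _) (by omega) ?_ ?_
      · have : ((max k1 k2 : ℕ) : ℝ) * N ≤ M := le_trans (by gcongr; linarith) hM1
        exact_mod_cast this
      · have e1 : (N1 : ℝ) ≤ N := by exact_mod_cast (by omega : N1 ≤ N)
        have : (M : ℝ) + N ≤ N * N := by nlinarith
        exact_mod_cast this
    have hDpos : 0 < D := by
      rw [hD]
      exact_mod_cast card_pos.2 hne
    have e : (G.card : ℝ) / D - 1 = -(B.card / D) := by
      rw [← hGB]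
      rw [← hGB] at hDpos
      field_simp
      ring
    rw [e, abs_neg, abs_of_nonneg (by positivity), div_le_iff₀ hDpos]
    refine hbound.trans ?_
    gcongr
    exact le_max_left _ _
  · have hNL' : (N : ℝ) ≤ L := by exact_mod_cast (by omega : N ≤ L)
    have h1 : (1 : ℝ) ≤ max K ((L : ℝ) ^ (k - 1)) / (N : ℝ) ^ (k - 1) := by
      rw [le_div_iff₀ (by positivity), one_mul]
      exact le_trans (by gcongr) (le_max_right _ _)
    refine le_trans ?_ h1
    have h2 : (G.card : ℝ) / D ≤ 1 := div_le_one_of_le₀ (by linarith) (Nat.cast_nonneg _)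
    have h3 : 0 ≤ (G.card : ℝ) / D := div_nonneg hG0 (Nat.cast_nonneg _)
    rw [abs_le]
    constructor <;> linarith
end

section
/- Fix integers k1, k2 ≥ 2 and reals ε > 0 and C1 > max{k1,k2} + ε. Then there is a constant c0 > 0 such that for all positive integers N, M with (max{k1,k2}+ε)·N ≤ M ≤ C1·N the following holds: letting z_i, z_o > 0 be the unique roots of z_i·f_{k1−1}(z_i)/f_{k1}(z_i) = M/N and z_o·f_{k2−1}(z_o)/f_{k2}(z_o) = M/N, the number S_{N,M} of sequences x ∈ {1,…,N}^{2M} in which every i ∈ {1,…,N} occurs at least k1 times among the even-indexed entries and at least k2 times among the odd-indexed entries satisfies S_{N,M} ≥ c0 · N^{-1} · (M!)² · f_{k1}(z_i)^N · f_{k2}(z_o)^N / (z_i^M · z_o^M). -/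
/-- `fk k x = ∑_{j ≥ k} x^j / j!`, the tail of the exponential series. -/
noncomputable def fk (k : ℕ) (x : ℝ) : ℝ := ∑' n : ℕ, x ^ (n + k) / (n + k).factorial

/-- The (0-based) index of the 1-based odd position `x_{2r-1}` in a sequence of
length `2M`, for `r ∈ {1,…,M}` (given 0-based). -/
def oddIdx {M : ℕ} (r : Fin M) : Fin (2 * M) :=
  ⟨2 * r.1, by have := r.isLt; omega⟩

/-- The (0-based) index of the 1-based even position `x_{2r}` in a sequence of
length `2M`, for `r ∈ {1,…,M}` (given 0-based). -/
def evenIdx {M : ℕ} (r : Fin M) : Fin (2 * M) :=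
  ⟨2 * r.1 + 1, by have := r.isLt; omega⟩

/-- A sequence `x ∈ [N]^{2M}` is admissible if every `i ∈ [N]` occurs at least
`k1` times among the even-indexed entries `x_2, x_4, …, x_{2M}` and at least
`k2` times among the odd-indexed entries `x_1, x_3, …, x_{2M-1}`. -/
def Admissible (k1 k2 N M : ℕ) (x : Fin (2 * M) → Fin N) : Prop :=
  ∀ i : Fin N,
    k1 ≤ (Finset.univ.filter (fun r : Fin M => x (evenIdx r) = i)).card ∧
    k2 ≤ (Finset.univ.filter (fun r : Fin M => x (oddIdx r) = i)).card

open Finset in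
theorem card_functions_with_fibers (N M : ℕ) (l : Fin N →₀ ℕ) (hl : ∑ i, l i = M) :
    (#{p : Fin M → Fin N | ∀ i, #{r | p r = i} = l i} : ℝ) =
      (M.factorial : ℝ) * ∏ i, (1 / ((l i).factorial : ℝ)) := by
  have hcoeff : MvPolynomial.coeff l ((∑ i, (MvPolynomial.X i : MvPolynomial (Fin N) ℝ)) ^ M) =
      (Nat.multinomial univ l : ℝ) := by
    rw [MvPolynomial.coeff_sum_X_pow_of_fintype, if_pos, Finsupp.multinomial_of_support_subset
      (Finset.subset_univ _)]
    rwa [Finsupp.sum_fintype _ _ (fun _ => rfl)]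
  rw [Fintype.sum_pow, MvPolynomial.coeff_sum] at hcoeff
  have hmon (p : Fin M → Fin N) :
      MvPolynomial.coeff l (∏ r, (MvPolynomial.X (p r) : MvPolynomial (Fin N) ℝ)) =
        if ∀ i, #{r | p r = i} = l i then 1 else 0 := by
    have h : ∏ r, (MvPolynomial.X (p r) : MvPolynomial (Fin N) ℝ) =
        MvPolynomial.monomial (∑ r, Finsupp.single (p r) 1) 1 := by
      rw [MvPolynomial.monomial_sum_one]
      rfl
    rw [h, MvPolynomial.coeff_monomial]
    refine if_congr ?_ rfl rfl
    rw [Finsupp.ext_iff]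
    simp [Finsupp.finsetSum_apply, Finsupp.single_apply]
  simp_rw [hmon] at hcoeff
  rw [Finset.sum_boole] at hcoeff
  rw [hcoeff]
  have hspec : ((∏ i, (l i).factorial : ℕ) : ℝ) * Nat.multinomial univ l = M.factorial := by
    exact_mod_cast hl ▸ Nat.multinomial_spec univ l
  rw [← hspec]
  have : ∏ i, ((l i).factorial : ℝ) ≠ 0 := by positivity
  push_cast
  simp only [one_div, Finset.prod_inv_distrib]
  field_simp

open Finset PowerSeries in
theorem card_functions_with_large_fibers (k N M : ℕ) :
    (#{p : Fin M → Fin N | ∀ i, k ≤ #{r | p r = i}} : ℝ) =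
      (M.factorial : ℝ) *
        coeff M ((PowerSeries.mk fun j => if k ≤ j then 1 / (j.factorial : ℝ) else 0) ^ N) := by
  have hpow : ((PowerSeries.mk fun j => if k ≤ j then 1 / (j.factorial : ℝ) else 0) ^ N) =
      ∏ _i : Fin N, (PowerSeries.mk fun j => if k ≤ j then 1 / (j.factorial : ℝ) else 0) := by simp
  rw [hpow, coeff_prod, Finset.mul_sum]
  rw [card_eq_sum_card_fiberwise (t := finsuppAntidiag univ M)
    (f := fun p => Finsupp.equivFunOnFinite.symm fun i => #{r | p r = i})]
  · push_cast
    refine Finset.sum_congr rfl fun l hl => ?_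
    rw [mem_finsuppAntidiag] at hl
    simp only [coeff_mk]
    by_cases h : ∀ i, k ≤ l i
    · simp only [h, if_true]
      rw [← card_functions_with_fibers N M l hl.1]
      congr 2
      ext p
      simp only [mem_filter, mem_univ, true_and, Finsupp.ext_iff,
        Finsupp.equivFunOnFinite_symm_apply_apply]
      exact ⟨fun hp => hp.2, fun hp => ⟨fun i => hp i ▸ h i, hp⟩⟩
    · push Not at h
      obtain ⟨i, hi⟩ := h
      rw [Finset.prod_eq_zero (mem_univ i) (by simp [hi]), mul_zero, Nat.cast_eq_zero,
        Finset.card_eq_zero, Finset.eq_empty_iff_forall_notMem]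
      intro p hp
      simp only [mem_filter, mem_univ, true_and, Finsupp.ext_iff,
        Finsupp.equivFunOnFinite_symm_apply_apply] at hp
      have := hp.1 i
      rw [hp.2 i] at this
      omega
  · intro p _
    simp only [Finset.mem_coe, mem_finsuppAntidiag]
    refine ⟨?_, by simp⟩
    simp only [Finsupp.equivFunOnFinite_symm_apply_apply]
    rw [← card_eq_sum_card_fiberwise (f := p) (by simp)]
    simp

open Finset PowerSeries in
theorem card_functions_eq_coeff (k N L : ℕ) :
    (#{p : Fin (L + k * N) → Fin N | ∀ i, k ≤ #{r | p r = i}} : ℝ) =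
      ((L + k * N).factorial : ℝ) *
        coeff L ((PowerSeries.mk fun n => 1 / ((n + k).factorial : ℝ)) ^ N) := by
  have hX : (PowerSeries.mk fun j => if k ≤ j then 1 / (j.factorial : ℝ) else 0) =
      X ^ k * PowerSeries.mk fun n => 1 / ((n + k).factorial : ℝ) := by
    ext j
    rw [coeff_X_pow_mul', coeff_mk]
    split_ifs with h
    · rw [coeff_mk, Nat.sub_add_cancel h]
    · rfl
  rw [card_functions_with_large_fibers, hX, mul_pow, ← pow_mul, coeff_X_pow_mul]

open Finset in
theorem card_mul_card_le_card_admissible (k1 k2 N M : ℕ) :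
    #{p : Fin M → Fin N | ∀ i, k1 ≤ #{r | p r = i}} *
        #{p : Fin M → Fin N | ∀ i, k2 ≤ #{r | p r = i}} ≤
      Nat.card {x : Fin (2 * M) → Fin N // Admissible k1 k2 N M x} := by
  classical
  rw [← Finset.card_product, Nat.card_eq_fintype_card, Fintype.card_subtype]
  let interleave (pq : (Fin M → Fin N) × (Fin M → Fin N)) (j : Fin (2 * M)) : Fin N :=
    if j.1 % 2 = 1 then pq.1 ⟨j.1 / 2, by omega⟩ else pq.2 ⟨j.1 / 2, by omega⟩
  have heven (pq) (r : Fin M) : interleave pq (evenIdx r) = pq.1 r := by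
    have h1 : (2 * r.1 + 1) / 2 = r.1 := by omega
    have h2 : (2 * r.1 + 1) % 2 = 1 := by omega
    simp only [interleave, evenIdx, h1, h2, if_true]
  have hodd (pq) (r : Fin M) : interleave pq (oddIdx r) = pq.2 r := by
    have h1 : (2 * r.1) / 2 = r.1 := by omega
    have h2 : ¬ (2 * r.1) % 2 = 1 := by omega
    simp only [interleave, oddIdx, h1, h2, if_false]
  refine Finset.card_le_card_of_injOn interleave ?_ ?_
  · intro pq hpq
    simp only [coe_product, Set.mem_prod, mem_coe, mem_filter, mem_univ, true_and] at hpq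
    refine mem_coe.2 (mem_filter.2 ⟨mem_univ _, fun i => ?_⟩)
    simpa only [heven, hodd] using And.intro (hpq.1 i) (hpq.2 i)
  · intro a _ b _ hab
    refine Prod.ext (funext fun r => ?_) (funext fun r => ?_)
    · rw [← heven a, hab, heven]
    · rw [← hodd a, hab, hodd]

/-- The entries of the lower triangular Toeplitz matrix of the coefficients of `φ`. -/
noncomputable def toeplitz (φ : PowerSeries ℝ) (r i : ℕ) : ℝ :=
  if i ≤ r then PowerSeries.coeff (r - i) φ else 0

/-- All `2 × 2` minors of the Toeplitz matrix of `φ` are nonnegative. -/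
def IsTotallyPositiveTwo (φ : PowerSeries ℝ) : Prop :=
  ∀ r s i j, r ≤ s → i ≤ j →
    toeplitz φ r j * toeplitz φ s i ≤ toeplitz φ r i * toeplitz φ s j

open Finset in
theorem toeplitz_mul (φ ψ : PowerSeries ℝ) {r c K : ℕ} (hr : r < K) :
    toeplitz (φ * ψ) r c = ∑ i ∈ range K, toeplitz φ r i * toeplitz ψ i c := by
  have hzero : ∀ i ∈ range K, i ∉ Ico c (r + 1) → toeplitz φ r i * toeplitz ψ i c = 0 := by
    intro i _ hi
    rw [mem_Ico] at hi
    unfold toeplitz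
    by_cases h : i ≤ r
    · rw [if_neg (show ¬ c ≤ i by omega), mul_zero]
    · rw [if_neg h, zero_mul]
  rw [← Finset.sum_subset (s₁ := Ico c (r + 1)) _ hzero]
  · rcases le_or_gt c r with hc | hc
    · rw [Finset.sum_Ico_eq_sum_range, toeplitz, if_pos hc, mul_comm φ, PowerSeries.coeff_mul,
        Nat.sum_antidiagonal_eq_sum_range_succ
          (fun a b => PowerSeries.coeff a ψ * PowerSeries.coeff b φ),
        show r + 1 - c = (r - c) + 1 by omega]
      refine Finset.sum_congr rfl fun a ha => ?_
      rw [mem_range] at ha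
      rw [toeplitz, toeplitz, if_pos (by omega), if_pos (by omega), mul_comm]
      congr 3 <;> omega
    · rw [Finset.Ico_eq_empty (by omega), Finset.sum_empty, toeplitz, if_neg (by omega)]
  · intro i hi
    rw [mem_Ico] at hi
    rw [mem_range]
    omega

open Finset in
theorem IsTotallyPositiveTwo.mul {φ ψ : PowerSeries ℝ} (hφ : IsTotallyPositiveTwo φ)
    (hψ : IsTotallyPositiveTwo ψ) : IsTotallyPositiveTwo (φ * ψ) := by
  intro r s c d hrs hcd
  have hr : r < s + 1 := by omega
  have hs : s < s + 1 := by omega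
  rw [toeplitz_mul φ ψ hr, toeplitz_mul φ ψ hr, toeplitz_mul φ ψ hs, toeplitz_mul φ ψ hs,
    Finset.sum_mul_sum, Finset.sum_mul_sum, ← sub_nonneg, ← Finset.sum_sub_distrib]
  simp_rw [← Finset.sum_sub_distrib]
  set D : ℕ → ℕ → ℝ := fun i j =>
    toeplitz φ r i * toeplitz ψ i c * (toeplitz φ s j * toeplitz ψ j d) -
      toeplitz φ r i * toeplitz ψ i d * (toeplitz φ s j * toeplitz ψ j c)
  have hsymm : 2 * ∑ i ∈ range (s + 1), ∑ j ∈ range (s + 1), D i j =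
      ∑ i ∈ range (s + 1), ∑ j ∈ range (s + 1), (D i j + D j i) := by
    simp_rw [Finset.sum_add_distrib]
    rw [Finset.sum_comm (f := fun i j => D j i)]
    ring
  have hnonneg : 0 ≤ ∑ i ∈ range (s + 1), ∑ j ∈ range (s + 1), (D i j + D j i) := by
    refine Finset.sum_nonneg fun i _ => Finset.sum_nonneg fun j _ => ?_
    have hfactor : D i j + D j i =
        (toeplitz φ r i * toeplitz φ s j - toeplitz φ r j * toeplitz φ s i) *
          (toeplitz ψ i c * toeplitz ψ j d - toeplitz ψ i d * toeplitz ψ j c) := by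
      simp only [D]
      ring
    rw [hfactor]
    rcases le_total i j with hij | hij
    · have h1 := hφ r s i j hrs hij
      have h2 := hψ i j c d hij hcd
      exact mul_nonneg (by linarith) (by linarith)
    · have h1 := hφ r s j i hrs hij
      have h2 := hψ j i c d hij hcd
      exact mul_nonneg_of_nonpos_of_nonpos (by linarith) (by linarith)
  linarith

theorem IsTotallyPositiveTwo.pow {φ : PowerSeries ℝ} (hφ : IsTotallyPositiveTwo φ) {N : ℕ}
    (hN : 0 < N) : IsTotallyPositiveTwo (φ ^ N) := by
  induction N, hN using Nat.le_induction with
  | base => simpa using hφ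
  | succ n _ ih => exact pow_succ φ n ▸ ih.mul hφ

theorem IsTotallyPositiveTwo.coeff_mul_coeff_le {φ : PowerSeries ℝ} (hφ : IsTotallyPositiveTwo φ)
    {m n : ℕ} (hmn : m ≤ n) :
    PowerSeries.coeff m φ * PowerSeries.coeff (n + 1) φ ≤
      PowerSeries.coeff (m + 1) φ * PowerSeries.coeff n φ := by
  simpa [toeplitz] using hφ (m + 1) (n + 1) 0 1 (by omega) zero_le_one

theorem factorial_add_mul_factorial_add_le (x p q : ℕ) :
    (x + p).factorial * (x + q).factorial ≤ x.factorial * (x + p + q).factorial := by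
  induction p with
  | zero => simp
  | succ p ih =>
    rw [show x + (p + 1) = (x + p) + 1 by ring, show x + p + 1 + q = (x + p + q) + 1 by ring,
      Nat.factorial_succ, Nat.factorial_succ]
    calc (x + p + 1) * (x + p).factorial * (x + q).factorial
        = (x + p + 1) * ((x + p).factorial * (x + q).factorial) := by ring
      _ ≤ (x + p + q + 1) * (x.factorial * (x + p + q).factorial) :=
          Nat.mul_le_mul (by omega) ih
      _ = _ := by ring

/-- The power series `∑ xⁿ / (n + k)!`, that is, `f_k(x) / x^k`. -/
noncomputable def tailSeries (k : ℕ) : PowerSeries ℝ :=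
  PowerSeries.mk fun n => 1 / ((n + k).factorial : ℝ)

theorem coeff_tailSeries (k n : ℕ) :
    PowerSeries.coeff n (tailSeries k) = 1 / ((n + k).factorial : ℝ) :=
  PowerSeries.coeff_mk _ _

theorem coeff_tailSeries_pos (k n : ℕ) : 0 < PowerSeries.coeff n (tailSeries k) := by
  rw [coeff_tailSeries]
  positivity

theorem isTotallyPositiveTwo_tailSeries (k : ℕ) : IsTotallyPositiveTwo (tailSeries k) := by
  intro r s i j hrs hij
  simp only [toeplitz, coeff_tailSeries]
  by_cases h : j ≤ r
  · rw [if_pos h, if_pos (by omega), if_pos (by omega), if_pos (by omega), one_div_mul_one_div,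
      one_div_mul_one_div]
    refine one_div_le_one_div_of_le (by positivity) ?_
    have := factorial_add_mul_factorial_add_le (r - j + k) (j - i) (s - r)
    rw [show r - j + k + (j - i) = r - i + k by omega,
      show r - j + k + (s - r) = s - j + k by omega,
      show r - i + k + (s - r) = s - i + k by omega] at this
    exact_mod_cast this
  · rw [if_neg h, zero_mul]
    exact mul_nonneg (by split_ifs <;> positivity) (by split_ifs <;> positivity)

theorem coeff_tailSeries_pow_nonneg (k N n : ℕ) :
    0 ≤ PowerSeries.coeff n (tailSeries k ^ N) := by
  induction N generalizing n with
  | zero => rw [pow_zero, PowerSeries.coeff_one]; split_ifs <;> norm_num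
  | succ N ih =>
    rw [pow_succ, PowerSeries.coeff_mul]
    exact Finset.sum_nonneg fun x _ => mul_nonneg (ih _) (coeff_tailSeries_pos k _).le

theorem coeff_tailSeries_pow_pos (k : ℕ) {N : ℕ} (hN : 0 < N) (n : ℕ) :
    0 < PowerSeries.coeff n (tailSeries k ^ N) := by
  obtain ⟨N, rfl⟩ := Nat.exists_eq_succ_of_ne_zero hN.ne'
  rw [Nat.succ_eq_add_one, pow_succ, PowerSeries.coeff_mul]
  refine Finset.sum_pos' (fun x _ => mul_nonneg (coeff_tailSeries_pow_nonneg k _ _)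
    (coeff_tailSeries_pos k _).le) ⟨(0, n), by simp, mul_pos ?_ (coeff_tailSeries_pos k _)⟩
  rw [PowerSeries.coeff_zero_eq_constantCoeff_apply, map_pow,
    ← PowerSeries.coeff_zero_eq_constantCoeff_apply]
  exact pow_pos (coeff_tailSeries_pos k 0) N

open Finset in
theorem coeff_tailSeries_pow_le_succ (k : ℕ) {N : ℕ} (hN : 0 < N) (n : ℕ) :
    N * PowerSeries.coeff n (tailSeries k ^ N) ≤
      (k + 1) * ((n + 1) * PowerSeries.coeff (n + 1) (tailSeries k ^ N)) := by
  obtain ⟨N, rfl⟩ := Nat.exists_eq_succ_of_ne_zero hN.ne'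
  have hderiv : (n + 1) * PowerSeries.coeff (n + 1) (tailSeries k ^ (N + 1)) =
      (N + 1) * ∑ x ∈ antidiagonal n, PowerSeries.coeff x.1 (tailSeries k ^ N) *
        (PowerSeries.coeff (x.2 + 1) (tailSeries k) * (x.2 + 1)) := by
    have h := PowerSeries.coeff_derivative (tailSeries k ^ (N + 1)) n
    rw [Derivation.leibniz_pow, Nat.add_sub_cancel, smul_eq_mul, map_nsmul,
      PowerSeries.coeff_mul] at h
    simp_rw [PowerSeries.coeff_derivative] at h
    rw [mul_comm, ← h]
    simp
  rw [Nat.succ_eq_add_one, hderiv, pow_succ, PowerSeries.coeff_mul]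
  push_cast
  rw [mul_left_comm, Finset.mul_sum (a := (k : ℝ) + 1)]
  refine mul_le_mul_of_nonneg_left (Finset.sum_le_sum fun x _ => ?_) (by positivity)
  rw [mul_left_comm]
  refine mul_le_mul_of_nonneg_left ?_ (coeff_tailSeries_pow_nonneg k N _)
  rw [coeff_tailSeries, coeff_tailSeries, show x.2 + 1 + k = (x.2 + k) + 1 by ring,
    Nat.factorial_succ]
  push_cast
  have : (0 : ℝ) < (x.2 + k).factorial := by positivity
  rw [← sub_nonneg]
  have h : ((k : ℝ) + 1) * (1 / ((x.2 + k + 1) * (x.2 + k).factorial) * (x.2 + 1)) -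
      1 / (x.2 + k).factorial = k * x.2 / ((x.2 + k + 1) * (x.2 + k).factorial) := by
    field_simp
    ring
  rw [h]
  positivity

open Finset in
theorem HasSum.cauchyProduct_of_nonneg {p q : ℕ → ℝ} {a b : ℝ} (hp : HasSum p a)
    (hq : HasSum q b) (hp0 : ∀ n, 0 ≤ p n) (hq0 : ∀ n, 0 ≤ q n) :
    HasSum (fun n => ∑ x ∈ antidiagonal n, p x.1 * q x.2) (a * b) := by
  have hmul := hp.summable.mul_of_nonneg hq.summable hp0 hq0
  rw [← hp.tsum_eq, ← hq.tsum_eq,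
    hp.summable.tsum_mul_tsum_eq_tsum_sum_antidiagonal hq.summable hmul]
  exact (summable_sum_mul_antidiagonal_of_summable_mul hmul).hasSum

/-- The weights `coeff n φ * z ^ n` have total mass `a`, mean `μ` and variance `v`. -/
structure HasMoments (φ : PowerSeries ℝ) (z a μ v : ℝ) : Prop where
  mass : HasSum (fun n => PowerSeries.coeff n φ * z ^ n) a
  first : HasSum (fun n : ℕ => n * (PowerSeries.coeff n φ * z ^ n)) (μ * a)
  second : HasSum (fun n : ℕ => (n : ℝ) ^ 2 * (PowerSeries.coeff n φ * z ^ n)) ((v + μ ^ 2) * a)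

open Finset in
theorem HasMoments.mul {φ ψ : PowerSeries ℝ} {z a μ v b ν w : ℝ} (hz : 0 ≤ z)
    (hφ : HasMoments φ z a μ v) (hψ : HasMoments ψ z b ν w)
    (hφ0 : ∀ n, 0 ≤ PowerSeries.coeff n φ) (hψ0 : ∀ n, 0 ≤ PowerSeries.coeff n ψ) :
    HasMoments (φ * ψ) z (a * b) (μ + ν) (v + w) := by
  have hp0 (n : ℕ) : 0 ≤ PowerSeries.coeff n φ * z ^ n := mul_nonneg (hφ0 n) (by positivity)
  have hq0 (n : ℕ) : 0 ≤ PowerSeries.coeff n ψ * z ^ n := mul_nonneg (hψ0 n) (by positivity)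
  have hp1 (n : ℕ) : 0 ≤ n * (PowerSeries.coeff n φ * z ^ n) :=
    mul_nonneg (by positivity) (hp0 n)
  have hq1 (n : ℕ) : 0 ≤ n * (PowerSeries.coeff n ψ * z ^ n) :=
    mul_nonneg (by positivity) (hq0 n)
  have hp2 (n : ℕ) : 0 ≤ (n : ℝ) ^ 2 * (PowerSeries.coeff n φ * z ^ n) :=
    mul_nonneg (by positivity) (hp0 n)
  have hq2 (n : ℕ) : 0 ≤ (n : ℝ) ^ 2 * (PowerSeries.coeff n ψ * z ^ n) :=
    mul_nonneg (by positivity) (hq0 n)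
  have hexp (n : ℕ) : PowerSeries.coeff n (φ * ψ) * z ^ n = ∑ x ∈ antidiagonal n,
      (PowerSeries.coeff x.1 φ * z ^ x.1) * (PowerSeries.coeff x.2 ψ * z ^ x.2) := by
    rw [PowerSeries.coeff_mul, Finset.sum_mul]
    refine Finset.sum_congr rfl fun x hx => ?_
    rw [← mem_antidiagonal.1 hx, pow_add]
    ring
  refine ⟨?_, ?_, ?_⟩
  · exact (hφ.mass.cauchyProduct_of_nonneg hψ.mass hp0 hq0).congr_fun hexp
  · have h := (hφ.first.cauchyProduct_of_nonneg hψ.mass hp1 hq0).add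
      (hφ.mass.cauchyProduct_of_nonneg hψ.first hp0 hq1)
    rw [show (μ + ν) * (a * b) = μ * a * b + a * (ν * b) by ring]
    refine h.congr_fun fun n => ?_
    rw [hexp, Finset.mul_sum, ← Finset.sum_add_distrib]
    refine Finset.sum_congr rfl fun x hx => ?_
    rw [← mem_antidiagonal.1 hx]
    push_cast
    ring
  · have h := ((hφ.second.cauchyProduct_of_nonneg hψ.mass hp2 hq0).add
      ((hφ.first.cauchyProduct_of_nonneg hψ.first hp1 hq1).mul_left 2)).add
      (hφ.mass.cauchyProduct_of_nonneg hψ.second hp0 hq2)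
    rw [show (v + w + (μ + ν) ^ 2) * (a * b) =
      (v + μ ^ 2) * a * b + 2 * (μ * a * (ν * b)) + a * ((w + ν ^ 2) * b) by ring]
    refine h.congr_fun fun n => ?_
    rw [hexp, Finset.mul_sum, Finset.mul_sum, ← Finset.sum_add_distrib,
      ← Finset.sum_add_distrib]
    refine Finset.sum_congr rfl fun x hx => ?_
    rw [← mem_antidiagonal.1 hx]
    push_cast
    ring

theorem HasMoments.tailSeries_pow {k : ℕ} {z a μ v : ℝ} (hz : 0 ≤ z)
    (h : HasMoments (tailSeries k) z a μ v) {N : ℕ} (hN : 0 < N) :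
    HasMoments (tailSeries k ^ N) z (a ^ N) (N * μ) (N * v) := by
  induction N, hN using Nat.le_induction with
  | base => simpa using h
  | succ n _ ih =>
    have := ih.mul hz h (coeff_tailSeries_pow_nonneg k n) fun n => (coeff_tailSeries_pos k n).le
    convert this using 1 <;> push_cast <;> ring

theorem HasMoments.centered {φ : PowerSeries ℝ} {z a μ v : ℝ} (h : HasMoments φ z a μ v) :
    HasSum (fun n : ℕ => ((n : ℝ) - μ) ^ 2 * (PowerSeries.coeff n φ * z ^ n)) (v * a) := by
  rw [show v * a = (v + μ ^ 2) * a - 2 * μ * (μ * a) + μ ^ 2 * a by ring]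
  refine ((h.second.sub (h.first.mul_left (2 * μ))).add
    (h.mass.mul_left (μ ^ 2))).congr_fun fun n => ?_
  ring

open Finset in
/-- A sequence with total mass `a` and standard deviation at most `W` has a term of size at least
of order `a / W`. -/
theorem mass_le_of_forall_le {p : ℕ → ℝ} {a m v W P : ℝ} (hp : ∀ n, 0 ≤ p n) (hP : ∀ n, p n ≤ P)
    (hm : 0 ≤ m) (hW : 0 < W) (hv : v ≤ W ^ 2) (ha : 0 ≤ a) (hmass : HasSum p a)
    (hvar : HasSum (fun n : ℕ => ((n : ℝ) - m) ^ 2 * p n) (v * a)) :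
    3 / 4 * a ≤ (4 * W + 1) * P := by
  have hP0 : 0 ≤ P := (hp 0).trans (hP 0)
  set S : Finset ℕ := Icc ⌈m - 2 * W⌉₊ ⌊m + 2 * W⌋₊ with hS
  have hcard : (#S : ℝ) ≤ 4 * W + 1 := by
    rw [hS, Nat.card_Icc]
    rcases le_total ⌈m - 2 * W⌉₊ (⌊m + 2 * W⌋₊ + 1) with h | h
    · rw [Nat.cast_sub h]
      have h1 := Nat.floor_le (show 0 ≤ m + 2 * W by positivity)
      have h2 := Nat.le_ceil (m - 2 * W)
      push_cast
      linarith
    · rw [Nat.sub_eq_zero_of_le h]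
      simp only [Nat.cast_zero]
      positivity
  have hdiff : HasSum (fun n : ℕ => p n - 1 / (4 * W ^ 2) * (((n : ℝ) - m) ^ 2 * p n))
      (a - 1 / (4 * W ^ 2) * (v * a)) := hmass.sub (hvar.mul_left _)
  have hind : HasSum (fun n : ℕ => if n ∈ S then p n else 0) (∑ n ∈ S, p n) := by
    rw [← Finset.sum_congr rfl fun n (hn : n ∈ S) => if_pos (c := n ∈ S) (e := (0 : ℝ)) hn]
    exact hasSum_sum_of_ne_finset_zero fun n hn => if_neg hn
  have hle : a - 1 / (4 * W ^ 2) * (v * a) ≤ ∑ n ∈ S, p n := by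
    refine hasSum_le (fun n => ?_) hdiff hind
    have hpn := hp n
    split_ifs with h
    · have : 0 ≤ 1 / (4 * W ^ 2) * (((n : ℝ) - m) ^ 2 * p n) := by positivity
      linarith
    · have hfar : (2 * W) ^ 2 ≤ ((n : ℝ) - m) ^ 2 := by
        rw [hS, mem_Icc, not_and_or, not_le, not_le] at h
        rcases h with h | h
        · have := Nat.lt_ceil.1 h
          nlinarith
        · have := (Nat.floor_lt (show 0 ≤ m + 2 * W by positivity)).1 h
          nlinarith
      have : p n ≤ 1 / (4 * W ^ 2) * (((n : ℝ) - m) ^ 2 * p n) := by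
        rw [← mul_assoc]
        refine le_mul_of_one_le_left hpn ?_
        rw [div_mul_eq_mul_div, one_mul, one_le_div (by positivity)]
        linarith
      linarith
  have hvar' : 1 / (4 * W ^ 2) * (v * a) ≤ 1 / 4 * a := by
    rw [← mul_assoc]
    refine mul_le_mul_of_nonneg_right ?_ ha
    rw [div_mul_eq_mul_div, one_mul, div_le_iff₀ (by positivity)]
    linarith
  have hsum : ∑ n ∈ S, p n ≤ #S * P := by
    simpa using Finset.sum_le_card_nsmul S p P fun n _ => hP n
  have := mul_le_mul_of_nonneg_right hcard hP0
  linarith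

theorem summable_sq_mul_tailSeries (k : ℕ) {z : ℝ} (hz : 0 ≤ z) :
    Summable fun n : ℕ => (n : ℝ) ^ 2 * (PowerSeries.coeff n (tailSeries k) * z ^ n) := by
  refine Summable.of_nonneg_of_le
    (fun n => mul_nonneg (by positivity)
      (mul_nonneg (coeff_tailSeries_pos k n).le (by positivity))) (fun n => ?_)
    (Real.summable_pow_div_factorial (4 * z))
  rw [coeff_tailSeries, mul_pow]
  have h1 : (n : ℝ) ^ 2 ≤ 4 ^ n := by
    have : (n : ℝ) ≤ 2 ^ n := by exact_mod_cast Nat.lt_two_pow_self.le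
    calc (n : ℝ) ^ 2 ≤ (2 ^ n) ^ 2 := by gcongr
      _ = 4 ^ n := by rw [← pow_mul, mul_comm, pow_mul]; norm_num
  have h2 : 1 / ((n + k).factorial : ℝ) ≤ 1 / (n.factorial : ℝ) :=
    one_div_le_one_div_of_le (by positivity)
      (by exact_mod_cast Nat.factorial_le (Nat.le_add_right n k))
  calc (n : ℝ) ^ 2 * (1 / ((n + k).factorial : ℝ) * z ^ n)
      ≤ 4 ^ n * (1 / (n.factorial : ℝ) * z ^ n) := by gcongr
    _ = 4 ^ n * z ^ n / n.factorial := by ring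

theorem summable_mul_tailSeries (k : ℕ) {z : ℝ} (hz : 0 ≤ z) :
    Summable fun n : ℕ => (n : ℝ) * (PowerSeries.coeff n (tailSeries k) * z ^ n) := by
  have hnonneg (n : ℕ) : 0 ≤ PowerSeries.coeff n (tailSeries k) * z ^ n :=
    mul_nonneg (coeff_tailSeries_pos k n).le (by positivity)
  refine Summable.of_nonneg_of_le (fun n => mul_nonneg (by positivity) (hnonneg n)) (fun n => ?_)
    (summable_sq_mul_tailSeries k hz)
  refine mul_le_mul_of_nonneg_right ?_ (hnonneg n)
  exact_mod_cast Nat.le_self_pow two_ne_zero n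

theorem summable_tailSeries (k : ℕ) {z : ℝ} (hz : 0 ≤ z) :
    Summable fun n : ℕ => PowerSeries.coeff n (tailSeries k) * z ^ n := by
  refine Summable.of_nonneg_of_le
    (fun n => mul_nonneg (coeff_tailSeries_pos k n).le (by positivity)) (fun n => ?_)
    (Real.summable_pow_div_factorial z)
  rw [coeff_tailSeries, one_div_mul_eq_div]
  gcongr
  omega

/-- The sum of the power series `tailSeries k` at `z`. -/
noncomputable def tailSum (k : ℕ) (z : ℝ) : ℝ :=
  ∑' n : ℕ, PowerSeries.coeff n (tailSeries k) * z ^ n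

theorem one_div_factorial_le_tailSum (k : ℕ) {z : ℝ} (hz : 0 ≤ z) :
    1 / (k.factorial : ℝ) ≤ tailSum k z := by
  have h := (summable_tailSeries k hz).le_tsum 0 fun n _ =>
    mul_nonneg (coeff_tailSeries_pos k n).le (by positivity)
  simpa [tailSum, coeff_tailSeries] using h

theorem tailSum_pos (k : ℕ) {z : ℝ} (hz : 0 ≤ z) : 0 < tailSum k z :=
  lt_of_lt_of_le (by positivity) (one_div_factorial_le_tailSum k hz)

/-- The moments of the weights `zⁿ / (n + k)!`, with a variance that is bounded uniformly for
`z` in a bounded set. -/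
theorem exists_hasMoments_tailSeries (k : ℕ) (R : ℝ) :
    ∃ V : ℝ, 1 ≤ V ∧ ∀ z, 0 ≤ z → z ≤ R → ∃ μ v : ℝ, 0 ≤ μ ∧ v ≤ V ∧
      HasMoments (tailSeries k) z (tailSum k z) μ v := by
  set second : ℝ → ℝ := fun z =>
    ∑' n : ℕ, (n : ℝ) ^ 2 * (PowerSeries.coeff n (tailSeries k) * z ^ n)
  refine ⟨max 1 (k.factorial * second R), le_max_left _ _, fun z hz hzR => ?_⟩
  have hR : 0 ≤ R := hz.trans hzR
  have hG := tailSum_pos k hz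
  set μ : ℝ := (∑' n : ℕ, (n : ℝ) * (PowerSeries.coeff n (tailSeries k) * z ^ n)) / tailSum k z
    with hμ
  refine ⟨μ, second z / tailSum k z - μ ^ 2, ?_, ?_, ⟨?_, ?_, ?_⟩⟩
  · exact div_nonneg (tsum_nonneg fun n => mul_nonneg (by positivity)
      (mul_nonneg (coeff_tailSeries_pos k n).le (by positivity))) hG.le
  · refine le_trans ?_ (le_max_right _ _)
    have h1 : second z ≤ second R := by
      refine (summable_sq_mul_tailSeries k hz).tsum_le_tsum (fun n => ?_)
        (summable_sq_mul_tailSeries k hR)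
      have := (coeff_tailSeries_pos k n).le
      gcongr
    have h0 : 0 ≤ second R := tsum_nonneg fun n => mul_nonneg (by positivity)
      (mul_nonneg (coeff_tailSeries_pos k n).le (by positivity))
    have h2 : second z / tailSum k z ≤ k.factorial * second R := by
      rw [div_le_iff₀ hG]
      have h3 := one_div_factorial_le_tailSum k hz
      rw [div_le_iff₀ (by positivity)] at h3
      nlinarith [mul_le_mul_of_nonneg_right h3 h0]
    nlinarith [sq_nonneg μ]
  · exact (summable_tailSeries k hz).hasSum
  · rw [hμ, div_mul_cancel₀ _ hG.ne']
    exact (summable_mul_tailSeries k hz).hasSum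
  · rw [sub_add_cancel, div_mul_cancel₀ _ hG.ne']
    exact (summable_sq_mul_tailSeries k hz).hasSum

theorem fk_eq_pow_mul_tailSum (k : ℕ) (z : ℝ) : fk k z = z ^ k * tailSum k z := by
  rw [fk, tailSum, ← tsum_mul_left]
  refine tsum_congr fun n => ?_
  rw [coeff_tailSeries, pow_add]
  ring

theorem mul_fk_pred {k : ℕ} (hk : 0 < k) {z : ℝ} (hz : 0 ≤ z) :
    z * fk (k - 1) z = z ^ k *
      (∑' n : ℕ, (n : ℝ) * (PowerSeries.coeff n (tailSeries k) * z ^ n) + k * tailSum k z) := by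
  obtain ⟨k, rfl⟩ := Nat.exists_eq_succ_of_ne_zero hk.ne'
  rw [fk, tailSum, ← tsum_mul_left (a := z), ← tsum_mul_left (a := ((k.succ : ℕ) : ℝ)),
    ← (summable_mul_tailSeries _ hz).tsum_add ((summable_tailSeries _ hz).mul_left _),
    ← tsum_mul_left]
  refine tsum_congr fun n => ?_
  rw [coeff_tailSeries, Nat.succ_eq_add_one, Nat.add_sub_cancel, ← add_assoc, Nat.factorial_succ,
    pow_add, pow_succ]
  push_cast
  field_simp
  ring

/-- If the weights `zⁿ / (n + k)!` have mean `μ`, then `z` minimizes `x ↦ tailSum k x / x ^ μ`. -/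
theorem exp_mul_tailSum_le {k : ℕ} {z w μ : ℝ} (hz : 0 < z) (hw : 0 < w)
    (hμ : ∑' n : ℕ, (n : ℝ) * (PowerSeries.coeff n (tailSeries k) * z ^ n) = μ * tailSum k z) :
    Real.exp (μ * Real.log (w / z)) * tailSum k z ≤ tailSum k w := by
  set t := Real.log (w / z) with ht
  have hsum : HasSum (fun n : ℕ => Real.exp (μ * t) * ((1 - μ * t) *
      (PowerSeries.coeff n (tailSeries k) * z ^ n) +
        t * (n * (PowerSeries.coeff n (tailSeries k) * z ^ n))))
      (Real.exp (μ * t) * ((1 - μ * t) * tailSum k z + t * (μ * tailSum k z))) :=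
    (((summable_tailSeries k hz.le).hasSum.mul_left _).add
      ((hμ ▸ (summable_mul_tailSeries k hz.le).hasSum).mul_left _)).mul_left _
  have hle := hasSum_le (fun n => ?_) hsum (summable_tailSeries k hw.le).hasSum
  · calc Real.exp (μ * t) * tailSum k z
        = Real.exp (μ * t) * ((1 - μ * t) * tailSum k z + t * (μ * tailSum k z)) := by ring
      _ ≤ tailSum k w := hle
  · have hwn : w ^ n = Real.exp (μ * t) * Real.exp (n * t - μ * t) * z ^ n := by
      rw [← Real.exp_add, add_sub_cancel, Real.exp_nat_mul, ht, Real.exp_log (by positivity),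
        div_pow, div_mul_cancel₀ _ (by positivity)]
    have htangent := Real.add_one_le_exp (n * t - μ * t)
    have hc : 0 ≤ Real.exp (μ * t) * (PowerSeries.coeff n (tailSeries k) * z ^ n) :=
      mul_nonneg (by positivity) (mul_nonneg (coeff_tailSeries_pos k n).le (by positivity))
    rw [hwn]
    nlinarith [mul_le_mul_of_nonneg_left htangent hc]

/-- At `z = b_L / b_{L+1}` the term of index `L + 1` of `∑ b_n z ^ n` is the largest one, where
`b_n` are the coefficients of a power of `tailSeries k`. -/
theorem coeff_mul_pow_le_mode (k : ℕ) {N : ℕ} (hN : 0 < N) (L : ℕ) (n : ℕ) :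
    PowerSeries.coeff n (tailSeries k ^ N) * (PowerSeries.coeff L (tailSeries k ^ N) /
        PowerSeries.coeff (L + 1) (tailSeries k ^ N)) ^ n ≤
      PowerSeries.coeff (L + 1) (tailSeries k ^ N) * (PowerSeries.coeff L (tailSeries k ^ N) /
        PowerSeries.coeff (L + 1) (tailSeries k ^ N)) ^ (L + 1) := by
  set b : ℕ → ℝ := fun n => PowerSeries.coeff n (tailSeries k ^ N)
  have hpos (n : ℕ) : 0 < b n := coeff_tailSeries_pow_pos k hN n
  have hlc {m n : ℕ} (h : m ≤ n) : b m * b (n + 1) ≤ b (m + 1) * b n :=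
    ((isTotallyPositiveTwo_tailSeries k).pow hN).coeff_mul_coeff_le h
  set w := b L / b (L + 1) with hw
  have hw0 : 0 < w := div_pos (hpos _) (hpos _)
  have hup (n : ℕ) (hn : n ≤ L) : b n * w ^ n ≤ b (n + 1) * w ^ (n + 1) := by
    have : b n ≤ b (n + 1) * w := by
      rw [hw, mul_div_assoc', le_div_iff₀ (hpos _)]
      exact hlc hn
    rw [pow_succ, ← mul_assoc, mul_right_comm]
    exact mul_le_mul_of_nonneg_right this (by positivity)
  have hdown (n : ℕ) (hn : L ≤ n) : b (n + 1) * w ^ (n + 1) ≤ b n * w ^ n := by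
    have : b (n + 1) * w ≤ b n := by
      rw [hw, mul_div_assoc', div_le_iff₀ (hpos _)]
      linarith [hlc hn]
    rw [pow_succ, ← mul_assoc, mul_right_comm]
    exact mul_le_mul_of_nonneg_right this (by positivity)
  change b n * w ^ n ≤ b (L + 1) * w ^ (L + 1)
  rcases le_total n (L + 1) with h | h
  · refine Nat.decreasingInduction' (P := fun n => b n * w ^ n ≤ b (L + 1) * w ^ (L + 1))
      (fun m hm _ ih => (hup m (by omega)).trans ih) h le_rfl
  · induction n, h using Nat.le_induction with
    | base => exact le_rfl
    | succ n hn ih => exact (hdown n (by omega)).trans ih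

/-- Lower bound for the coefficients of powers of `tailSeries k` by the saddle point value. -/
theorem exists_le_coeff_tailSeries_pow (k : ℕ) (C : ℝ) :
    ∃ c : ℝ, 0 < c ∧ ∀ N L : ℕ, 0 < N → 0 < L → (L : ℝ) ≤ C * N → ∀ z : ℝ, 0 < z →
      ∑' n : ℕ, (n : ℝ) * (PowerSeries.coeff n (tailSeries k) * z ^ n) =
        (L : ℝ) / N * tailSum k z →
      c * (√(N : ℝ))⁻¹ * tailSum k z ^ N ≤
        PowerSeries.coeff L (tailSeries k ^ N) * z ^ L := by
  obtain ⟨V, hV1, hV⟩ := exists_hasMoments_tailSeries k ((k + 1) * C)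
  have hsV : 1 ≤ √V := Real.one_le_sqrt.2 hV1
  refine ⟨3 / 20 / √V, by positivity, fun N L hN hL hLC z hz hmean => ?_⟩
  obtain ⟨L, rfl⟩ := Nat.exists_eq_succ_of_ne_zero hL.ne'
  rw [Nat.succ_eq_add_one] at *
  have hNR : (0 : ℝ) < N := by exact_mod_cast hN
  have hsN : 1 ≤ √(N : ℝ) := Real.one_le_sqrt.2 (by exact_mod_cast hN)
  set b : ℕ → ℝ := fun n => PowerSeries.coeff n (tailSeries k ^ N)
  have hpos (n : ℕ) : 0 < b n := coeff_tailSeries_pow_pos k hN n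
  set w := b L / b (L + 1) with hw
  have hw0 : 0 < w := div_pos (hpos _) (hpos _)
  have hwC : w ≤ (k + 1) * C := by
    rw [hw, div_le_iff₀ (hpos _)]
    refine le_of_mul_le_mul_left ?_ hNR
    calc (N : ℝ) * b L ≤ (k + 1) * ((L + 1) * b (L + 1)) :=
          coeff_tailSeries_pow_le_succ k hN L
      _ ≤ (k + 1) * ((C * N) * b (L + 1)) := by
          push_cast at hLC
          have := (hpos (L + 1)).le
          gcongr
      _ = N * ((k + 1) * C * b (L + 1)) := by ring
  obtain ⟨μ, v, hμ0, hvV, hmom⟩ := hV w hw0.le hwC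
  have hmomN := hmom.tailSeries_pow hw0.le hN
  have hGw := tailSum_pos k hw0.le
  have hGz := tailSum_pos k hz.le
  have hmode : 3 / 4 * tailSum k w ^ N ≤
      (4 * (√(N : ℝ) * √V) + 1) * (b (L + 1) * w ^ (L + 1)) := by
    refine mass_le_of_forall_le (fun n => ?_) (coeff_mul_pow_le_mode k hN L)
      (by positivity) (by positivity) ?_ (by positivity) hmomN.mass hmomN.centered
    · exact mul_nonneg (hpos n).le (by positivity)
    · rw [mul_pow, Real.sq_sqrt hNR.le, Real.sq_sqrt (by linarith)]
      gcongr
  have hsaddle : (w / z) ^ (L + 1) * tailSum k z ^ N ≤ tailSum k w ^ N := by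
    have h := pow_le_pow_left₀ (by positivity) (exp_mul_tailSum_le hz hw0 hmean) N
    rw [mul_pow, ← Real.exp_nat_mul, ← mul_assoc, mul_div_cancel₀ _ hNR.ne', Real.exp_nat_mul,
      Real.exp_log (by positivity)] at h
    exact h
  have hterm : 0 ≤ b (L + 1) * w ^ (L + 1) := mul_nonneg (hpos _).le (by positivity)
  have hone : 1 ≤ √(N : ℝ) * √V := one_le_mul_of_one_le_of_one_le hsN hsV
  have hmain : 3 / 20 * ((w / z) ^ (L + 1) * tailSum k z ^ N) ≤
      √(N : ℝ) * √V * (b (L + 1) * w ^ (L + 1)) := by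
    nlinarith [mul_le_mul_of_nonneg_right hone hterm]
  rw [div_pow, div_mul_eq_mul_div (w ^ (L + 1)), mul_div_assoc', div_le_iff₀ (by positivity)]
    at hmain
  have hwL : 0 < w ^ (L + 1) := by positivity
  have hmain' : 3 / 20 * tailSum k z ^ N ≤ √(N : ℝ) * √V * (b (L + 1) * z ^ (L + 1)) := by
    refine le_of_mul_le_mul_left ?_ hwL
    linarith
  calc 3 / 20 / √V * (√(N : ℝ))⁻¹ * tailSum k z ^ N
      = 3 / 20 * tailSum k z ^ N / (√(N : ℝ) * √V) := by field_simp
    _ ≤ b (L + 1) * z ^ (L + 1) := by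
        rw [div_le_iff₀ (by positivity)]
        linarith

open Finset in
theorem exists_le_card_functions_with_large_fibers {k : ℕ} (hk : 0 < k) (C : ℝ) :
    ∃ c : ℝ, 0 < c ∧ ∀ N M : ℕ, 0 < N → k * N < M → (M : ℝ) ≤ C * N → ∀ z : ℝ, 0 < z →
      z * fk (k - 1) z / fk k z = (M : ℝ) / N →
      c * (√(N : ℝ))⁻¹ * M.factorial * fk k z ^ N / z ^ M ≤
        (#{p : Fin M → Fin N | ∀ i, k ≤ #{r | p r = i}} : ℝ) := by
  obtain ⟨c, hc, h⟩ := exists_le_coeff_tailSeries_pow k C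
  refine ⟨c, hc, fun N M hN hkM hMC z hz hroot => ?_⟩
  obtain ⟨L, hL, rfl⟩ : ∃ L, 0 < L ∧ M = L + k * N := ⟨M - k * N, by omega, by omega⟩
  have hNR : (0 : ℝ) < N := by exact_mod_cast hN
  have hG := tailSum_pos k hz.le
  have hmean : ∑' n : ℕ, (n : ℝ) * (PowerSeries.coeff n (tailSeries k) * z ^ n) =
      (L : ℝ) / N * tailSum k z := by
    rw [mul_fk_pred hk hz.le, fk_eq_pow_mul_tailSum, mul_div_mul_left _ _ (by positivity),
      div_eq_iff hG.ne'] at hroot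
    push_cast at hroot
    rw [add_div, mul_div_cancel_right₀ _ hNR.ne', add_mul] at hroot
    linarith
  have hLC : (L : ℝ) ≤ C * N := by
    push_cast at hMC
    have : (0 : ℝ) ≤ k * N := by positivity
    linarith
  have hcoeff := h N L hN hL hLC z hz hmean
  rw [card_functions_eq_coeff, div_le_iff₀ (by positivity), fk_eq_pow_mul_tailSum, mul_pow,
    ← pow_mul, pow_add]
  calc c * (√(N : ℝ))⁻¹ * (L + k * N).factorial * (z ^ (k * N) * tailSum k z ^ N)
      = ((L + k * N).factorial * z ^ (k * N)) * (c * (√(N : ℝ))⁻¹ * tailSum k z ^ N) := by ring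
    _ ≤ ((L + k * N).factorial * z ^ (k * N)) *
          (PowerSeries.coeff L (tailSeries k ^ N) * z ^ L) := by gcongr
    _ = _ := by rw [tailSeries]; ring

theorem admissible_sequences_lower_bound
    (k1 k2 : ℕ) (hk1 : 2 ≤ k1) (hk2 : 2 ≤ k2) (ε C1 : ℝ) (hε : 0 < ε)
    (hC1 : ((max k1 k2 : ℕ) : ℝ) + ε < C1) :
    ∃ c0 : ℝ, 0 < c0 ∧ ∀ N M : ℕ, 0 < N → 0 < M →
      (((max k1 k2 : ℕ) : ℝ) + ε) * N ≤ M → (M : ℝ) ≤ C1 * N →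
      ∀ zi zo : ℝ, 0 < zi → 0 < zo →
        zi * fk (k1 - 1) zi / fk k1 zi = (M : ℝ) / N →
        zo * fk (k2 - 1) zo / fk k2 zo = (M : ℝ) / N →
        c0 * (N : ℝ)⁻¹ * (M.factorial : ℝ) ^ 2 * fk k1 zi ^ N * fk k2 zo ^ N /
            (zi ^ M * zo ^ M) ≤
          (Nat.card {x : Fin (2 * M) → Fin N // Admissible k1 k2 N M x} : ℝ) := by
  obtain ⟨c1, hc1, h1⟩ := exists_le_card_functions_with_large_fibers (k := k1) (by omega) C1
  obtain ⟨c2, hc2, h2⟩ := exists_le_card_functions_with_large_fibers (k := k2) (by omega) C1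
  refine ⟨c1 * c2, by positivity, fun N M hN _ hlow hupp zi zo hzi hzo hri hro => ?_⟩
  have hNR : (0 : ℝ) < N := by exact_mod_cast hN
  have hlt {k : ℕ} (hk : k ≤ max k1 k2) : k * N < M := by
    have hkR : (k : ℝ) ≤ (max k1 k2 : ℕ) := by exact_mod_cast hk
    have : (k * N : ℝ) < M := by
      nlinarith [mul_le_mul_of_nonneg_right hkR hNR.le, mul_pos hε hNR]
    exact_mod_cast this
  have e1 := h1 N M hN (hlt (le_max_left _ _)) hupp zi hzi hri
  have e2 := h2 N M hN (hlt (le_max_right _ _)) hupp zo hzo hro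
  have hcard := card_mul_card_le_card_admissible k1 k2 N M
  have hfk (k : ℕ) {z : ℝ} (hz : 0 < z) : 0 < fk k z := by
    rw [fk_eq_pow_mul_tailSum]
    exact mul_pos (by positivity) (tailSum_pos k hz.le)
  have hfi := hfk k1 hzi
  have hfo := hfk k2 hzo
  have hsqrt : (N : ℝ)⁻¹ = (√(N : ℝ))⁻¹ * (√(N : ℝ))⁻¹ := by
    rw [← mul_inv, Real.mul_self_sqrt hNR.le]
  calc _ = (c1 * (√(N : ℝ))⁻¹ * M.factorial * fk k1 zi ^ N / zi ^ M) *
        (c2 * (√(N : ℝ))⁻¹ * M.factorial * fk k2 zo ^ N / zo ^ M) := by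
        rw [hsqrt, div_mul_div_comm]
        ring
    _ ≤ _ := mul_le_mul e1 e2 (by positivity) (by positivity)
    _ ≤ _ := by exact_mod_cast hcard
end

section
/- For every integer k ≥ 1 and every real x > 0 one has the identity f_{k−1}(x)/f_k(x) = 1 + ( ∑_{j≥k} ((k−1)!/j!) · x^{j−k+1} )^{-1}; consequently the function x ↦ f_{k−1}(x)/f_k(x) is strictly decreasing on (0,∞), i.e. the logarithmic derivative of f_k is strictly decreasing, so f_k is strictly log-concave on (0,∞). -/
theorem summable_fk (k : ℕ) (x : ℝ) :
    Summable fun n : ℕ => x ^ (n + k) / (n + k).factorial :=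
  (summable_nat_add_iff k).2 (Real.summable_pow_div_factorial x)

theorem fk_pos (k : ℕ) {x : ℝ} (hx : 0 < x) : 0 < fk k x :=
  (summable_fk k x).tsum_pos (fun _ => by positivity) 0 (by positivity)

theorem fk_zero (x : ℝ) : fk 0 x = Real.exp x := by
  simp [fk, Real.exp_eq_exp_ℝ, NormedSpace.exp_eq_tsum_div]

theorem fk_eq_add_fk_succ (k : ℕ) (x : ℝ) :
    fk k x = x ^ k / k.factorial + fk (k + 1) x := by
  simp only [fk, (summable_fk k x).tsum_eq_zero_add, zero_add, add_right_comm _ 1 k, ← add_assoc]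

theorem hasDerivAt_fk_succ (k : ℕ) (x : ℝ) : HasDerivAt (fk (k + 1)) (fk k x) x := by
  induction k with
  | zero =>
    have h : fk (0 + 1) = fun y => Real.exp y - 1 := by
      funext y
      have := fk_eq_add_fk_succ 0 y
      simp only [fk_zero, pow_zero, Nat.factorial_zero, Nat.cast_one, div_one] at this
      linarith
    rw [h, fk_zero]
    exact (Real.hasDerivAt_exp x).sub_const 1
  | succ k ih =>
    have h : fk (k + 1 + 1) = fun y => fk (k + 1) y - y ^ (k + 1) / (k + 1).factorial := by
      funext y
      linarith [fk_eq_add_fk_succ (k + 1) y]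
    rw [h]
    refine (ih.sub ((hasDerivAt_pow (k + 1) x).div_const ((k + 1).factorial : ℝ))).congr_deriv ?_
    rw [fk_eq_add_fk_succ k x, Nat.factorial_succ]
    push_cast
    field_simp
    simp

theorem fk_succ_term (k n : ℕ) (x : ℝ) :
    x ^ (n + (k + 1)) / (n + (k + 1)).factorial =
      x ^ k / k.factorial * ((k.factorial : ℝ) / (n + (k + 1)).factorial * x ^ (n + 1)) := by
  have : (k.factorial : ℝ) ≠ 0 := by positivity
  field_simp
  ring

theorem fk_succ_eq_mul_tsum (k : ℕ) (x : ℝ) :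
    fk (k + 1) x = x ^ k / k.factorial *
      ∑' n : ℕ, (k.factorial : ℝ) / (n + (k + 1)).factorial * x ^ (n + 1) := by
  rw [fk, ← tsum_mul_left]
  exact tsum_congr fun n => fk_succ_term k n x

theorem summable_factorial_div_mul_pow (k : ℕ) {x : ℝ} (hx : 0 < x) :
    Summable fun n : ℕ => (k.factorial : ℝ) / (n + (k + 1)).factorial * x ^ (n + 1) := by
  have h : x ^ k / k.factorial ≠ 0 := by positivity
  rw [← summable_mul_left_iff h]
  exact (summable_fk (k + 1) x).congr fun n => fk_succ_term k n x

theorem fk_div_fk_succ (k : ℕ) {x : ℝ} (hx : 0 < x) :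
    fk k x / fk (k + 1) x =
      1 + (∑' n : ℕ, (k.factorial : ℝ) / (n + (k + 1)).factorial * x ^ (n + 1))⁻¹ := by
  have h : x ^ k / k.factorial ≠ 0 := by positivity
  rw [fk_eq_add_fk_succ k x, add_div, div_self (fk_pos (k + 1) hx).ne', add_comm,
    fk_succ_eq_mul_tsum, ← div_div, div_self h, one_div]

theorem strictAntiOn_fk_div_fk_succ (k : ℕ) :
    StrictAntiOn (fun x : ℝ => fk k x / fk (k + 1) x) (Set.Ioi 0) := by
  intro x hx y hy hxy
  have hx : 0 < x := hx
  have hy : 0 < y := hy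
  simp only [fk_div_fk_succ k hx, fk_div_fk_succ k hy]
  have hpos := (summable_factorial_div_mul_pow k hx).tsum_pos
    (fun _ => by positivity) 0 (by positivity)
  have hlt := Summable.tsum_lt_tsum (i := 0)
    (fun n => show (k.factorial : ℝ) / (n + (k + 1)).factorial * x ^ (n + 1) ≤
      (k.factorial : ℝ) / (n + (k + 1)).factorial * y ^ (n + 1) by gcongr)
    (by gcongr) (summable_factorial_div_mul_pow k hx)
    (summable_factorial_div_mul_pow k hy)
  gcongr

theorem strictConcaveOn_log_fk_succ (k : ℕ) :
    StrictConcaveOn ℝ (Set.Ioi 0) (fun x : ℝ => Real.log (fk (k + 1) x)) := by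
  have hderiv : ∀ x ∈ Set.Ioi (0 : ℝ),
      HasDerivAt (fun x => Real.log (fk (k + 1) x)) (fk k x / fk (k + 1) x) x :=
    fun x hx => (hasDerivAt_fk_succ k x).log (fk_pos (k + 1) hx).ne'
  refine StrictAntiOn.strictConcaveOn_of_deriv (convex_Ioi 0)
    (fun x hx => (hderiv x hx).continuousAt.continuousWithinAt) ?_
  rw [interior_Ioi]
  exact (strictAntiOn_fk_div_fk_succ k).congr fun x hx => (hderiv x hx).deriv.symm

theorem fk_ratio_identity_and_log_concavity (k : ℕ) (hk : 1 ≤ k) :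
    (∀ x : ℝ, 0 < x →
      fk (k - 1) x / fk k x =
        1 + (∑' n : ℕ, ((k - 1).factorial : ℝ) / (n + k).factorial * x ^ (n + 1))⁻¹) ∧
    StrictAntiOn (fun x : ℝ => fk (k - 1) x / fk k x) (Set.Ioi 0) ∧
    StrictConcaveOn ℝ (Set.Ioi 0) (fun x : ℝ => Real.log (fk k x)) := by
  obtain ⟨m, rfl⟩ := Nat.exists_eq_add_of_le' hk
  exact ⟨fun x hx => fk_div_fk_succ m hx, strictAntiOn_fk_div_fk_succ m,
    strictConcaveOn_log_fk_succ m⟩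
end

section
/- Fix an integer k ≥ 1, positive integers N, M, ν with 1 ≤ ν ≤ N−1, and positive integers μ1, m2 with μ1 + m2 = M. Let z > 0 satisfy z·f_{k−1}(z)/f_k(z) = M/N. Then for all reals x1 > 0 and x > 0: f_k( (ν·x1 + (N−ν)·x)/N )^N / ( x1^{μ1} · x^{m2} ) ≥ ( f_k(z)^N / z^M ) · (M/N)^M · (ν/μ1)^{μ1} · ((N−ν)/m2)^{m2}, with equality when x1 = (N·z/M)·(μ1/ν) and x = (N·z/M)·(m2/(N−ν)). -/
/-- Differentiating the series termwise: `∑_{j ≥ k} j x^j / j! = x f_{k-1}(x)`. -/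
theorem hasSum_index_mul_fk {k : ℕ} (hk : 1 ≤ k) (x : ℝ) :
    HasSum (fun n : ℕ => ((n + k : ℕ) : ℝ) * (x ^ (n + k) / (n + k).factorial))
      (x * fk (k - 1) x) := by
  obtain ⟨l, rfl⟩ : ∃ l, k = l + 1 := ⟨k - 1, by omega⟩
  have hterm (n : ℕ) : ((n + (l + 1) : ℕ) : ℝ) * (x ^ (n + (l + 1)) /
      (n + (l + 1)).factorial) = x * (x ^ (n + l) / (n + l).factorial) := by
    rw [← add_assoc, Nat.factorial_succ, pow_succ]
    push_cast
    field_simp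
  simp only [hterm]
  exact (summable_fk l x).hasSum.mul_left x

/-- If `z f_{k-1}(z) / f_k(z) = a` then `y ↦ f_k(y) / y ^ a` is minimized at `z`. -/
theorem rpow_mul_fk_le_fk {k : ℕ} (hk : 1 ≤ k) {y z a : ℝ} (hy : 0 < y) (hz : 0 < z)
    (hroot : z * fk (k - 1) z / fk k z = a) :
    (y / z) ^ a * fk k z ≤ fk k y := by
  have hf := fk_pos k hz
  have hr : 0 < y / z := div_pos hy hz
  rw [div_eq_iff hf.ne'] at hroot
  have h0 := (summable_fk k z).hasSum
  have h1 := hasSum_index_mul_fk hk z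
  have hlower := ((h0.mul_left (1 - a * Real.log (y / z))).add
    (h1.mul_left (Real.log (y / z)))).mul_left ((y / z) ^ a)
  have hle := hasSum_le (fun n => ?_) hlower (summable_fk k y).hasSum
  · refine le_trans (le_of_eq ?_) hle
    rw [hroot]
    unfold fk
    ring
  · have hexp : (y / z) ^ a * Real.exp ((((n + k : ℕ) : ℝ) - a) * Real.log (y / z)) =
        (y / z) ^ (n + k) := by
      rw [Real.rpow_def_of_pos hr, ← Real.exp_add, ← Real.rpow_natCast,
        Real.rpow_def_of_pos hr]
      ring_nf
    have htangent := Real.add_one_le_exp ((((n + k : ℕ) : ℝ) - a) * Real.log (y / z))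
    have hterm : 0 ≤ (y / z) ^ a * (z ^ (n + k) / (n + k).factorial) := by positivity
    calc _ = (y / z) ^ a * (z ^ (n + k) / (n + k).factorial) *
          ((((n + k : ℕ) : ℝ) - a) * Real.log (y / z) + 1) := by ring
      _ ≤ (y / z) ^ a * (z ^ (n + k) / (n + k).factorial) *
          Real.exp ((((n + k : ℕ) : ℝ) - a) * Real.log (y / z)) :=
        mul_le_mul_of_nonneg_left htangent hterm
      _ = (y / z) ^ (n + k) * (z ^ (n + k) / (n + k).factorial) := by
        rw [← hexp]
        ring
      _ = y ^ (n + k) / (n + k).factorial := by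
        rw [div_pow]
        field_simp

/-- Weighted AM-GM for two points with natural weights. -/
theorem pow_mul_pow_le_weighted_mean_pow {m n : ℕ} (h : 0 < m + n) {p q : ℝ}
    (hp : 0 ≤ p) (hq : 0 ≤ q) :
    p ^ m * q ^ n ≤ ((m * p + n * q) / (m + n : ℕ)) ^ (m + n) := by
  have hpos : (0 : ℝ) < (m + n : ℕ) := by exact_mod_cast h
  have hamgm := Real.geom_mean_le_arith_mean2_weighted
    (w₁ := (m : ℝ) / (m + n : ℕ)) (w₂ := (n : ℝ) / (m + n : ℕ))
    (by positivity) (by positivity) hp hq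
    (by rw [← add_div, ← Nat.cast_add, div_self hpos.ne'])
  have hpow := pow_le_pow_left₀ (by positivity) hamgm (m + n)
  rw [mul_pow, ← Real.rpow_mul_natCast hp, ← Real.rpow_mul_natCast hq,
    div_mul_cancel₀ _ hpos.ne', div_mul_cancel₀ _ hpos.ne', Real.rpow_natCast,
    Real.rpow_natCast] at hpow
  refine hpow.trans_eq ?_
  congr 1
  ring

theorem fk_two_point_minimization
    (k : ℕ) (hk : 1 ≤ k) (N M ν μ1 m2 : ℕ) (hN : 0 < N) (hM : 0 < M)
    (hν : 1 ≤ ν) (hν' : ν ≤ N - 1) (hμ1 : 0 < μ1) (hm2 : 0 < m2)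
    (hsum : μ1 + m2 = M) (z : ℝ) (hz : 0 < z)
    (hroot : z * fk (k - 1) z / fk k z = (M : ℝ) / N) :
    (∀ x1 x : ℝ, 0 < x1 → 0 < x →
      fk k (((ν : ℝ) * x1 + ((N : ℝ) - ν) * x) / N) ^ N / (x1 ^ μ1 * x ^ m2) ≥
        fk k z ^ N / z ^ M * ((M : ℝ) / N) ^ M * ((ν : ℝ) / μ1) ^ μ1 *
          (((N : ℝ) - ν) / m2) ^ m2) ∧
    fk k (((ν : ℝ) * ((N : ℝ) * z / M * ((μ1 : ℝ) / ν)) +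
            ((N : ℝ) - ν) * ((N : ℝ) * z / M * ((m2 : ℝ) / ((N : ℝ) - ν)))) / N) ^ N /
        (((N : ℝ) * z / M * ((μ1 : ℝ) / ν)) ^ μ1 *
          ((N : ℝ) * z / M * ((m2 : ℝ) / ((N : ℝ) - ν))) ^ m2) =
      fk k z ^ N / z ^ M * ((M : ℝ) / N) ^ M * ((ν : ℝ) / μ1) ^ μ1 *
        (((N : ℝ) - ν) / m2) ^ m2 := by
  have hνN : (0 : ℝ) < (N : ℝ) - ν := by
    have : ν < N := by omega
    exact sub_pos.mpr (by exact_mod_cast this)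
  have hN0 : (0 : ℝ) < N := by exact_mod_cast hN
  have hM0 : (0 : ℝ) < M := by exact_mod_cast hM
  have hν0 : (0 : ℝ) < ν := by exact_mod_cast hν
  have hμ0 : (0 : ℝ) < μ1 := by exact_mod_cast hμ1
  have hm0 : (0 : ℝ) < m2 := by exact_mod_cast hm2
  have hsumR : (μ1 : ℝ) + m2 = M := by exact_mod_cast hsum
  generalize (N : ℝ) - ν = d at hνN ⊢
  constructor
  · intro x1 x hx1 hx
    set y := ((ν : ℝ) * x1 + d * x) / N with hy
    have hy0 : 0 < y := by positivity
    have hfz := fk_pos k hz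
    have hfk : (y / z) ^ M * fk k z ^ N ≤ fk k y ^ N := by
      have h := pow_le_pow_left₀ (by positivity) (rpow_mul_fk_le_fk hk hy0 hz hroot) N
      rwa [mul_pow, ← Real.rpow_mul_natCast (by positivity), div_mul_cancel₀ _ hN0.ne',
        Real.rpow_natCast] at h
    have hmean : (ν * x1 / μ1) ^ μ1 * (d * x / m2) ^ m2 ≤ (N * y / M) ^ M := by
      have h := pow_mul_pow_le_weighted_mean_pow (m := μ1) (n := m2) (by omega)
        (p := ν * x1 / μ1) (q := d * x / m2) (by positivity) (by positivity)
      rw [hsum, mul_div_cancel₀ _ hμ0.ne', mul_div_cancel₀ _ hm0.ne'] at h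
      rwa [hy, mul_div_cancel₀ _ hN0.ne']
    rw [ge_iff_le, le_div_iff₀ (by positivity)]
    calc _ = fk k z ^ N / z ^ M * ((M : ℝ) / N) ^ M *
          ((ν * x1 / μ1) ^ μ1 * (d * x / m2) ^ m2) := by
          simp only [div_pow, mul_pow]
          ring
      _ ≤ fk k z ^ N / z ^ M * ((M : ℝ) / N) ^ M * (N * y / M) ^ M := by gcongr
      _ = (y / z) ^ M * fk k z ^ N := by
          simp only [div_pow, mul_pow]
          field_simp
      _ ≤ fk k y ^ N := hfk
  · have hz' : ((ν : ℝ) * ((N : ℝ) * z / M * ((μ1 : ℝ) / ν)) +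
        d * ((N : ℝ) * z / M * ((m2 : ℝ) / d))) / N = z := by
      field_simp
      exact hsumR
    rw [hz']
    have hpow (t : ℝ) : t ^ M = t ^ μ1 * t ^ m2 := by rw [← hsum, pow_add]
    simp only [hpow, div_pow, mul_pow]
    field_simp
end
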